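/- There exist two real numbers c and K with K > c > 0 such that for all x ≥ 2, one has c·x/log x ≤ f_a(x) ≤ K·x/log x. -/

import Mathlib

/-- `Pmax n` is the largest prime factor of `n`, with the convention `Pmax 1 = 1`. -/
def Pmax (n : ℕ) : ℕ := if n ≤ 1 then 1 else n.primeFactors.sup id

/-- The Schinzel–Szekeres function: if `n = p₁ p₂ ⋯ p_Ω` with `p₁ ≥ p₂ ≥ ⋯ ≥ p_Ω` prime,
`SS n = max_{1 ≤ k ≤ Ω} p₁ ⋯ p_{k-1} p_k²`, and `SS 1 = 1`.
(`Nat.primeFactorsList n` is the *increasing* list of prime factors with multiplicity;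
the value produced for the index `j` is the one for `k = Ω - j`.) -/
def SS (n : ℕ) : ℕ :=
  ((List.range n.primeFactorsList.length).map
    (fun j => (n.primeFactorsList.drop j).headI * (n.primeFactorsList.drop j).prod)).foldr max 1

/-- A chain in the divisor graph: a finite sequence of pairwise distinct positive
integers in which any two consecutive terms are adjacent in the divisor graph
(the smaller divides the larger). -/
def IsDivChain (l : List ℕ) : Prop :=
  l.Nodup ∧ (∀ n ∈ l, 0 < n) ∧ l.Chain' (fun a b => a ∣ b ∨ b ∣ a)

/-- `fa x` is the maximum length of a chain all of whose terms belong to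
`𝒜(x) = {n ≥ 1 : S(n) ≤ x}`. -/
noncomputable def fa (x : ℝ) : ℕ :=
  sSup {L : ℕ | ∃ l : List ℕ, IsDivChain l ∧
    (∀ n ∈ l, 1 ≤ n ∧ (SS n : ℝ) ≤ x) ∧ l.length = L}

/-!
Call `n` `t`-dense if `p ≤ t * m` for each prime `p ∣ n`, where `m` is the part of `n` composed of
primes smaller than `p`. Up to square factors, `S(n) ≤ N` means that `n` is `N / n`-dense, so the
theorem rests on bounds of the correct order `x / log x` for the number of `t`-dense integers.

These bounds come from a random process: choose each prime `p ≤ y` independently with probability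
`1 / (p + 1)`, in increasing order, until the product `a` of the chosen primes first satisfies
`t * a < p`. Both `log a` and the mean `∑ log p / (p + 1) = log y + O(1)` grow by the same amount on
average, so the difference of the two is a martingale until it is stopped near a fixed value. As for
a random walk with a barrier, its expectation on survival stays bounded above and below, and its
second moment is `O(log y)`. Hence survival up to `y` has probability of order `1 / log y`, and a
survivor typically has `log a` of order `log y`.

The upper bound for `f_a` is the number of integers with `S(n) ≤ x`: these are `m ^ 2 * s` with `s`
squarefree and `N / s`-dense, and one sums over dyadic ranges of `N / s`.

For the lower bound, the dense squarefree integers are arranged by a depth-first traversal of the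
tree in which the children of `a` are the products of `a` with smaller primes. To pass from the
block of `a * p j` to that of `a * p (j + 1)` one goes through
`a * p j * c j`, `a * c j`, `2 * a * p (j + 1) * c j`, where the connectors `c j = O(p j)` have to
be pairwise different, so that no integer is visited twice. The dense integers themselves provide
enough connectors: they are as numerous as the primes up to a constant, which is made up for by
finitely many multipliers of the form `2 ^ i * 3 ^ k`.
-/

section PrimesInIntervals

open Finset Real

/-- The primes in the interval `(w, y]`. -/
def primesIoc (w y : ℕ) : Finset ℕ := {p ∈ Ioc w y | p.Prime}

lemma mem_primesIoc {w y p : ℕ} : p ∈ primesIoc w y ↔ (w < p ∧ p ≤ y) ∧ p.Prime := by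
  simp [primesIoc]

lemma primesIoc_mono {w w' y y' : ℕ} (hw : w' ≤ w) (hy : y ≤ y') :
    primesIoc w y ⊆ primesIoc w' y' :=
  filter_subset_filter _ (Ioc_subset_Ioc hw hy)

lemma primesIoc_zero_left (n : ℕ) : primesIoc 0 n = n.primesLE := by
  ext p
  simpa [mem_primesIoc, Nat.mem_primesLE] using fun (hp : p.Prime) _ ↦ hp.pos

@[to_additive]
lemma prod_primesIoc_mul_prod_primesIoc {M : Type*} [CommMonoid M] {v w y : ℕ} (hvw : v ≤ w)
    (hwy : w ≤ y) (f : ℕ → M) :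
    (∏ p ∈ primesIoc v w, f p) * ∏ p ∈ primesIoc w y, f p = ∏ p ∈ primesIoc v y, f p := by
  have hdisj : Disjoint (primesIoc v w) (primesIoc w y) :=
    disjoint_filter_filter (Ioc_disjoint_Ioc_of_le le_rfl)
  rw [← prod_union hdisj, primesIoc, primesIoc, primesIoc, ← filter_union,
    Ioc_union_Ioc_eq_Ioc hvw hwy]

@[to_additive]
lemma prod_primesIoc_succ {M : Type*} [CommMonoid M] (w y : ℕ) (f : ℕ → M) :
    ∏ p ∈ primesIoc w (y + 1), f p =
      (∏ p ∈ primesIoc w y, f p) * if (y + 1).Prime ∧ w < y + 1 then f (y + 1) else 1 := by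
  rcases lt_or_ge y w with hyw | hwy
  · have hempty : ∀ z ≤ w, primesIoc w z = ∅ := fun z hz ↦ by
      simp [primesIoc, Ioc_eq_empty_of_le hz]
    rw [hempty y hyw.le, hempty (y + 1) hyw, if_neg (by lia), mul_one]
  · rw [← prod_primesIoc_mul_prod_primesIoc hwy y.le_succ]
    congr 1
    rw [primesIoc, Nat.Ioc_succ_singleton, filter_singleton]
    simp only [Nat.lt_succ_of_le hwy, and_true]
    split_ifs <;> simp

end PrimesInIntervals

section Mertens

open Finset Real

lemma log_factorial_eq_sum_primesIoc (n : ℕ) :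
    log n.factorial = ∑ p ∈ primesIoc 0 n, (n.factorial.factorization p : ℝ) * log p := by
  have hsupp : n.factorial.factorization.support ⊆ primesIoc 0 n := fun p hp ↦ by
    rw [Nat.support_factorization, Nat.mem_primeFactors] at hp
    exact mem_primesIoc.2 ⟨⟨hp.1.pos, hp.1.dvd_factorial.1 hp.2.1⟩, hp.1⟩
  rw [log_nat_eq_sum_factorization]
  exact sum_subset hsupp fun p _ hp ↦ by simp [Finsupp.notMem_support_iff.1 hp]

lemma div_le_factorization_factorial {n p : ℕ} (hp : p.Prime) (hpn : p ≤ n) :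
    n / p ≤ n.factorial.factorization p := by
  have hlog : 0 < Nat.log p n := Nat.log_pos hp.one_lt hpn
  rw [Nat.factorization_factorial hp (Nat.lt_succ_self _)]
  simpa using single_le_sum (f := fun i ↦ n / p ^ i) (fun _ _ ↦ Nat.zero_le _)
    (mem_Ico.2 ⟨le_rfl, by lia⟩ : 1 ∈ Ico 1 (Nat.log p n).succ)

lemma sum_log_div_le {n : ℕ} (hn : 1 ≤ n) :
    ∑ p ∈ primesIoc 0 n, log p / p ≤ log n + log 4 := by
  have hn0 : (0 : ℝ) < n := by exact_mod_cast hn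
  have hfact : log n.factorial ≤ n * log n := by
    rw [← log_pow]
    exact log_le_log (by exact_mod_cast n.factorial_pos) (by exact_mod_cast n.factorial_le_pow)
  have hterm : ∀ p ∈ primesIoc 0 n,
      n * (log p / p) - log p ≤ n.factorial.factorization p * log p := fun p hp ↦ by
    obtain ⟨⟨-, hpn⟩, hp⟩ := mem_primesIoc.1 hp
    have hfloor : (n : ℝ) / p < (n / p : ℕ) + 1 := by
      simpa only [Nat.floor_div_eq_div] using Nat.lt_floor_add_one ((n : ℝ) / p)
    have hle : ((n / p : ℕ) : ℝ) ≤ n.factorial.factorization p := by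
      exact_mod_cast div_le_factorization_factorial hp hpn
    calc n * (log p / p) - log p = (n / p - 1) * log p := by ring
      _ ≤ _ := mul_le_mul_of_nonneg_right (by linarith) (log_natCast_nonneg p)
  have htheta : ∑ p ∈ primesIoc 0 n, log p ≤ log 4 * n := by
    simpa only [primesIoc_zero_left, Chebyshev.theta_eq_sum_primesLE_log, Nat.floor_natCast]
      using Chebyshev.theta_le_log4_mul_x hn0.le
  have hsum := sum_le_sum hterm
  rw [← log_factorial_eq_sum_primesIoc, sum_sub_distrib, ← mul_sum] at hsum
  exact le_of_mul_le_mul_left (by linarith) hn0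

lemma log_sub_one_le_sum_log_div_sub_one {n : ℕ} (hn : 1 ≤ n) :
    log n - 1 ≤ ∑ p ∈ primesIoc 0 n, log p / (p - 1) := by
  have hn0 : (0 : ℝ) < n := by exact_mod_cast hn
  have hstirling : n * log n - n ≤ log n.factorial := by
    have := Stirling.le_log_factorial_stirling (n := n) (by lia)
    have : 0 ≤ log (2 * π) := log_nonneg (by nlinarith [pi_gt_three])
    linarith [log_natCast_nonneg n]
  have hterm : ∀ p ∈ primesIoc 0 n,
      n.factorial.factorization p * log p ≤ n * (log p / (p - 1)) := fun p hp ↦ by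
    have hp := (mem_primesIoc.1 hp).2
    have hp1 : (0 : ℝ) < p - 1 := sub_pos.2 (by exact_mod_cast hp.one_lt)
    have hlegendre : ((p : ℝ) - 1) * n.factorial.factorization p ≤ n := by
      have : (p - 1) * n.factorial.factorization p ≤ n := by
        rw [Nat.sub_one_mul_factorization_factorial hp]; lia
      simpa [Nat.cast_sub hp.one_lt.le] using (Nat.cast_le (α := ℝ)).2 this
    rw [mul_div_assoc', le_div_iff₀ hp1]
    nlinarith [log_natCast_nonneg p]
  have hsum := sum_le_sum hterm
  rw [← log_factorial_eq_sum_primesIoc, ← mul_sum] at hsum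
  exact le_of_mul_le_mul_left (by linarith) hn0

lemma summable_log_div_sq : Summable fun n : ℕ ↦ log n / (n : ℝ) ^ 2 := by
  refine .of_nonneg_of_le (fun n ↦ div_nonneg (log_natCast_nonneg n) (by positivity)) (fun n ↦ ?_)
    ((summable_one_div_nat_rpow.2 (by norm_num : (1 : ℝ) < 3 / 2)).mul_left 2)
  rcases n.eq_zero_or_pos with rfl | hn
  · simp
  have hn0 : (0 : ℝ) < n := by exact_mod_cast hn
  have hsq : (n : ℝ) ^ 2 = (n : ℝ) ^ (1 / 2 : ℝ) * (n : ℝ) ^ (3 / 2 : ℝ) := by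
    rw [← rpow_add hn0, ← rpow_natCast]; norm_num
  rw [div_le_iff₀ (by positivity), hsq]
  calc log n ≤ (n : ℝ) ^ (1 / 2 : ℝ) / (1 / 2) := log_le_rpow_div hn0.le (by norm_num)
    _ = _ := by field_simp

lemma sum_log_div_sq_le_tsum (s : Finset ℕ) :
    ∑ n ∈ s, log n / (n : ℝ) ^ 2 ≤ ∑' n : ℕ, log n / (n : ℝ) ^ 2 :=
  summable_log_div_sq.sum_le_tsum s fun n _ ↦
    div_nonneg (log_natCast_nonneg n) (by positivity)

theorem mertens_first : ∃ R : ℝ, 1 ≤ R ∧ ∀ n : ℕ, 1 ≤ n →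
    |∑ p ∈ primesIoc 0 n, log p / p - log n| ≤ R := by
  set C := ∑' n : ℕ, log n / (n : ℝ) ^ 2
  have hC : 0 ≤ C := by simpa using sum_log_div_sq_le_tsum ∅
  refine ⟨2 + 2 * C, by linarith, fun n hn ↦ ?_⟩
  have hterm : ∀ p ∈ primesIoc 0 n,
      log p / ((p : ℝ) - 1) ≤ log p / p + 2 * (log p / (p : ℝ) ^ 2) := fun p hp ↦ by
    have hp2 : (2 : ℝ) ≤ p := by exact_mod_cast (mem_primesIoc.1 hp).2.two_le
    have hinv : 1 / ((p : ℝ) - 1) ≤ 1 / p + 2 * (1 / (p : ℝ) ^ 2) := by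
      rw [div_le_iff₀ (by linarith)]
      have hdiff : (1 / (p : ℝ) + 2 * (1 / (p : ℝ) ^ 2)) * (p - 1) - 1 = (p - 2) / p ^ 2 := by
        field_simp; ring
      linarith [div_nonneg (sub_nonneg.2 hp2) (sq_nonneg (p : ℝ))]
    calc log p / ((p : ℝ) - 1) = log p * (1 / ((p : ℝ) - 1)) := by ring
      _ ≤ log p * (1 / p + 2 * (1 / (p : ℝ) ^ 2)) :=
        mul_le_mul_of_nonneg_left hinv (log_natCast_nonneg p)
      _ = _ := by ring
  have hsum := sum_le_sum hterm
  rw [sum_add_distrib, ← mul_sum] at hsum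
  have hlog4 : log 4 ≤ 2 := by
    rw [show (4 : ℝ) = 2 ^ 2 by norm_num, log_pow]
    push_cast
    linarith [log_two_lt_d9]
  rw [abs_le]
  constructor <;> linarith [sum_log_div_le hn, log_sub_one_le_sum_log_div_sub_one hn,
    sum_log_div_sq_le_tsum (primesIoc 0 n)]

lemma mertens_first_primesIoc : ∃ R : ℝ, 1 ≤ R ∧ ∀ w y : ℕ, 1 ≤ w → w ≤ y →
    |∑ p ∈ primesIoc w y, log p / p - log (y / w)| ≤ R := by
  obtain ⟨R, hR, h⟩ := mertens_first
  refine ⟨2 * R, by linarith, fun w y hw hy ↦ ?_⟩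
  have hsum := sum_primesIoc_add_sum_primesIoc w.zero_le hy fun p ↦ log p / (p : ℝ)
  have hlow := abs_le.1 (h w hw)
  have hhigh := abs_le.1 (h y (hw.trans hy))
  rw [log_div (by norm_cast; lia) (by norm_cast; lia), abs_le]
  constructor <;> linarith

lemma div_le_log_div {a b : ℝ} (ha : 0 < a) (hb : 0 < b) : (b - a) / b ≤ log (b / a) := by
  have := one_sub_inv_le_log_of_pos (div_pos hb ha)
  rwa [inv_div, one_sub_div hb.ne'] at this

lemma log_div_le_div {a b : ℝ} (ha : 0 < a) (hb : 0 < b) : log (b / a) ≤ (b - a) / a := by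
  rw [sub_div, div_self ha.ne']
  exact log_le_sub_one_of_pos (div_pos hb ha)

-- Partial summation: `∑ 1/p - log log n - (∑ log p/p)/log n` is a sequence whose increments are
-- dominated by those of `-1/log n`.
lemma abs_mertens_increment_le {a b s A R : ℝ} (ha : 0 < a) (hab : a ≤ b) (hb : b ≤ a + 1)
    (hA : |A - a| ≤ R) :
    |(s / b - (A + s) / b + A / a) - (log b - log a)| ≤ (R + 1) * (1 / a - 1 / b) := by
  have hb0 : 0 < b := ha.trans_le hab
  have hlow := div_le_log_div ha hb0
  have hupp := log_div_le_div ha hb0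
  rw [log_div hb0.ne' ha.ne'] at hlow hupp
  have hinv : 0 ≤ 1 / a - 1 / b := sub_nonneg.2 (one_div_le_one_div_of_le ha hab)
  have hexp : s / b - (A + s) / b + A / a = (A - a) * (1 / a - 1 / b) + (b - a) / b := by
    field_simp; ring
  have hgap : (b - a) / a - (b - a) / b = (b - a) * (1 / a - 1 / b) := by ring
  have hgap' : (b - a) * (1 / a - 1 / b) ≤ 1 / a - 1 / b :=
    mul_le_of_le_one_left hinv (by linarith)
  have hmain : |(A - a) * (1 / a - 1 / b)| ≤ R * (1 / a - 1 / b) := by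
    rw [abs_mul, abs_of_nonneg hinv]
    exact mul_le_mul_of_nonneg_right hA hinv
  rw [abs_le] at hmain ⊢
  rw [hexp]
  constructor <;> linarith

lemma log_succ_le_log_add_one {n : ℕ} (hn : 1 ≤ n) : log (n + 1 : ℕ) ≤ log n + 1 := by
  have hn1 : (1 : ℝ) ≤ n := by exact_mod_cast hn
  have hlog := log_div_le_div (zero_lt_one.trans_le hn1) (by positivity : (0 : ℝ) < (n + 1 : ℕ))
  rw [log_div (by positivity) (by positivity)] at hlog
  have hone : ((n + 1 : ℕ) - n : ℝ) / n ≤ 1 := by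
    rw [div_le_one (by positivity)]; push_cast; linarith
  linarith

lemma abs_div_le_one_add_div {A a b R : ℝ} (hb : 0 < b) (hba : b ≤ a) (hA : |A - a| ≤ R) :
    |A / a| ≤ 1 + R / b := by
  have ha : 0 < a := hb.trans_le hba
  have hR : 0 ≤ R := (abs_nonneg _).trans hA
  calc |A / a| = |1 + (A - a) / a| := by congr 1; field_simp; ring
    _ ≤ |1| + |(A - a) / a| := abs_add_le _ _
    _ = 1 + |A - a| / a := by rw [abs_one, abs_div, abs_of_pos ha]
    _ ≤ 1 + R / b := by gcongr

theorem mertens_second : ∃ C : ℝ, ∀ n : ℕ, 2 ≤ n →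
    |∑ p ∈ primesIoc 0 n, 1 / (p : ℝ) - log (log n)| ≤ C := by
  obtain ⟨R, hR, hM⟩ := mertens_first
  set A : ℕ → ℝ := fun n ↦ ∑ p ∈ primesIoc 0 n, log p / p
  set S : ℕ → ℝ := fun n ↦ ∑ p ∈ primesIoc 0 n, 1 / (p : ℝ)
  set G : ℕ → ℝ := fun n ↦ S n - A n / log n - log (log n)
  have hlog : ∀ n : ℕ, 2 ≤ n → log 2 ≤ log n := fun n hn ↦
    log_le_log two_pos (by exact_mod_cast hn)
  have hlog2 : 0 < log 2 := log_pos one_lt_two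
  have hstep : ∀ n : ℕ, 2 ≤ n →
      |G (n + 1) - G n| ≤ (R + 1) * (1 / log n - 1 / log (n + 1 : ℕ)) := fun n hn ↦ by
    have hmono : log n ≤ log (n + 1 : ℕ) :=
      log_le_log (by norm_cast; lia) (by push_cast; linarith)
    have hpos : 0 < log (n + 1 : ℕ) := by linarith [hlog n hn]
    have hS : S (n + 1) = S n + (A (n + 1) - A n) / log (n + 1 : ℕ) := by
      simp only [S, A, sum_primesIoc_succ]
      split_ifs
      · field_simp; ring
      · simp
    convert abs_mertens_increment_le (s := A (n + 1) - A n) (by linarith [hlog n hn]) hmono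
      (log_succ_le_log_add_one (by lia)) (hM n (by lia)) using 2
    simp only [G, hS, A]
    ring
  have hG : ∀ n : ℕ, 2 ≤ n → |G n - G 2| ≤ (R + 1) * (1 / log 2 - 1 / log n) := fun n hn ↦ by
    induction n, hn using Nat.le_induction with
    | base => simp
    | succ n hn ih => linarith [abs_sub_le (G (n + 1)) (G n) (G 2), hstep n hn]
  refine ⟨(R + 1) * (1 / log 2) + |G 2| + (1 + R / log 2), fun n hn ↦ ?_⟩
  have hGn : |G n - G 2| ≤ (R + 1) * (1 / log 2) :=
    (hG n hn).trans (mul_le_mul_of_nonneg_left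
      (sub_le_self _ (one_div_nonneg.2 (hlog2.trans_le (hlog n hn)).le)) (by linarith))
  calc |S n - log (log n)| = |(G n - G 2) + G 2 + A n / log n| := by simp only [G]; ring_nf
    _ ≤ |G n - G 2| + |G 2| + |A n / log n| := abs_add_three _ _ _
    _ ≤ _ := by gcongr; exact abs_div_le_one_add_div hlog2 (hlog n hn) (hM n (by lia))

/-- The Mertens product `∏_{w < p ≤ y} (1 + 1/p)`. -/
noncomputable def mertensProd (w y : ℕ) : ℝ := ∏ p ∈ primesIoc w y, (1 + 1 / (p : ℝ))

lemma mertensProd_pos (w y : ℕ) : 0 < mertensProd w y := prod_pos fun p _ ↦ by positivity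

lemma mertensProd_mul_mertensProd {v w y : ℕ} (hvw : v ≤ w) (hwy : w ≤ y) :
    mertensProd v w * mertensProd w y = mertensProd v y :=
  prod_primesIoc_mul_prod_primesIoc hvw hwy _

lemma mertensProd_zero_le {C : ℝ} {y : ℕ} (hy : 2 ≤ y)
    (h : ∑ p ∈ primesIoc 0 y, 1 / (p : ℝ) - log (log y) ≤ C) :
    mertensProd 0 y ≤ exp C * log y := by
  have hlog : 0 < log y := log_pos (by exact_mod_cast hy)
  calc mertensProd 0 y ≤ ∏ p ∈ primesIoc 0 y, exp (1 / (p : ℝ)) :=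
        prod_le_prod (fun p _ ↦ by positivity) fun p _ ↦ by
          rw [add_comm]; exact add_one_le_exp _
    _ = exp (∑ p ∈ primesIoc 0 y, 1 / (p : ℝ)) := (exp_sum _ _).symm
    _ ≤ exp (C + log (log y)) := exp_le_exp.2 (by linarith)
    _ = exp C * log y := by rw [exp_add, exp_log hlog]

lemma inv_sub_inv_sq_le_log_one_add_inv {p : ℝ} (hp : 0 < p) :
    1 / p - 1 / p ^ 2 ≤ log (1 + 1 / p) := by
  have hlog := one_sub_inv_le_log_of_pos (show 0 < 1 + 1 / p by positivity)
  have hdiff : 1 - (1 + 1 / p)⁻¹ - (1 / p - 1 / p ^ 2) = 1 / (p ^ 2 * (p + 1)) := by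
    field_simp; ring
  have : 0 ≤ 1 / (p ^ 2 * (p + 1)) := by positivity
  linarith

lemma mul_log_le_mertensProd_zero {C : ℝ} {y : ℕ} (hy : 2 ≤ y)
    (h : -C ≤ ∑ p ∈ primesIoc 0 y, 1 / (p : ℝ) - log (log y)) :
    exp (-C - 2 * ∑' n : ℕ, log n / (n : ℝ) ^ 2) * log y ≤ mertensProd 0 y := by
  have hlog : 0 < log y := log_pos (by exact_mod_cast hy)
  have hterm : ∀ p ∈ primesIoc 0 y,
      exp (1 / (p : ℝ) - 2 * (log p / (p : ℝ) ^ 2)) ≤ 1 + 1 / (p : ℝ) := fun p hp ↦ by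
    have hp2 : (2 : ℝ) ≤ p := by exact_mod_cast (mem_primesIoc.1 hp).2.two_le
    have hlogp : 1 ≤ 2 * log p := by linarith [log_two_gt_d9, log_le_log two_pos hp2]
    have hsq : 1 / (p : ℝ) ^ 2 ≤ 2 * (log p / (p : ℝ) ^ 2) := by
      rw [← mul_div_assoc]; gcongr
    rw [← le_log_iff_exp_le (by positivity)]
    linarith [inv_sub_inv_sq_le_log_one_add_inv (show (0 : ℝ) < p by linarith)]
  calc exp (-C - 2 * ∑' n : ℕ, log n / (n : ℝ) ^ 2) * log y
      = exp (-C - 2 * ∑' n : ℕ, log n / (n : ℝ) ^ 2 + log (log y)) := by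
        rw [exp_add, exp_log hlog]
    _ ≤ exp (∑ p ∈ primesIoc 0 y, (1 / (p : ℝ) - 2 * (log p / (p : ℝ) ^ 2))) := by
        rw [sum_sub_distrib, ← mul_sum]
        exact exp_le_exp.2 (by linarith [sum_log_div_sq_le_tsum (primesIoc 0 y)])
    _ ≤ mertensProd 0 y := by
        rw [exp_sum]
        exact prod_le_prod (fun _ _ ↦ (exp_pos _).le) hterm

theorem exists_mertensProd_bounds : ∃ c C : ℝ, 0 < c ∧ 0 < C ∧ ∀ y : ℕ, 2 ≤ y →
    c * log y ≤ mertensProd 0 y ∧ mertensProd 0 y ≤ C * log y := by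
  obtain ⟨C, hC⟩ := mertens_second
  exact ⟨_, _, exp_pos _, exp_pos C, fun y hy ↦
    ⟨mul_log_le_mertensProd_zero hy (abs_le.1 (hC y hy)).1,
      mertensProd_zero_le hy (abs_le.1 (hC y hy)).2⟩⟩

/-- The sum `∑_{w < p ≤ y} log p / (p + 1)`, which is the mean value of `log n` over the
squarefree integers `n` composed of primes in `(w, y]`, weighted by `1 / n`. -/
noncomputable def primeLogMean (w y : ℕ) : ℝ := ∑ p ∈ primesIoc w y, log p / ((p : ℝ) + 1)

lemma log_div_add_one_le (n : ℕ) : log n / ((n : ℝ) + 1) ≤ log n / n := by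
  rcases n.eq_zero_or_pos with rfl | hn
  · simp
  · have : (0 : ℝ) < n := by exact_mod_cast hn
    exact div_le_div_of_nonneg_left (log_natCast_nonneg n) this (by linarith)

lemma log_div_le_log_div_add_one (n : ℕ) :
    log n / n ≤ log n / ((n : ℝ) + 1) + log n / (n : ℝ) ^ 2 := by
  rcases n.eq_zero_or_pos with rfl | hn
  · simp
  have : (0 : ℝ) < n := by exact_mod_cast hn
  have hdiff : log n / ((n : ℝ) + 1) + log n / (n : ℝ) ^ 2 - log n / n =
      log n / ((n : ℝ) ^ 2 * (n + 1)) := by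
    field_simp; ring
  linarith [div_nonneg (log_natCast_nonneg n) (show 0 ≤ (n : ℝ) ^ 2 * (n + 1) by positivity)]

theorem exists_abs_primeLogMean_sub_log_le (w : ℕ) : ∃ R : ℝ, 1 ≤ R ∧ ∀ y : ℕ, 1 ≤ y →
    |primeLogMean w y - log y| ≤ R := by
  obtain ⟨R, hR, hM⟩ := mertens_first
  set C := ∑' n : ℕ, log n / (n : ℝ) ^ 2
  have hC : 0 ≤ C := by simpa using sum_log_div_sq_le_tsum ∅
  have hnonneg : ∀ n : ℕ, 0 ≤ log n / (n : ℝ) := fun n ↦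
    div_nonneg (log_natCast_nonneg n) n.cast_nonneg
  set S := ∑ p ∈ primesIoc 0 w, log p / p
  have hS : 0 ≤ S := sum_nonneg fun p _ ↦ hnonneg p
  refine ⟨R + C + S, by linarith, fun y hy ↦ ?_⟩
  have hupper : primeLogMean w y ≤ ∑ p ∈ primesIoc 0 y, log p / p :=
    (sum_le_sum fun p _ ↦ log_div_add_one_le p).trans
      (sum_le_sum_of_subset_of_nonneg (primesIoc_mono w.zero_le le_rfl) fun p _ _ ↦ hnonneg p)
  have hsplit : ∑ p ∈ primesIoc 0 y, log p / p ≤ S + ∑ p ∈ primesIoc w y, log p / p := by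
    rcases le_total w y with hwy | hyw
    · exact (sum_primesIoc_add_sum_primesIoc w.zero_le hwy _).ge
    · exact (sum_le_sum_of_subset_of_nonneg (primesIoc_mono le_rfl hyw) fun p _ _ ↦
        hnonneg p).trans (le_add_of_nonneg_right (sum_nonneg fun p _ ↦ hnonneg p))
  have hlower : ∑ p ∈ primesIoc w y, log p / p ≤ primeLogMean w y + C := by
    refine (sum_le_sum fun p _ ↦ log_div_le_log_div_add_one p).trans ?_
    rw [sum_add_distrib]
    exact add_le_add le_rfl (sum_log_div_sq_le_tsum _)
  have hmertens := abs_le.1 (hM y hy)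
  rw [abs_le]
  constructor <;> linarith [hmertens.1, hmertens.2]

end Mertens

section DenseIntegers

open Finset

/-- The largest divisor of `n` all of whose prime factors are smaller than `p`. -/
def smoothPart (n p : ℕ) : ℕ := (n.primeFactorsList.filter (· < p)).prod

lemma smoothPart_mul {a b : ℕ} (ha : a ≠ 0) (hb : b ≠ 0) (p : ℕ) :
    smoothPart (a * b) p = smoothPart a p * smoothPart b p := by
  unfold smoothPart
  rw [((Nat.perm_primeFactorsList_mul ha hb).filter _).prod_eq, List.filter_append,
    List.prod_append]

lemma smoothPart_pos (n p : ℕ) : 0 < smoothPart n p :=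
  List.prod_pos fun _ hq ↦ Nat.pos_of_mem_primeFactorsList (List.mem_of_mem_filter hq)

lemma smoothPart_prime {q : ℕ} (hq : q.Prime) (p : ℕ) :
    smoothPart q p = if q < p then q else 1 := by
  by_cases h : q < p <;> simp [smoothPart, Nat.primeFactorsList_prime hq, h]

lemma smoothPart_eq_self {n p : ℕ} (hn : n ≠ 0) (h : ∀ q : ℕ, q.Prime → q ∣ n → q < p) :
    smoothPart n p = n := by
  rw [smoothPart, List.filter_eq_self.2, Nat.prod_primeFactorsList hn]
  intro q hq
  simpa using h q (Nat.prime_of_mem_primeFactorsList hq) (Nat.dvd_of_mem_primeFactorsList hq)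

lemma smoothPart_eq_one {n p : ℕ} (h : ∀ q : ℕ, q.Prime → q ∣ n → p ≤ q) :
    smoothPart n p = 1 := by
  rw [smoothPart, List.filter_eq_nil_iff.2, List.prod_nil]
  intro q hq
  simpa using h q (Nat.prime_of_mem_primeFactorsList hq) (Nat.dvd_of_mem_primeFactorsList hq)

lemma smoothPart_dvd {n : ℕ} (hn : n ≠ 0) (p : ℕ) : smoothPart n p ∣ n := by
  conv_rhs => rw [← Nat.prod_primeFactorsList hn]
  exact List.filter_sublist.prod_dvd_prod

/-- An integer `n` is `t`-dense if each prime factor of `n` exceeds the part of `n` composed of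
smaller primes by a factor of at most `t`. For squarefree `n` this means that the ratios of
consecutive divisors of `n` are at most `t`. -/
def IsDivisorDense (t n : ℕ) : Prop := ∀ p : ℕ, p.Prime → p ∣ n → p ≤ t * smoothPart n p

noncomputable instance (t : ℕ) : DecidablePred (IsDivisorDense t) := Classical.decPred _

lemma isDivisorDense_one (t : ℕ) : IsDivisorDense t 1 := fun _ hp h ↦
  absurd (Nat.dvd_one.1 h) hp.ne_one

lemma isDivisorDense_mul_prime_iff {t a p : ℕ} (ha : a ≠ 0) (hp : p.Prime)
    (hap : ∀ q : ℕ, q.Prime → q ∣ a → q < p) :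
    IsDivisorDense t (a * p) ↔ IsDivisorDense t a ∧ p ≤ t * a := by
  have hsmooth : ∀ q ≤ p, smoothPart (a * p) q = smoothPart a q := fun q hq ↦ by
    rw [smoothPart_mul ha hp.ne_zero, smoothPart_prime hp, if_neg hq.not_gt, mul_one]
  have hself : smoothPart (a * p) p = a := by rw [hsmooth p le_rfl, smoothPart_eq_self ha hap]
  constructor
  · refine fun h ↦ ⟨fun q hq hqa ↦ ?_, by simpa [hself] using h p hp (dvd_mul_left p a)⟩
    rw [← hsmooth q (hap q hq hqa).le]
    exact h q hq (hqa.mul_right p)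
  · rintro ⟨hdense, hpa⟩ q hq hqap
    rcases hq.dvd_mul.1 hqap with hqa | hqp
    · rw [hsmooth q (hap q hq hqa).le]
      exact hdense q hq hqa
    · rwa [(Nat.prime_dvd_prime_iff_eq hq hp).1 hqp, hself]

lemma dvd_prod_primesIoc_iff {w y n : ℕ} : n ∣ ∏ p ∈ primesIoc w y, p ↔
    Squarefree n ∧ ∀ p : ℕ, p.Prime → p ∣ n → w < p ∧ p ≤ y := by
  have hprime : ∀ p ∈ primesIoc w y, p.Prime := fun p hp ↦ (mem_primesIoc.1 hp).2
  constructor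
  · refine fun h ↦ ⟨Squarefree.squarefree_of_dvd h ?_, fun p hp hpn ↦ ?_⟩
    · exact squarefree_prod_of_pairwise_isCoprime (fun p hp q hq hpq ↦
        Nat.coprime_iff_isRelPrime.1 ((Nat.coprime_primes (hprime p hp) (hprime q hq)).2 hpq))
        fun p hp ↦ (hprime p hp).squarefree
    · obtain ⟨q, hq, hpq⟩ := (hp.prime.dvd_finsetProd_iff _).1 (hpn.trans h)
      rw [(Nat.prime_dvd_prime_iff_eq hp (hprime q hq)).1 hpq]
      exact (mem_primesIoc.1 hq).1
  · rintro ⟨hsq, hfac⟩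
    rw [← Nat.prod_primeFactors_of_squarefree hsq]
    refine prod_dvd_prod_of_subset _ _ _ fun p hp ↦ ?_
    have hp := Nat.mem_primeFactors.1 hp
    exact mem_primesIoc.2 ⟨hfac p hp.1 hp.2.1, hp.1⟩

/-- The squarefree `t`-dense integers all of whose prime factors lie in `(w, y]`. -/
noncomputable def denseSquarefree (w t y : ℕ) : Finset ℕ :=
  {n ∈ (∏ p ∈ primesIoc w y, p).divisors | IsDivisorDense t n}

lemma mem_denseSquarefree {w t y n : ℕ} : n ∈ denseSquarefree w t y ↔ Squarefree n ∧
    (∀ p : ℕ, p.Prime → p ∣ n → w < p ∧ p ≤ y) ∧ IsDivisorDense t n := by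
  have hne : ∏ p ∈ primesIoc w y, p ≠ 0 := prod_ne_zero_iff.2 fun p hp ↦
    (mem_primesIoc.1 hp).2.ne_zero
  rw [denseSquarefree, mem_filter, Nat.mem_divisors, and_iff_left hne, dvd_prod_primesIoc_iff,
    and_assoc]

lemma denseSquarefree_mono (w t : ℕ) {y y' : ℕ} (h : y ≤ y') :
    denseSquarefree w t y ⊆ denseSquarefree w t y' := fun a ha ↦ by
  obtain ⟨hsq, hfac, hdense⟩ := mem_denseSquarefree.1 ha
  exact mem_denseSquarefree.2
    ⟨hsq, fun p hp hpa ↦ ⟨(hfac p hp hpa).1, (hfac p hp hpa).2.trans h⟩, hdense⟩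

lemma one_mem_denseSquarefree (w t y : ℕ) : 1 ∈ denseSquarefree w t y :=
  mem_denseSquarefree.2 ⟨squarefree_one, fun _ hp h ↦ absurd (Nat.dvd_one.1 h) hp.ne_one,
    isDivisorDense_one t⟩

lemma pos_of_mem_denseSquarefree {w t y a : ℕ} (h : a ∈ denseSquarefree w t y) : 0 < a :=
  Nat.pos_of_ne_zero (mem_denseSquarefree.1 h).1.ne_zero

lemma denseSquarefree_zero (w t : ℕ) : denseSquarefree w t 0 = {1} := by
  refine Subset.antisymm (fun n hn ↦ ?_) (singleton_subset_iff.2 (one_mem_denseSquarefree w t 0))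
  rw [mem_singleton]
  by_contra hne
  have hmin := (mem_denseSquarefree.1 hn).2.1 _ (Nat.minFac_prime hne) n.minFac_dvd
  lia

lemma mem_denseSquarefree_succ_iff {w t y n : ℕ} : n ∈ denseSquarefree w t (y + 1) ↔
    n ∈ denseSquarefree w t y ∨ ((y + 1).Prime ∧ w < y + 1) ∧
      ∃ a ∈ denseSquarefree w t y, y + 1 ≤ t * a ∧ a * (y + 1) = n := by
  constructor
  · intro hn
    obtain ⟨hsq, hfac, hdense⟩ := mem_denseSquarefree.1 hn
    by_cases hdvd : (y + 1).Prime ∧ y + 1 ∣ n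
    · obtain ⟨hp, a, rfl⟩ := hdvd
      rw [mul_comm] at hsq hfac hdense ⊢
      obtain ⟨hcop, hsqa, -⟩ := Nat.squarefree_mul_iff.1 hsq
      have hlt : ∀ q : ℕ, q.Prime → q ∣ a → q < y + 1 := fun q hq hqa ↦
        (hfac q hq (hqa.mul_right _)).2.lt_of_ne fun h ↦
          hp.coprime_iff_not_dvd.1 hcop.symm (h ▸ hqa)
      obtain ⟨hdensea, hle⟩ := (isDivisorDense_mul_prime_iff hsqa.ne_zero hp hlt).1 hdense
      exact .inr ⟨⟨hp, (hfac _ hp (dvd_mul_left _ _)).1⟩, a, mem_denseSquarefree.2 ⟨hsqa,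
        fun q hq hqa ↦ ⟨(hfac q hq (hqa.mul_right _)).1, Nat.lt_succ_iff.1 (hlt q hq hqa)⟩,
        hdensea⟩, hle, rfl⟩
    · refine .inl (mem_denseSquarefree.2 ⟨hsq, fun p hp hpn ↦ ⟨(hfac p hp hpn).1, ?_⟩, hdense⟩)
      exact Nat.lt_succ_iff.1 ((hfac p hp hpn).2.lt_of_ne fun h ↦ hdvd (h ▸ ⟨hp, hpn⟩))
  · rintro (hn | ⟨⟨hp, hw⟩, a, ha, hle, rfl⟩)
    · exact denseSquarefree_mono w t y.le_succ hn
    · obtain ⟨hsq, hfac, hdense⟩ := mem_denseSquarefree.1 ha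
      have hlt : ∀ q : ℕ, q.Prime → q ∣ a → q < y + 1 := fun q hq hqa ↦
        Nat.lt_succ_iff.2 (hfac q hq hqa).2
      have hcop : a.Coprime (y + 1) :=
        (hp.coprime_iff_not_dvd.2 fun h ↦ (hlt _ hp h).false).symm
      refine mem_denseSquarefree.2 ⟨Nat.squarefree_mul_iff.2 ⟨hcop, hsq, hp.squarefree⟩,
        fun q hq hqa ↦ ?_, (isDivisorDense_mul_prime_iff hsq.ne_zero hp hlt).2 ⟨hdense, hle⟩⟩
      rcases hq.dvd_mul.1 hqa with hqa | hqp
      · exact ⟨(hfac q hq hqa).1, (hlt q hq hqa).le⟩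
      · rw [(Nat.prime_dvd_prime_iff_eq hq hp).1 hqp]
        exact ⟨hw, le_rfl⟩

end DenseIntegers

section AliveIntegers

open Finset Real

/-- The elements of `denseSquarefree w t y` which may still be multiplied by a prime at least `y`
without losing `t`-density. -/
noncomputable def alive (w t y : ℕ) : Finset ℕ := {a ∈ denseSquarefree w t y | y ≤ t * a}

/-- The elements alive at `y` which remain alive at `y + 1`. -/
noncomputable def survivors (w t y : ℕ) : Finset ℕ := {a ∈ denseSquarefree w t y | y + 1 ≤ t * a}

/-- The elements alive at `y` which are no longer alive at `y + 1`. -/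
noncomputable def dying (w t y : ℕ) : Finset ℕ := {a ∈ denseSquarefree w t y | t * a = y}

/-- The sum of `f a / a` over `s`, normalised by the sum of `1 / a` over all squarefree `a` composed
of primes in `(w, y]`. As `y` grows, `s` is thought of as an event and this as an expectation. -/
noncomputable def mertensMean (w y : ℕ) (s : Finset ℕ) (f : ℕ → ℝ) : ℝ :=
  (∑ a ∈ s, f a / a) / mertensProd w y

/-- The normalised sum of `f a / a` over the elements `a` alive at `y`. -/
noncomputable abbrev aliveMean (w t y : ℕ) (f : ℕ → ℝ) : ℝ := mertensMean w y (alive w t y) f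

lemma mertensMean_mono {w y : ℕ} {s : Finset ℕ} {f g : ℕ → ℝ} (h : ∀ a ∈ s, f a ≤ g a) :
    mertensMean w y s f ≤ mertensMean w y s g :=
  div_le_div_of_nonneg_right
    (sum_le_sum fun a ha ↦ div_le_div_of_nonneg_right (h a ha) a.cast_nonneg)
    (mertensProd_pos w y).le

lemma mertensMean_nonneg {w y : ℕ} {s : Finset ℕ} {f : ℕ → ℝ} (h : ∀ a ∈ s, 0 ≤ f a) :
    0 ≤ mertensMean w y s f := by
  simpa [mertensMean] using mertensMean_mono (w := w) (y := y) (f := fun _ ↦ 0) h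

lemma mertensMean_add (w y : ℕ) (s : Finset ℕ) (f g : ℕ → ℝ) :
    mertensMean w y s (fun a ↦ f a + g a) = mertensMean w y s f + mertensMean w y s g := by
  simp only [mertensMean, add_div, sum_add_distrib]

lemma mertensMean_const_mul (w y : ℕ) (s : Finset ℕ) (c : ℝ) (f : ℕ → ℝ) :
    mertensMean w y s (fun a ↦ c * f a) = c * mertensMean w y s f := by
  simp only [mertensMean, mul_sum, ← mul_div_assoc]

lemma pos_of_mem_alive {w t y a : ℕ} (h : a ∈ alive w t y) : 0 < a :=
  pos_of_mem_denseSquarefree (mem_filter.1 h).1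

lemma pos_of_mem_survivors {w t y a : ℕ} (h : a ∈ survivors w t y) : 0 < a :=
  pos_of_mem_denseSquarefree (mem_filter.1 h).1

lemma aliveMean_zero (w t : ℕ) (f : ℕ → ℝ) : aliveMean w t 0 f = f 1 := by
  simp [aliveMean, mertensMean, alive, denseSquarefree_zero, mertensProd, primesIoc]

lemma aliveMean_eq_add (w t y : ℕ) (f : ℕ → ℝ) : aliveMean w t y f =
    mertensMean w y (survivors w t y) f + mertensMean w y (dying w t y) f := by
  have hdisj : Disjoint (survivors w t y) (dying w t y) :=
    disjoint_filter.2 fun a _ hle heq ↦ by lia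
  have hunion : alive w t y = survivors w t y ∪ dying w t y := by
    rw [survivors, dying, ← filter_or, alive]
    exact filter_congr fun a _ ↦ by lia
  rw [aliveMean, mertensMean, mertensMean, mertensMean, ← add_div, ← sum_union hdisj, hunion]

lemma mertensProd_succ (w y : ℕ) : mertensProd w (y + 1) =
    mertensProd w y * if (y + 1).Prime ∧ w < y + 1 then 1 + 1 / ((y : ℝ) + 1) else 1 := by
  simp only [mertensProd, prod_primesIoc_succ]
  push_cast
  rfl

lemma primeLogMean_succ (w y : ℕ) : primeLogMean w (y + 1) = primeLogMean w y +
    if (y + 1).Prime ∧ w < y + 1 then log ((y : ℝ) + 1) / ((y : ℝ) + 1 + 1) else 0 := by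
  simp only [primeLogMean, sum_primesIoc_succ]
  push_cast
  rfl

lemma alive_succ_of_prime {w t y : ℕ} (ht : 1 ≤ t) (hp : (y + 1).Prime ∧ w < y + 1) :
    alive w t (y + 1) = survivors w t y ∪ (survivors w t y).image (· * (y + 1)) := by
  ext n
  simp only [alive, survivors, mem_filter, mem_denseSquarefree_succ_iff, hp, true_and, mem_union,
    mem_image]
  constructor
  · rintro ⟨hn | ⟨a, ha, hle, rfl⟩, hle'⟩
    · exact .inl ⟨hn, hle'⟩
    · exact .inr ⟨a, ⟨ha, hle⟩, rfl⟩
  · rintro (⟨hn, hle⟩ | ⟨a, ⟨ha, hle⟩, rfl⟩)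
    · exact ⟨.inl hn, hle⟩
    · refine ⟨.inr ⟨a, ha, hle, rfl⟩, ?_⟩
      rw [← mul_assoc]
      exact Nat.le_mul_of_pos_left _ (Nat.mul_pos ht (pos_of_mem_denseSquarefree ha))

lemma alive_succ_of_not_prime {w t y : ℕ} (hp : ¬((y + 1).Prime ∧ w < y + 1)) :
    alive w t (y + 1) = survivors w t y := by
  ext n
  simp only [alive, survivors, mem_filter, mem_denseSquarefree_succ_iff, hp, false_and, or_false]

lemma aliveMean_succ {w t y : ℕ} (ht : 1 ≤ t) (f : ℕ → ℝ) : aliveMean w t (y + 1) f =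
    mertensMean w y (survivors w t y) (if (y + 1).Prime ∧ w < y + 1 then
      fun a ↦ (f a + f (a * (y + 1)) / ((y : ℝ) + 1)) / (1 + 1 / ((y : ℝ) + 1)) else f) := by
  rw [aliveMean, mertensMean, mertensMean, mertensProd_succ]
  split_ifs with hp
  · have hdisj : Disjoint (survivors w t y) ((survivors w t y).image (· * (y + 1))) := by
      refine disjoint_left.2 fun a ha himage ↦ ?_
      obtain ⟨b, -, rfl⟩ := mem_image.1 himage
      have hfac := (mem_denseSquarefree.1 (mem_filter.1 ha).1).2.1 (y + 1) hp.1 (dvd_mul_left _ b)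
      lia
    have : (0 : ℝ) < 1 + 1 / ((y : ℝ) + 1) := by positivity
    rw [alive_succ_of_prime ht hp, sum_union hdisj,
      sum_image fun a _ b _ h ↦ Nat.eq_of_mul_eq_mul_right y.succ_pos h, ← sum_add_distrib,
      mul_comm (mertensProd w y), ← div_div, sum_div]
    congr 1
    refine sum_congr rfl fun a ha ↦ ?_
    have : (a : ℝ) ≠ 0 := by exact_mod_cast (pos_of_mem_survivors ha).ne'
    push_cast
    field_simp
  · rw [alive_succ_of_not_prime hp, mul_one]

lemma aliveMean_succ_le {w t y : ℕ} (ht : 1 ≤ t) {f g : ℕ → ℝ}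
    (hdying : ∀ a ∈ dying w t y, 0 ≤ f a)
    (hprime : (y + 1).Prime → w < y + 1 → ∀ a ∈ survivors w t y,
      g a + g (a * (y + 1)) / ((y : ℝ) + 1) ≤ (1 + 1 / ((y : ℝ) + 1)) * f a)
    (hnot : ¬((y + 1).Prime ∧ w < y + 1) → ∀ a ∈ survivors w t y, g a ≤ f a) :
    aliveMean w t (y + 1) g ≤ aliveMean w t y f := by
  rw [aliveMean_succ ht, aliveMean_eq_add]
  refine (mertensMean_mono fun a ha ↦ ?_).trans
    (le_add_of_nonneg_right (mertensMean_nonneg hdying))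
  split_ifs with hp
  · rw [div_le_iff₀ (by positivity), mul_comm (f a)]
    exact hprime hp.1 hp.2 a ha
  · exact hnot hp a ha

end AliveIntegers

section Moments

open Finset Real

lemma log_add_log_of_mem_dying {w t y a : ℕ} (ht : 1 ≤ t) (h : a ∈ dying w t y) :
    1 ≤ y ∧ log t + log a = log y := by
  obtain ⟨hmem, rfl⟩ := mem_filter.1 h
  have ha := pos_of_mem_denseSquarefree hmem
  refine ⟨Nat.mul_pos ht ha, ?_⟩
  push_cast
  rw [log_mul (by positivity) (by positivity)]

lemma log_le_log_add_log_of_mem_alive {w t y a : ℕ} (hy : 1 ≤ y) (ht : 1 ≤ t)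
    (h : a ∈ alive w t y) : log y ≤ log t + log a := by
  have ha := pos_of_mem_alive h
  rw [← log_mul (by positivity) (by positivity)]
  exact log_le_log (by exact_mod_cast hy) (by exact_mod_cast (mem_filter.1 h).2)

lemma log_natCast_mul_succ {a y : ℕ} (ha : 0 < a) :
    log ((a * (y + 1) : ℕ) : ℝ) = log a + log ((y : ℝ) + 1) := by
  push_cast
  rw [log_mul (by positivity) (by positivity)]

lemma aliveMean_one_le_one {w t : ℕ} (ht : 1 ≤ t) (y : ℕ) : aliveMean w t y (fun _ ↦ 1) ≤ 1 := by
  induction y with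
  | zero => simp [aliveMean_zero]
  | succ y ih =>
    refine (aliveMean_succ_le ht (f := fun _ ↦ 1) ?_ ?_ ?_).trans ih
    · exact fun _ _ ↦ zero_le_one
    · exact fun _ _ a _ ↦ by simp
    · exact fun _ _ _ ↦ le_rfl

section FirstMoment

variable {w t : ℕ} {R : ℝ}

lemma aliveMean_log_sub_primeLogMean_add_le (ht : 1 ≤ t)
    (hR : ∀ y : ℕ, 1 ≤ y → |primeLogMean w y - log y| ≤ R) (y : ℕ) :
    aliveMean w t y (fun a ↦ log t + log a - primeLogMean w y + R) ≤ log t + R := by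
  induction y with
  | zero => simp [aliveMean_zero, primeLogMean, primesIoc]
  | succ y ih =>
    refine (aliveMean_succ_le ht ?_ ?_ ?_).trans ih
    · intro a ha
      obtain ⟨hy, hlog⟩ := log_add_log_of_mem_dying ht ha
      linarith [(abs_le.1 (hR y hy)).2]
    · intro hp hw a ha
      rw [log_natCast_mul_succ (pos_of_mem_survivors ha), primeLogMean_succ, if_pos ⟨hp, hw⟩]
      apply le_of_eq
      field_simp
      ring
    · intro hp a _
      rw [primeLogMean_succ, if_neg hp, add_zero]

lemma aliveMean_log_sub_log_le (ht : 1 ≤ t)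
    (hR : ∀ y : ℕ, 1 ≤ y → |primeLogMean w y - log y| ≤ R) {y : ℕ} (hy : 1 ≤ y) :
    aliveMean w t y (fun a ↦ log t + log a - log y) ≤ log t + R := by
  refine (mertensMean_mono fun a _ ↦ ?_).trans (aliveMean_log_sub_primeLogMean_add_le ht hR y)
  linarith [(abs_le.1 (hR y hy)).2]

lemma aliveMean_sub_dying_le_aliveMean_succ (ht : 1 ≤ t) (y : ℕ) :
    aliveMean w t y (fun a ↦ log a - primeLogMean w y) -
        mertensMean w y (dying w t y) (fun a ↦ log a - primeLogMean w y) ≤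
      aliveMean w t (y + 1) (fun a ↦ log a - primeLogMean w (y + 1)) := by
  rw [aliveMean_eq_add, aliveMean_succ ht, add_sub_cancel_right]
  refine mertensMean_mono fun a ha ↦ ?_
  split_ifs with hp
  · beta_reduce
    rw [log_natCast_mul_succ (pos_of_mem_survivors ha), primeLogMean_succ, if_pos hp]
    apply le_of_eq
    field_simp
    ring
  · rw [primeLogMean_succ, if_neg hp, add_zero]

lemma monotone_aliveMean_log_sub_primeLogMean (ht : 1 ≤ t)
    (hR : ∀ y : ℕ, 1 ≤ y → |primeLogMean w y - log y| ≤ R) (htR : R ≤ log t) :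
    Monotone fun y ↦ aliveMean w t y (fun a ↦ log a - primeLogMean w y) := by
  refine monotone_nat_of_le_succ fun y ↦ ?_
  have hdying : 0 ≤ mertensMean w y (dying w t y) (fun a ↦ -1 * (log a - primeLogMean w y)) := by
    refine mertensMean_nonneg fun a ha ↦ ?_
    obtain ⟨hy, hlog⟩ := log_add_log_of_mem_dying ht ha
    linarith [(abs_le.1 (hR y hy)).1]
  rw [mertensMean_const_mul] at hdying
  exact le_trans (by linarith) (aliveMean_sub_dying_le_aliveMean_succ ht y)

-- The element `1` dies at `y = t`, and its contribution is what makes the mean positive.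
lemma primeLogMean_div_mertensProd_le_aliveMean (ht : 1 ≤ t)
    (hR : ∀ y : ℕ, 1 ≤ y → |primeLogMean w y - log y| ≤ R) (htR : R ≤ log t) {y : ℕ}
    (hy : t < y) : primeLogMean w t / mertensProd w t ≤
      aliveMean w t y (fun a ↦ log a - primeLogMean w y) := by
  have hmono := monotone_aliveMean_log_sub_primeLogMean ht hR htR
  have hzero : 0 ≤ aliveMean w t t (fun a ↦ log a - primeLogMean w t) :=
    le_trans (by simp [aliveMean_zero, primeLogMean, primesIoc]) (hmono t.zero_le)
  have hdying : dying w t t = {1} := by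
    ext a
    rw [dying, mem_filter, mem_singleton]
    constructor
    · exact fun h ↦ Nat.eq_of_mul_eq_mul_left ht (by lia)
    · rintro rfl
      exact ⟨one_mem_denseSquarefree w t t, mul_one t⟩
  have hstep := aliveMean_sub_dying_le_aliveMean_succ (w := w) ht t
  have hone : mertensMean w t (dying w t t) (fun a ↦ log a - primeLogMean w t) =
      -(primeLogMean w t / mertensProd w t) := by
    simp [mertensMean, hdying, neg_div]
  exact le_trans (by linarith) (hmono hy)

end FirstMoment

section Survival

lemma sum_primesIoc_inv_le {R : ℝ} (hR : ∀ w y : ℕ, 1 ≤ w → w ≤ y →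
    |∑ p ∈ primesIoc w y, log p / p - log (y / w)| ≤ R) {w y : ℕ} (hw : 2 ≤ w) (hy : w ≤ y) :
    ∑ p ∈ primesIoc w y, 1 / (p : ℝ) ≤ (log y - log w + R) / log w := by
  have hmertens := (abs_le.1 (hR w y (by lia) hy)).2
  rw [log_div (by norm_cast; lia) (by norm_cast; lia)] at hmertens
  have hlog : 0 < log w := log_pos (by exact_mod_cast hw)
  rw [le_div_iff₀ hlog, sum_mul]
  refine (sum_le_sum fun p hp ↦ ?_).trans (by linarith : _ ≤ _)
  rw [one_div_mul_eq_div]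
  exact div_le_div_of_nonneg_right (log_le_log (by positivity)
    (by exact_mod_cast (mem_primesIoc.1 hp).1.1.le)) p.cast_nonneg

/-- A potential whose mean over the elements alive at `z ≥ y₀` is nonincreasing in `z`. Elements
with a prime factor exceeding `y₀` count fully; an element `a` without one counts for an upper bound
of the probability that it acquires one before dying at `t * a`, plus a term which is at least `1`
for the elements still alive at `y₀ ^ 2`. -/
noncomputable def survivalPotential (w t y₀ z a : ℕ) : ℝ :=
  if a ∈ denseSquarefree w t y₀ then
    ∑ p ∈ primesIoc z (t * a), 1 / (p : ℝ) + (log t + log a - log y₀) / log y₀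
  else 1

variable {w t y₀ : ℕ}

lemma sum_primesIoc_inv_nonneg (z y : ℕ) : 0 ≤ ∑ p ∈ primesIoc z y, 1 / (p : ℝ) :=
  sum_nonneg fun p _ ↦ by positivity

lemma sum_primesIoc_inv_eq_add {z y : ℕ} (hp : (z + 1).Prime) (hz : z + 1 ≤ y) :
    ∑ p ∈ primesIoc z y, 1 / (p : ℝ) =
      1 / ((z : ℝ) + 1) + ∑ p ∈ primesIoc (z + 1) y, 1 / (p : ℝ) := by
  rw [← sum_primesIoc_add_sum_primesIoc z.le_succ hz, sum_primesIoc_succ,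
    if_pos ⟨hp, z.lt_succ_self⟩]
  simp [primesIoc]

lemma aliveMean_survivalPotential_succ_le (ht : 1 ≤ t) (hy₀ : 2 ≤ y₀) {z : ℕ} (hz : y₀ ≤ z) :
    aliveMean w t (z + 1) (survivalPotential w t y₀ (z + 1)) ≤
      aliveMean w t z (survivalPotential w t y₀ z) := by
  have hlog : 0 < log y₀ := log_pos (by exact_mod_cast hy₀)
  have hlogz : log y₀ ≤ log z := log_le_log (by positivity) (by exact_mod_cast hz)
  refine aliveMean_succ_le ht (fun a ha ↦ ?_) (fun hp _ a ha ↦ ?_) fun _ a _ ↦ ?_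
  · obtain ⟨-, hdie⟩ := log_add_log_of_mem_dying ht ha
    rw [survivalPotential]
    split_ifs
    · rw [hdie]
      exact add_nonneg (sum_primesIoc_inv_nonneg _ _) (div_nonneg (sub_nonneg.2 hlogz) hlog.le)
    · exact zero_le_one
  · have hnot : a * (z + 1) ∉ denseSquarefree w t y₀ := fun h ↦ by
      have := ((mem_denseSquarefree.1 h).2.1 (z + 1) hp (dvd_mul_left _ a)).2
      lia
    rw [survivalPotential, survivalPotential, survivalPotential, if_neg hnot]
    split_ifs with hold
    · obtain ⟨-, hle⟩ := mem_filter.1 ha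
      have ha0 := pos_of_mem_survivors ha
      rw [sum_primesIoc_inv_eq_add hp hle]
      have hlog_nonneg : 0 ≤ (log t + log a - log y₀) / log y₀ := by
        refine div_nonneg (sub_nonneg.2 ?_) hlog.le
        rw [← log_mul (by positivity) (by positivity)]
        exact log_le_log (by positivity) (by exact_mod_cast (by lia : y₀ ≤ t * a))
      have hinv : 0 < 1 / ((z : ℝ) + 1) := by positivity
      nlinarith [mul_nonneg hinv.le (sum_primesIoc_inv_nonneg (z + 1) (t * a)),
        mul_nonneg hinv.le hlog_nonneg, mul_pos hinv hinv]
    · linarith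
  · rw [survivalPotential, survivalPotential]
    split_ifs
    · gcongr
      exact primesIoc_mono z.le_succ le_rfl
    · exact le_rfl

lemma one_le_survivalPotential (ht : 1 ≤ t) (hy₀ : 2 ≤ y₀) {y a : ℕ} (hy : y₀ * y₀ ≤ y)
    (ha : a ∈ alive w t y) : 1 ≤ survivalPotential w t y₀ y a := by
  have hlog : 0 < log y₀ := log_pos (by exact_mod_cast hy₀)
  rw [survivalPotential]
  split_ifs
  · have hsq : log ((y₀ * y₀ : ℕ) : ℝ) ≤ log y := log_le_log (by positivity) (by exact_mod_cast hy)
    push_cast at hsq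
    rw [log_mul (by positivity) (by positivity)] at hsq
    have halive := log_le_log_add_log_of_mem_alive (by nlinarith) ht ha
    have hone : 1 ≤ (log t + log a - log y₀) / log y₀ := by rw [le_div_iff₀ hlog]; linarith
    linarith [sum_primesIoc_inv_nonneg y (t * a)]
  · exact le_rfl

lemma survivalPotential_self_le {R : ℝ} (hR : ∀ w y : ℕ, 1 ≤ w → w ≤ y →
    |∑ p ∈ primesIoc w y, log p / p - log (y / w)| ≤ R) (hy₀ : 2 ≤ y₀) {a : ℕ} (ht : 1 ≤ t)
    (ha : a ∈ alive w t y₀) : survivalPotential w t y₀ y₀ a ≤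
      (2 / log y₀) * (log t + log a - log y₀) + (R / log y₀) * 1 := by
  obtain ⟨hmem, hle⟩ := mem_filter.1 ha
  have ha0 := pos_of_mem_alive ha
  have hsum := sum_primesIoc_inv_le hR hy₀ hle
  push_cast at hsum
  rw [log_mul (by positivity) (by positivity)] at hsum
  rw [survivalPotential, if_pos hmem]
  calc _ ≤ (log t + log a - log y₀ + R) / log y₀ + (log t + log a - log y₀) / log y₀ := by gcongr
    _ = _ := by ring

lemma aliveMean_one_le_div_log {R R' : ℝ} (ht : 1 ≤ t) (hR'0 : 0 ≤ R')
    (hR : ∀ y : ℕ, 1 ≤ y → |primeLogMean w y - log y| ≤ R)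
    (hR' : ∀ w y : ℕ, 1 ≤ w → w ≤ y → |∑ p ∈ primesIoc w y, log p / p - log (y / w)| ≤ R')
    (hy₀ : 2 ≤ y₀) {y : ℕ} (hy : y₀ * y₀ ≤ y) :
    aliveMean w t y (fun _ ↦ 1) ≤ (2 * (log t + R) + R') / log y₀ := by
  have hlog : 0 < log y₀ := log_pos (by exact_mod_cast hy₀)
  have hanti : ∀ z, y₀ ≤ z → aliveMean w t z (survivalPotential w t y₀ z) ≤
      aliveMean w t y₀ (survivalPotential w t y₀ y₀) := fun z hz ↦ by
    induction z, hz using Nat.le_induction with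
    | base => exact le_rfl
    | succ z hz ih => exact (aliveMean_survivalPotential_succ_le ht hy₀ hz).trans ih
  calc aliveMean w t y (fun _ ↦ 1)
      ≤ aliveMean w t y (survivalPotential w t y₀ y) :=
        mertensMean_mono fun a ha ↦ one_le_survivalPotential ht hy₀ hy ha
    _ ≤ aliveMean w t y₀ (survivalPotential w t y₀ y₀) := hanti y (y₀.le_mul_self.trans hy)
    _ ≤ aliveMean w t y₀ (fun a ↦
          (2 / log y₀) * (log t + log a - log y₀) + (R' / log y₀) * 1) :=
        mertensMean_mono fun a ha ↦ survivalPotential_self_le hR' hy₀ ht ha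
    _ = 2 / log y₀ * aliveMean w t y₀ (fun a ↦ log t + log a - log y₀) +
          R' / log y₀ * aliveMean w t y₀ (fun _ ↦ 1) := by
        simp only [aliveMean, mertensMean_add, mertensMean_const_mul]
    _ ≤ 2 / log y₀ * (log t + R) + R' / log y₀ * 1 := by
        gcongr
        · exact aliveMean_log_sub_log_le ht hR (by lia)
        · exact aliveMean_one_le_one ht y₀
    _ = _ := by ring

lemma log_add_one_le_four_mul_log_sqrt {y : ℕ} (hy : 4 ≤ y) :
    log ((y : ℝ) + 1) ≤ 4 * log y.sqrt := by
  have hsqrt : 2 ≤ y.sqrt := Nat.le_sqrt.2 hy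
  have hpow : y + 1 ≤ y.sqrt ^ 4 :=
    calc y + 1 ≤ (y.sqrt + 1) * (y.sqrt + 1) := y.lt_succ_sqrt
      _ ≤ (y.sqrt * y.sqrt) * (y.sqrt * y.sqrt) := by gcongr <;> nlinarith
      _ = y.sqrt ^ 4 := by ring
  calc log ((y : ℝ) + 1) ≤ log ((y.sqrt : ℝ) ^ 4) :=
        log_le_log (by positivity) (by exact_mod_cast hpow)
    _ = 4 * log y.sqrt := by rw [log_pow]; norm_num

theorem exists_aliveMean_one_mul_log_le (w : ℕ) : ∃ C : ℝ, 1 ≤ C ∧ ∀ t y : ℕ, 1 ≤ t →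
    aliveMean w t y (fun _ ↦ 1) * log (y + 1) ≤ C * (1 + log t) := by
  obtain ⟨R, hR1, hR⟩ := exists_abs_primeLogMean_sub_log_le w
  obtain ⟨R', hR'1, hR'⟩ := mertens_first_primesIoc
  refine ⟨5 * (2 * R + 2 + R'), by linarith, fun t y ht ↦ ?_⟩
  have hlogt : 0 ≤ log t := log_natCast_nonneg t
  have hmean : 0 ≤ aliveMean w t y (fun _ ↦ 1) := mertensMean_nonneg fun _ _ ↦ zero_le_one
  rcases lt_or_ge y 4 with hy | hy
  · have hlog3 : log ((y : ℝ) + 1) ≤ 3 := by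
      have := log_le_sub_one_of_pos (show (0 : ℝ) < (y : ℝ) + 1 by positivity)
      have : (y : ℝ) ≤ 3 := by exact_mod_cast (by lia : y ≤ 3)
      linarith
    calc _ ≤ 1 * (3 : ℝ) := mul_le_mul (aliveMean_one_le_one ht y) hlog3
          (log_nonneg (by linarith [y.cast_nonneg (α := ℝ)])) zero_le_one
      _ ≤ 5 * (2 * R + 2 + R') * (1 + 0) := by linarith
      _ ≤ _ := by gcongr
  · have hsqrt : 2 ≤ y.sqrt := Nat.le_sqrt.2 hy
    have hbound := aliveMean_one_le_div_log ht (by linarith) hR hR' hsqrt y.sqrt_le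
    rw [le_div_iff₀ (log_pos (by exact_mod_cast hsqrt))] at hbound
    calc _ ≤ aliveMean w t y (fun _ ↦ 1) * (4 * log y.sqrt) := by
          gcongr; exact log_add_one_le_four_mul_log_sqrt hy
      _ ≤ 4 * (2 * (log t + R) + R') := by linarith
      _ ≤ _ := by nlinarith

end Survival

section SecondMoment

variable {w t y : ℕ}

lemma sq_sub_add_sq_add_div_le {q : ℝ} (hq : 0 < q) (l L : ℝ) :
    (L - l / (q + 1)) ^ 2 + (L + l - l / (q + 1)) ^ 2 / q ≤
      (1 + 1 / q) * (L ^ 2 + l ^ 2 / q) := by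
  have heq : (L - l / (q + 1)) ^ 2 + (L + l - l / (q + 1)) ^ 2 / q =
      (1 + 1 / q) * L ^ 2 + l ^ 2 / (q + 1) := by
    field_simp; ring
  have hle : l ^ 2 / (q + 1) ≤ (1 + 1 / q) * (l ^ 2 / q) :=
    calc l ^ 2 / (q + 1) ≤ 1 * (l ^ 2 / q) := by rw [one_mul]; gcongr; linarith
      _ ≤ (1 + 1 / q) * (l ^ 2 / q) := by
        gcongr; exact le_add_of_nonneg_right (one_div_nonneg.2 hq.le)
  linarith

lemma aliveMean_sq_succ_le_of_prime (ht : 1 ≤ t) (hp : (y + 1).Prime ∧ w < y + 1) :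
    aliveMean w t (y + 1) (fun a ↦ (log a - primeLogMean w (y + 1)) ^ 2) ≤
      aliveMean w t y (fun a ↦ (log a - primeLogMean w y) ^ 2) +
        log ((y : ℝ) + 1) ^ 2 / ((y : ℝ) + 1) * aliveMean w t y (fun _ ↦ 1) := by
  rw [← mertensMean_const_mul, ← mertensMean_add]
  refine aliveMean_succ_le ht (fun a _ ↦ by positivity) (fun _ _ a ha ↦ ?_) (absurd hp)
  rw [log_natCast_mul_succ (pos_of_mem_survivors ha), primeLogMean_succ, if_pos hp, mul_one]
  convert sq_sub_add_sq_add_div_le (by positivity : (0 : ℝ) < y + 1) (log (y + 1))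
    (log a - primeLogMean w y) using 3 <;> ring

lemma aliveMean_sq_succ_le_of_not_prime (ht : 1 ≤ t) (hp : ¬((y + 1).Prime ∧ w < y + 1)) :
    aliveMean w t (y + 1) (fun a ↦ (log a - primeLogMean w (y + 1)) ^ 2) ≤
      aliveMean w t y (fun a ↦ (log a - primeLogMean w y) ^ 2) := by
  refine aliveMean_succ_le ht (fun a _ ↦ by positivity) (fun h h' ↦ absurd ⟨h, h'⟩ hp)
    fun _ a _ ↦ ?_
  rw [primeLogMean_succ, if_neg hp, add_zero]

lemma aliveMean_sq_le_mul_sum {C : ℝ} (hC : 0 ≤ C)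
    (h : ∀ y : ℕ, aliveMean w t y (fun _ ↦ 1) * log (y + 1) ≤ C) (ht : 1 ≤ t) (y : ℕ) :
    aliveMean w t y (fun a ↦ (log a - primeLogMean w y) ^ 2) ≤
      C * ∑ p ∈ primesIoc 0 y, log p / p := by
  induction y with
  | zero => simp [aliveMean_zero, primeLogMean, primesIoc]
  | succ y ih =>
    have hterm : 0 ≤ log ((y + 1 : ℕ) : ℝ) / ((y + 1 : ℕ) : ℝ) :=
      div_nonneg (log_natCast_nonneg _) (Nat.cast_nonneg _)
    rw [sum_primesIoc_succ, mul_add]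
    by_cases hp : (y + 1).Prime ∧ w < y + 1
    · rw [if_pos ⟨hp.1, y.succ_pos⟩]
      refine (aliveMean_sq_succ_le_of_prime ht hp).trans (add_le_add ih ?_)
      push_cast at hterm ⊢
      calc _ = aliveMean w t y (fun _ ↦ 1) * log ((y : ℝ) + 1) *
            (log ((y : ℝ) + 1) / ((y : ℝ) + 1)) := by ring
        _ ≤ _ := mul_le_mul_of_nonneg_right (h y) hterm
    · refine (aliveMean_sq_succ_le_of_not_prime ht hp).trans (ih.trans ?_)
      refine le_add_of_nonneg_right (mul_nonneg hC ?_)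
      split_ifs
      exacts [hterm, le_rfl]

theorem exists_aliveMean_sq_le (w : ℕ) : ∃ C : ℝ, 1 ≤ C ∧ ∀ t y : ℕ, 1 ≤ t → 2 ≤ y →
    aliveMean w t y (fun a ↦ (log a - primeLogMean w y) ^ 2) ≤ C * (1 + log t) * log y := by
  obtain ⟨C, hC1, hC⟩ := exists_aliveMean_one_mul_log_le w
  obtain ⟨R, hR1, hR⟩ := mertens_first
  refine ⟨C * (1 + 2 * R), by nlinarith, fun t y ht hy ↦ ?_⟩
  have : 0 ≤ log t := log_natCast_nonneg t
  have hlogy : 1 / 2 ≤ log y := by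
    linarith [log_two_gt_d9, log_le_log two_pos (show (2 : ℝ) ≤ y by exact_mod_cast hy)]
  have hsum : ∑ p ∈ primesIoc 0 y, log p / p ≤ (1 + 2 * R) * log y := by
    nlinarith [(abs_le.1 (hR y (by lia))).2]
  calc _ ≤ C * (1 + log t) * ∑ p ∈ primesIoc 0 y, log p / p :=
        aliveMean_sq_le_mul_sum (by positivity) (fun y ↦ hC t y ht) ht y
    _ ≤ C * (1 + log t) * ((1 + 2 * R) * log y) := by gcongr
    _ = _ := by ring

end SecondMoment

end Moments

section Sieve

open Finset Real

/-- The squarefree integers in `[1, z]` all of whose prime factors exceed `q`. -/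
def squarefreeRough (z q : ℕ) : Finset ℕ :=
  {b ∈ Icc 1 z | Squarefree b ∧ ∀ p ∈ b.primeFactors, q < p}

lemma mem_squarefreeRough {z q b : ℕ} : b ∈ squarefreeRough z q ↔ (1 ≤ b ∧ b ≤ z) ∧
    Squarefree b ∧ ∀ p : ℕ, p.Prime → p ∣ b → q < p := by
  rw [squarefreeRough, mem_filter, mem_Icc]
  refine and_congr_right fun hb ↦ and_congr_right fun _ ↦ ?_
  simp only [Nat.mem_primeFactors_of_ne_zero (Nat.one_le_iff_ne_zero.1 hb.1), and_imp]

lemma sum_squarefreeRough_inv_le {z : ℕ} (hz : 1 ≤ z) (q : ℕ) :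
    ∑ b ∈ squarefreeRough z q, 1 / (b : ℝ) ≤ mertensProd q z := by
  have hsubset : squarefreeRough z q ⊆ alive q z z := fun b hb ↦ by
    obtain ⟨⟨hb1, hbz⟩, hsq, hfac⟩ := mem_squarefreeRough.1 hb
    have hle : ∀ p, p ∣ b → p ≤ z := fun p hd ↦ (Nat.le_of_dvd hb1 hd).trans hbz
    exact mem_filter.2 ⟨mem_denseSquarefree.2 ⟨hsq, fun p hp hd ↦ ⟨hfac p hp hd, hle p hd⟩,
      fun p _ hd ↦ (hle p hd).trans (Nat.le_mul_of_pos_right _ (smoothPart_pos b p))⟩,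
      Nat.le_mul_of_pos_right _ hb1⟩
  have hmean := aliveMean_one_le_one (w := q) hz z
  rw [aliveMean, mertensMean, div_le_one (mertensProd_pos q z)] at hmean
  exact (sum_le_sum_of_subset_of_nonneg hsubset fun _ _ _ ↦ by positivity).trans hmean

lemma log_eq_sum_primeFactors {b : ℕ} (hb : Squarefree b) :
    log b = ∑ p ∈ b.primeFactors, log p := by
  conv_lhs => rw [← Nat.prod_primeFactors_of_squarefree hb]
  rw [Nat.cast_prod, log_prod]
  exact fun p hp ↦ Nat.cast_ne_zero.2 (Nat.prime_of_mem_primeFactors hp).ne_zero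

lemma sum_primesIoc_log_le (n : ℕ) : ∑ p ∈ primesIoc 0 n, log p ≤ log 4 * n := by
  rw [primesIoc_zero_left, ← Chebyshev.theta_eq_sum_primesLE_log]
  exact Chebyshev.theta_le_log4_mul_x n.cast_nonneg

lemma card_filter_dvd_squarefreeRough_le {p : ℕ} (hp : p.Prime) (z q : ℕ) :
    #{b ∈ squarefreeRough z q | p ∣ b} ≤ #{b ∈ squarefreeRough z q | p * b ≤ z} := by
  refine card_le_card_of_injOn (· / p) (fun b hb ↦ ?_) fun b hb c hc h ↦ ?_
  · simp only [coe_filter, Set.mem_ofPred_eq, mem_squarefreeRough] at hb ⊢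
    obtain ⟨⟨⟨hpos, hle⟩, hsq, hfac⟩, c, rfl⟩ := hb
    rw [Nat.mul_div_cancel_left _ hp.pos]
    exact ⟨⟨⟨Nat.pos_of_mul_pos_left hpos, (Nat.le_mul_of_pos_left c hp.pos).trans hle⟩,
      hsq.squarefree_of_dvd (dvd_mul_left c p), fun r hr hd ↦ hfac r hr (hd.mul_left p)⟩, hle⟩
  · simp only [coe_filter, Set.mem_ofPred_eq] at hb hc
    rw [← Nat.div_mul_cancel hb.2, ← Nat.div_mul_cancel hc.2]
    exact congrArg (· * p) h

-- Write `log b` as the sum of `log p` over the primes `p ∣ b`, replace `b` by `b / p`, and sum over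
-- `p ≤ z / b` first.
lemma sum_log_squarefreeRough_le (z q : ℕ) :
    ∑ b ∈ squarefreeRough z q, log b ≤ log 4 * z * ∑ b ∈ squarefreeRough z q, 1 / (b : ℝ) := by
  have hlog : ∀ b ∈ squarefreeRough z q,
      log b = ∑ p ∈ primesIoc 0 z, if p ∣ b then log p else 0 := fun b hb ↦ by
    obtain ⟨⟨hb1, hbz⟩, hsq, -⟩ := mem_squarefreeRough.1 hb
    rw [log_eq_sum_primeFactors hsq, ← sum_filter]
    refine sum_congr (ext fun p ↦ ?_) fun _ _ ↦ rfl
    rw [Nat.mem_primeFactors_of_ne_zero hsq.ne_zero, mem_filter, mem_primesIoc]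
    exact ⟨fun h ↦ ⟨⟨⟨h.1.pos, (Nat.le_of_dvd hb1 h.2).trans hbz⟩, h.1⟩, h.2⟩,
      fun h ↦ ⟨h.1.2, h.2⟩⟩
  have hdvd : ∀ p ∈ primesIoc 0 z, (∑ b ∈ squarefreeRough z q, if p ∣ b then log p else 0) ≤
      ∑ b ∈ squarefreeRough z q, if p * b ≤ z then log p else 0 := fun p hp ↦ by
    rw [← sum_filter, ← sum_filter, sum_const, sum_const]
    exact nsmul_le_nsmul_left (log_natCast_nonneg p)
      (card_filter_dvd_squarefreeRough_le (mem_primesIoc.1 hp).2 z q)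
  have hprimes : ∀ b ∈ squarefreeRough z q,
      (∑ p ∈ primesIoc 0 z, if p * b ≤ z then log p else 0) ≤ log 4 * (z / b) := fun b hb ↦ by
    rw [← sum_filter]
    calc _ ≤ ∑ p ∈ primesIoc 0 (z / b), log p := by
          refine sum_le_sum_of_subset_of_nonneg (fun p hp ↦ ?_) fun p _ _ ↦ log_natCast_nonneg p
          rw [mem_filter, mem_primesIoc] at hp
          have hle := (Nat.le_div_iff_mul_le (mem_squarefreeRough.1 hb).1.1).2 hp.2
          exact mem_primesIoc.2 ⟨⟨hp.1.1.1, hle⟩, hp.1.2⟩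
      _ ≤ log 4 * (z / b : ℕ) := sum_primesIoc_log_le _
      _ ≤ log 4 * (z / b) := by gcongr; exact Nat.cast_div_le
  calc ∑ b ∈ squarefreeRough z q, log b
      = ∑ p ∈ primesIoc 0 z, ∑ b ∈ squarefreeRough z q, if p ∣ b then log p else 0 := by
        rw [sum_congr rfl hlog, sum_comm]
    _ ≤ ∑ p ∈ primesIoc 0 z, ∑ b ∈ squarefreeRough z q, if p * b ≤ z then log p else 0 :=
        sum_le_sum hdvd
    _ ≤ ∑ b ∈ squarefreeRough z q, log 4 * (z / b) := by
        rw [sum_comm]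
        exact sum_le_sum hprimes
    _ = _ := by simp only [mul_sum, mul_div_assoc, mul_one_div]

lemma prod_Icc_one_eq_factorial (z : ℕ) : ∏ b ∈ Icc 1 z, b = z.factorial := by
  rw [← prod_range_add_one_eq_factorial, range_eq_Ico, prod_Ico_add' (fun b ↦ b) 0 z 1]
  rfl

lemma sum_log_sub_log_le {z : ℕ} {s : Finset ℕ} (hs : s ⊆ Icc 1 z) :
    ∑ b ∈ s, (log z - log b) ≤ z := by
  rcases z.eq_zero_or_pos with rfl | hz
  · simp [subset_empty.1 hs]
  have hnonneg : ∀ b ∈ Icc 1 z, 0 ≤ log z - log b := fun b hb ↦ by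
    rw [mem_Icc] at hb
    exact sub_nonneg.2 (log_le_log (by exact_mod_cast hb.1) (by exact_mod_cast hb.2))
  refine (sum_le_sum_of_subset_of_nonneg hs fun b hb _ ↦ hnonneg b hb).trans ?_
  rw [sum_sub_distrib, sum_const, Nat.card_Icc, ← log_prod, ← Nat.cast_prod,
    prod_Icc_one_eq_factorial]
  · have hstirling := Stirling.le_log_factorial_stirling hz.ne'
    have hpi : 0 ≤ log (2 * π) := log_nonneg (by nlinarith [pi_gt_three])
    have hlog : 0 ≤ log z := log_natCast_nonneg z
    simp only [add_tsub_cancel_right, nsmul_eq_mul]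
    linarith
  · exact fun b hb ↦ Nat.cast_ne_zero.2 (Nat.one_le_iff_ne_zero.1 (mem_Icc.1 hb).1)

lemma exists_mertensProd_le_log_div_log : ∃ C : ℝ, 0 < C ∧ ∀ q z : ℕ, 2 ≤ q → q ≤ z →
    mertensProd q z ≤ C * (log z / log q) := by
  obtain ⟨c, C, hc, hC, hbounds⟩ := exists_mertensProd_bounds
  refine ⟨C / c, by positivity, fun q z hq hz ↦ ?_⟩
  have hlog : 0 < log q := log_pos (by exact_mod_cast hq)
  rw [div_mul_div_comm, le_div_iff₀ (by positivity), mul_comm]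
  calc c * log q * mertensProd q z ≤ mertensProd 0 q * mertensProd q z :=
        mul_le_mul_of_nonneg_right (hbounds q hq).1 (mertensProd_pos q z).le
    _ = mertensProd 0 z := mertensProd_mul_mertensProd q.zero_le hz
    _ ≤ C * log z := (hbounds z (hq.trans hz)).2

theorem exists_card_squarefreeRough_le : ∃ C : ℝ, 0 < C ∧ ∀ z q : ℕ, 2 ≤ q → q ≤ z →
    (#(squarefreeRough z q) : ℝ) ≤ C * z / log q := by
  obtain ⟨C, hC, hprod⟩ := exists_mertensProd_le_log_div_log
  have : 0 < log 4 := log_pos (by norm_num)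
  refine ⟨1 + log 4 * C, by positivity, fun z q hq hz ↦ ?_⟩
  have hlogq : 0 < log q := log_pos (by exact_mod_cast hq)
  have hlogqz : log q ≤ log z := log_le_log (by positivity) (by exact_mod_cast hz)
  have hsub := sum_log_sub_log_le (s := squarefreeRough z q) (filter_subset _ _)
  rw [sum_sub_distrib, sum_const, nsmul_eq_mul] at hsub
  refine le_of_mul_le_mul_right ?_ (hlogq.trans_le hlogqz)
  calc (#(squarefreeRough z q) : ℝ) * log z
      ≤ z + ∑ b ∈ squarefreeRough z q, log b := by linarith
    _ ≤ z + log 4 * z * mertensProd q z := by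
        gcongr
        refine (sum_log_squarefreeRough_le z q).trans ?_
        gcongr
        exact sum_squarefreeRough_inv_le (by lia) q
    _ ≤ z * (log z / log q) + log 4 * z * (C * (log z / log q)) := by
        gcongr
        · exact le_mul_of_one_le_right z.cast_nonneg ((one_le_div hlogq).2 hlogqz)
        · exact hprod q z hq hz
    _ = _ := by ring

theorem exists_card_primesIoc_zero_le : ∃ C : ℝ, 0 < C ∧ ∀ n : ℕ, 2 ≤ n →
    (#(primesIoc 0 n) : ℝ) ≤ C * n / log n := by
  have : 0 < log 4 := log_pos (by norm_num)
  refine ⟨2 * log 4 + 2, by positivity, fun n hn ↦ ?_⟩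
  have hn1 : (1 : ℝ) < n := by exact_mod_cast hn
  have hlog : 0 < log n := log_pos hn1
  have hsqrt : √n ≤ 2 * n / log n := by
    have hlog_le : log n ≤ 2 * √n := by
      have := log_le_sub_one_of_pos (sqrt_pos.2 (zero_lt_one.trans hn1))
      rw [log_sqrt n.cast_nonneg] at this
      linarith
    rw [le_div_iff₀ hlog]
    nlinarith [mul_self_sqrt n.cast_nonneg, sqrt_nonneg n]
  have hpi := Chebyshev.pi_le_log4_mul_div hn1
  rw [Nat.floor_natCast, log_sqrt n.cast_nonneg] at hpi
  rw [primesIoc_zero_left, Nat.primesLE_card_eq_primeCounting]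
  calc (n.primeCounting : ℝ) ≤ log 4 * n / (log n / 2) + 2 * n / log n := hpi.trans (by gcongr)
    _ = _ := by field_simp

end Sieve

section AliveSums

open Finset Real

lemma sum_alive_eq (w t y : ℕ) (f : ℕ → ℝ) :
    ∑ a ∈ alive w t y, f a / a = aliveMean w t y f * mertensProd w y :=
  (div_mul_cancel₀ _ (mertensProd_pos w y).ne').symm

theorem exists_sum_alive_inv_le : ∃ C : ℝ, 1 ≤ C ∧ ∀ t y : ℕ, 1 ≤ t →
    ∑ a ∈ alive 0 t y, 1 / (a : ℝ) ≤ C * (1 + log t) := by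
  obtain ⟨c, C, -, hC, hprod⟩ := exists_mertensProd_bounds
  obtain ⟨C', hC', hmean⟩ := exists_aliveMean_one_mul_log_le 0
  have hCC' : 0 ≤ C * C' := by positivity
  refine ⟨1 + C * C', by linarith, fun t y ht ↦ ?_⟩
  have hlogt : 0 ≤ log t := log_natCast_nonneg t
  have hmean_nonneg : 0 ≤ aliveMean 0 t y (fun _ ↦ 1) := mertensMean_nonneg fun _ _ ↦ zero_le_one
  rw [sum_alive_eq 0 t y fun _ ↦ 1]
  rcases lt_or_ge y 2 with hy | hy
  · have hprod_one : mertensProd 0 y = 1 := prod_eq_one fun p hp ↦ by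
      have := (mem_primesIoc.1 hp).2.two_le
      have := (mem_primesIoc.1 hp).1.2
      lia
    rw [hprod_one, mul_one]
    exact (aliveMean_one_le_one ht y).trans (by nlinarith)
  · calc _ ≤ aliveMean 0 t y (fun _ ↦ 1) * (C * log (y + 1)) := by
          gcongr
          refine (hprod y hy).2.trans ?_
          gcongr
          linarith
      _ = C * (aliveMean 0 t y (fun _ ↦ 1) * log (y + 1)) := by ring
      _ ≤ C * (C' * (1 + log t)) := mul_le_mul_of_nonneg_left (hmean t y ht) hC.le
      _ ≤ _ := by nlinarith

theorem exists_sum_alive_sq_div_le : ∃ C : ℝ, 1 ≤ C ∧ ∀ t y : ℕ, 1 ≤ t → 2 ≤ y →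
    ∑ a ∈ alive 0 t y, (log a - primeLogMean 0 y) ^ 2 / (a : ℝ) ≤
      C * (1 + log t) * log y ^ 2 := by
  obtain ⟨c, C, -, hC, hprod⟩ := exists_mertensProd_bounds
  obtain ⟨C', hC', hmean⟩ := exists_aliveMean_sq_le 0
  have hCC' : 0 ≤ C * C' := by positivity
  refine ⟨1 + C * C', by linarith, fun t y ht hy ↦ ?_⟩
  have : 0 ≤ log t := log_natCast_nonneg t
  have : 0 ≤ log y := log_natCast_nonneg y
  rw [sum_alive_eq 0 t y fun a ↦ (log a - primeLogMean 0 y) ^ 2]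
  calc _ ≤ (C' * (1 + log t) * log y) * (C * log y) :=
        mul_le_mul (hmean t y ht hy) (hprod y hy).2 (mertensProd_pos 0 y).le (by positivity)
    _ = C * C' * ((1 + log t) * log y ^ 2) := by ring
    _ ≤ (1 + C * C') * ((1 + log t) * log y ^ 2) := by gcongr; linarith
    _ = _ := by ring

end AliveSums

section RoughPart

/-- The cofactor of `smoothPart n p` in `n`: the largest divisor of `n` all of whose prime factors
are at least `p`. -/
def roughPart (n p : ℕ) : ℕ := (n.primeFactorsList.filter (¬ · < p)).prod

variable {n p q : ℕ}

lemma roughPart_pos (n p : ℕ) : 0 < roughPart n p :=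
  List.prod_pos fun _ hq ↦ Nat.pos_of_mem_primeFactorsList (List.mem_of_mem_filter hq)

lemma smoothPart_mul_roughPart (hn : n ≠ 0) (p : ℕ) : smoothPart n p * roughPart n p = n := by
  have h := List.prod_map_filter_mul_prod_map_filter_not (· < p) id n.primeFactorsList
  rwa [List.map_id, List.map_id, List.map_id, Nat.prod_primeFactorsList hn] at h

lemma lt_and_dvd_of_dvd_smoothPart (hp : p.Prime) (h : p ∣ smoothPart n q) : p < q ∧ p ∣ n := by
  obtain ⟨r, hr, hpr⟩ := hp.prime.dvd_prod_iff.1 h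
  rw [List.mem_filter] at hr
  rw [(Nat.prime_dvd_prime_iff_eq hp (Nat.prime_of_mem_primeFactorsList hr.1)).1 hpr]
  exact ⟨by simpa using hr.2, Nat.dvd_of_mem_primeFactorsList hr.1⟩

lemma le_of_dvd_roughPart (hp : p.Prime) (h : p ∣ roughPart n q) : q ≤ p := by
  obtain ⟨r, hr, hpr⟩ := hp.prime.dvd_prod_iff.1 h
  rw [List.mem_filter] at hr
  rw [(Nat.prime_dvd_prime_iff_eq hp (Nat.prime_of_mem_primeFactorsList hr.1)).1 hpr]
  simpa using hr.2

lemma smoothPart_smoothPart (hn : n ≠ 0) (hpq : p ≤ q) :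
    smoothPart (smoothPart n q) p = smoothPart n p := by
  conv_rhs => rw [← smoothPart_mul_roughPart hn q]
  rw [smoothPart_mul (smoothPart_pos n q).ne' (roughPart_pos n q).ne',
    smoothPart_eq_one (n := roughPart n q) fun r hr hd ↦ hpq.trans (le_of_dvd_roughPart hr hd),
    mul_one]

lemma smoothPart_succ_of_not_dvd (h : ¬(q.Prime ∧ q ∣ n)) :
    smoothPart n (q + 1) = smoothPart n q := by
  refine congrArg List.prod (List.filter_congr fun r hr ↦ decide_eq_decide.2 ?_)
  have : r ≠ q := by
    rintro rfl
    exact h ⟨Nat.prime_of_mem_primeFactorsList hr, Nat.dvd_of_mem_primeFactorsList hr⟩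
  lia

lemma smoothPart_succ_of_dvd (hn : Squarefree n) (hq : q.Prime) (hqn : q ∣ n) :
    smoothPart n (q + 1) = smoothPart n q * q := by
  obtain ⟨c, rfl⟩ := hqn
  obtain ⟨hcop, -, hc⟩ := Nat.squarefree_mul_iff.1 hn
  have hqc : ¬(q.Prime ∧ q ∣ c) := fun h ↦ hq.coprime_iff_not_dvd.1 hcop h.2
  rw [smoothPart_mul hq.ne_zero hc.ne_zero, smoothPart_mul hq.ne_zero hc.ne_zero,
    smoothPart_prime hq, smoothPart_prime hq, if_pos q.lt_succ_self, if_neg (lt_irrefl q),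
    smoothPart_succ_of_not_dvd hqc, one_mul, mul_comm]

lemma smoothPart_mul_dvd (hn : n ≠ 0) (hp : p.Prime) (hpn : p ∣ n) : smoothPart n p * p ∣ n := by
  refine Nat.Coprime.mul_dvd_of_dvd_of_dvd ?_ (smoothPart_dvd hn p) hpn
  exact (hp.coprime_iff_not_dvd.2 fun h ↦ (lt_and_dvd_of_dvd_smoothPart hp h).1.false).symm

lemma exists_smoothPart_le_lt {s : ℕ} (hs : 1 ≤ s) (hsn : s < n) :
    ∃ q : ℕ, q.Prime ∧ q ∣ n ∧ smoothPart n q ≤ s ∧ s < smoothPart n (q + 1) := by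
  have hex : ∃ m, s < smoothPart n m := ⟨n + 1, by
    rwa [smoothPart_eq_self (by lia) fun q _ hq ↦ Nat.lt_succ_of_le (Nat.le_of_dvd (by lia) hq)]⟩
  have hne : Nat.find hex ≠ 0 := fun h ↦ by
    have hlt := Nat.find_spec hex
    rw [h, smoothPart_eq_one fun _ _ _ ↦ Nat.zero_le _] at hlt
    lia
  obtain ⟨q, hq⟩ := Nat.exists_eq_add_one_of_ne_zero hne
  have hlt := Nat.find_spec hex
  rw [hq] at hlt
  have hle : smoothPart n q ≤ s := not_lt.1 (Nat.find_min hex (by lia))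
  have hprime : q.Prime ∧ q ∣ n := by
    by_contra h
    rw [smoothPart_succ_of_not_dvd h] at hlt
    lia
  exact ⟨q, hprime.1, hprime.2, hle, hlt⟩

variable {t : ℕ}

lemma IsDivisorDense.smoothPart_mem_alive (hd : IsDivisorDense t n) (hn : Squarefree n)
    (hq : q.Prime) (hqn : q ∣ n) : smoothPart n q ∈ alive 0 t q := by
  refine Finset.mem_filter.2 ⟨mem_denseSquarefree.2
    ⟨hn.squarefree_of_dvd (smoothPart_dvd hn.ne_zero q), fun p hp hpd ↦ ?_, fun p hp hpd ↦ ?_⟩,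
    hd q hq hqn⟩
  · exact ⟨hp.pos, (lt_and_dvd_of_dvd_smoothPart hp hpd).1.le⟩
  · obtain ⟨hpq, hpn⟩ := lt_and_dvd_of_dvd_smoothPart hp hpd
    rw [smoothPart_smoothPart hn.ne_zero hpq.le]
    exact hd p hp hpn

lemma IsDivisorDense.mul_self_le (hd : IsDivisorDense t n) (hn : 0 < n) (hp : p.Prime)
    (hpn : p ∣ n) : p * p ≤ t * n :=
  calc p * p ≤ t * smoothPart n p * p := Nat.mul_le_mul_right _ (hd p hp hpn)
    _ = t * (smoothPart n p * p) := mul_assoc _ _ _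
    _ ≤ t * n := Nat.mul_le_mul_left _ (Nat.le_of_dvd hn (smoothPart_mul_dvd hn.ne' hp hpn))

end RoughPart

section DenseUpperBound

open Finset Real

/-- The squarefree `t`-dense integers in `[1, x]`. -/
noncomputable def denseUpTo (t x : ℕ) : Finset ℕ :=
  {n ∈ Icc 1 x | Squarefree n ∧ IsDivisorDense t n}

lemma mem_denseUpTo {t x n : ℕ} :
    n ∈ denseUpTo t x ↔ (1 ≤ n ∧ n ≤ x) ∧ Squarefree n ∧ IsDivisorDense t n := by
  rw [denseUpTo, mem_filter, mem_Icc]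

lemma card_denseUpTo_le (t x : ℕ) : #(denseUpTo t x) ≤ x :=
  (card_filter_le _ _).trans (by rw [Nat.card_Icc, Nat.add_sub_cancel])

lemma log_div_four_le_log_sub_primeLogMean {R : ℝ} {x a q : ℕ} (hx : 0 < x) (ha : 0 < a)
    (hq : 0 < q) (hR : |primeLogMean 0 q - log q| ≤ R) (hxR : 8 * R ≤ log x)
    (haq : x.sqrt < a * q) (hqx : 16 * log q ≤ log x) :
    log x / 4 ≤ log a - primeLogMean 0 q := by
  have hle : x ≤ (a * q) * (a * q) := (Nat.lt_succ_sqrt x).le.trans (Nat.mul_le_mul haq haq)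
  have hlog : log x ≤ log (((a * q) * (a * q) : ℕ) : ℝ) :=
    log_le_log (by exact_mod_cast hx) (by exact_mod_cast hle)
  push_cast at hlog
  rw [log_mul (by positivity) (by positivity), log_mul (by positivity) (by positivity)] at hlog
  linarith [(abs_le.1 hR).2]

-- For small `q` this is Chebyshev's inequality with the second moment bound; for `q` at least a
-- small power of `x` the first moment bound suffices.
lemma exists_sum_alive_inv_of_sqrt_lt_le : ∃ C : ℝ, ∃ x₀ : ℕ, 0 < C ∧ ∀ x t q : ℕ, x₀ ≤ x →
    1 ≤ t → 2 ≤ q → ∑ a ∈ alive 0 t q with x.sqrt < a * q, 1 / (a : ℝ) ≤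
      C * (1 + log t) * (log q ^ 2 / log x ^ 2) := by
  obtain ⟨C₁, hC₁, hfirst⟩ := exists_sum_alive_inv_le
  obtain ⟨C₂, hC₂, hsecond⟩ := exists_sum_alive_sq_div_le
  obtain ⟨R, hR1, hR⟩ := exists_abs_primeLogMean_sub_log_le 0
  refine ⟨256 * C₁ + 16 * C₂, ⌈exp (8 * R)⌉₊, by linarith, fun x t q hx ht hq ↦ ?_⟩
  have hx0 : 0 < x := (Nat.ceil_pos.2 (exp_pos _)).trans_le hx
  have hxR : 8 * R ≤ log x := (le_log_iff_exp_le (by exact_mod_cast hx0)).2 (Nat.ceil_le.1 hx)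
  have hlogx : 0 < log x := by linarith
  have : 0 ≤ log t := log_natCast_nonneg t
  rcases le_or_gt (16 * log q) (log x) with hqx | hqx
  · calc ∑ a ∈ alive 0 t q with x.sqrt < a * q, 1 / (a : ℝ)
        ≤ ∑ a ∈ alive 0 t q with x.sqrt < a * q,
            (16 / log x ^ 2) * ((log a - primeLogMean 0 q) ^ 2 / (a : ℝ)) := by
          refine sum_le_sum fun a ha ↦ ?_
          obtain ⟨hmem, haq⟩ := mem_filter.1 ha
          have hlarge := log_div_four_le_log_sub_primeLogMean hx0 (pos_of_mem_alive hmem) (by lia)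
            (hR q (by lia)) hxR haq hqx
          rw [← mul_div_assoc]
          gcongr
          rw [div_mul_eq_mul_div, le_div_iff₀ (by positivity)]
          nlinarith
      _ ≤ ∑ a ∈ alive 0 t q, (16 / log x ^ 2) * ((log a - primeLogMean 0 q) ^ 2 / (a : ℝ)) :=
          sum_le_sum_of_subset_of_nonneg (filter_subset _ _) fun a _ _ ↦ by positivity
      _ ≤ (16 / log x ^ 2) * (C₂ * (1 + log t) * log q ^ 2) := by
          rw [← mul_sum]
          gcongr
          exact hsecond t q ht hq
      _ = (0 + 16 * C₂) * (1 + log t) * (log q ^ 2 / log x ^ 2) := by ring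
      _ ≤ _ := by gcongr; linarith
  · have hlarge : 1 ≤ 256 * (log q ^ 2 / log x ^ 2) := by
      rw [← mul_div_assoc, le_div_iff₀ (by positivity)]
      nlinarith
    calc ∑ a ∈ alive 0 t q with x.sqrt < a * q, 1 / (a : ℝ) ≤ ∑ a ∈ alive 0 t q, 1 / (a : ℝ) :=
          sum_le_sum_of_subset_of_nonneg (filter_subset _ _) fun a _ _ ↦ by positivity
      _ ≤ C₁ * (1 + log t) * 1 := by rw [mul_one]; exact hfirst t q ht
      _ ≤ C₁ * (1 + log t) * (256 * (log q ^ 2 / log x ^ 2)) := by gcongr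
      _ = (256 * C₁ + 0) * (1 + log t) * (log q ^ 2 / log x ^ 2) := by ring
      _ ≤ _ := by gcongr; linarith

/-- The integers `a * q * b ≤ x` such that `a` is alive at the prime `q`, the product `a * q`
exceeds `√x`, and `b` is squarefree with all prime factors exceeding `q`, where `q` is at most the
upper bound `x / (a * q)` for `b`. -/
noncomputable def roughCompletions (t x : ℕ) : Finset ℕ :=
  (primesIoc 0 x).biUnion fun q ↦ {a ∈ alive 0 t q | x.sqrt < a * q}.biUnion fun a ↦
    if a * q * q ≤ x then (squarefreeRough (x / (a * q)) q).image (a * q * ·) else ∅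

lemma exists_card_image_squarefreeRough_le : ∃ C : ℝ, 0 < C ∧ ∀ x a q : ℕ, 0 < a → 2 ≤ q →
    a * q * q ≤ x → (#((squarefreeRough (x / (a * q)) q).image (a * q * ·)) : ℝ) ≤
      C * x / (q * log q) * (1 / a) := by
  obtain ⟨C, hC, hsieve⟩ := exists_card_squarefreeRough_le
  refine ⟨C, hC, fun x a q ha hq haqq ↦ ?_⟩
  have : 0 < log q := log_pos (by exact_mod_cast hq)
  have hle : q ≤ x / (a * q) := (Nat.le_div_iff_mul_le (by positivity)).2 (by linarith)
  calc (#((squarefreeRough (x / (a * q)) q).image (a * q * ·)) : ℝ)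
      ≤ #(squarefreeRough (x / (a * q)) q) := by exact_mod_cast card_image_le
    _ ≤ C * (x / (a * q) : ℕ) / log q := hsieve _ q hq hle
    _ ≤ C * (x / (a * q : ℕ)) / log q := by gcongr; exact Nat.cast_div_le
    _ = C * x / (q * log q) * (1 / a) := by push_cast; field_simp

lemma exists_card_roughCompletions_le : ∃ C : ℝ, ∃ x₀ : ℕ, 0 < C ∧ ∀ x t : ℕ, x₀ ≤ x → 1 ≤ t →
    (#(roughCompletions t x) : ℝ) ≤ C * x * (1 + log t) / log x := by
  obtain ⟨C₁, hC₁, himage⟩ := exists_card_image_squarefreeRough_le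
  obtain ⟨C₂, x₀, hC₂, hsum⟩ := exists_sum_alive_inv_of_sqrt_lt_le
  obtain ⟨R, hR1, hR⟩ := mertens_first
  refine ⟨C₁ * C₂ * (1 + 2 * R), x₀ + 2, by positivity, fun x t hx ht ↦ ?_⟩
  have : 0 ≤ log t := log_natCast_nonneg t
  have hlog : 1 / 2 ≤ log x := by
    have hlog2 := log_le_log (by norm_num) (show (2 : ℝ) ≤ x by exact_mod_cast (by lia : 2 ≤ x))
    linarith [log_two_gt_d9]
  have hprime : ∀ q ∈ primesIoc 0 x, 2 ≤ q ∧ 0 < log q := fun q hq ↦ by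
    have hq2 := (mem_primesIoc.1 hq).2.two_le
    exact ⟨hq2, log_pos (by exact_mod_cast hq2)⟩
  calc (#(roughCompletions t x) : ℝ)
      ≤ ∑ q ∈ primesIoc 0 x, ∑ a ∈ alive 0 t q with x.sqrt < a * q,
          (#(if a * q * q ≤ x then (squarefreeRough (x / (a * q)) q).image (a * q * ·) else ∅) :
            ℝ) := by
        exact_mod_cast card_biUnion_le.trans (sum_le_sum fun q _ ↦ card_biUnion_le)
    _ ≤ ∑ q ∈ primesIoc 0 x, C₁ * x / (q * log q) *
          ∑ a ∈ alive 0 t q with x.sqrt < a * q, 1 / (a : ℝ) := by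
        simp only [mul_sum]
        refine sum_le_sum fun q hq ↦ sum_le_sum fun a ha ↦ ?_
        obtain ⟨hq2, _⟩ := hprime q hq
        split_ifs with hle
        · exact himage x a q (pos_of_mem_alive (mem_filter.1 ha).1) hq2 hle
        · rw [card_empty, Nat.cast_zero]
          positivity
    _ ≤ ∑ q ∈ primesIoc 0 x, C₁ * x / (q * log q) *
          (C₂ * (1 + log t) * (log q ^ 2 / log x ^ 2)) := by
        refine sum_le_sum fun q hq ↦ ?_
        obtain ⟨hq2, _⟩ := hprime q hq
        gcongr
        exact hsum x t q (by lia) ht hq2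
    _ = (C₁ * C₂ * x * (1 + log t) / log x ^ 2) * ∑ q ∈ primesIoc 0 x, log q / q := by
        rw [mul_sum]
        refine sum_congr rfl fun q hq ↦ ?_
        obtain ⟨_, _⟩ := hprime q hq
        field_simp
    _ ≤ (C₁ * C₂ * x * (1 + log t) / log x ^ 2) * ((1 + 2 * R) * log x) := by
        gcongr
        nlinarith [(abs_le.1 (hR x (by lia))).2]
    _ = C₁ * C₂ * (1 + 2 * R) * x * (1 + log t) / log x := by field_simp

/-- The integers `a * q ≤ x` with `a ≤ √x` alive at `y` and `q` prime. -/
noncomputable def primeCompletions (t x y : ℕ) : Finset ℕ :=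
  {a ∈ alive 0 t y | a ≤ x.sqrt}.biUnion fun a ↦ (primesIoc 0 (x / a)).image (a * ·)

lemma log_le_four_mul_log_sqrt {x : ℕ} (hx : 4 ≤ x) : log x ≤ 4 * log x.sqrt :=
  (log_le_log (by exact_mod_cast (by lia : 0 < x)) (by linarith)).trans
    (log_add_one_le_four_mul_log_sqrt hx)

lemma exists_card_image_primesIoc_le : ∃ C : ℝ, 0 < C ∧ ∀ x a : ℕ, 4 ≤ x → 0 < a → a ≤ x.sqrt →
    (#((primesIoc 0 (x / a)).image (a * ·)) : ℝ) ≤ C * x / log x * (1 / a) := by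
  obtain ⟨C, hC, hpi⟩ := exists_card_primesIoc_zero_le
  refine ⟨4 * C, by positivity, fun x a hx ha hax ↦ ?_⟩
  have hsqrt : 2 ≤ x.sqrt := Nat.le_sqrt.2 hx
  have hle : x.sqrt ≤ x / a :=
    (Nat.le_div_iff_mul_le ha).2 ((Nat.mul_le_mul_left _ hax).trans x.sqrt_le)
  have hlog : log x.sqrt ≤ log (x / a : ℕ) :=
    log_le_log (by positivity) (by exact_mod_cast hle)
  have : 0 < log x := log_pos (by exact_mod_cast (by lia : 1 < x))
  calc (#((primesIoc 0 (x / a)).image (a * ·)) : ℝ) ≤ #(primesIoc 0 (x / a)) := by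
        exact_mod_cast card_image_le
    _ ≤ C * (x / a : ℕ) / log (x / a : ℕ) := hpi _ (by lia)
    _ ≤ C * (x / a) / (log x / 4) := by
        gcongr
        · exact Nat.cast_div_le
        · linarith [log_le_four_mul_log_sqrt hx]
    _ = 4 * C * x / log x * (1 / a) := by field_simp

lemma exists_card_primeCompletions_le : ∃ C : ℝ, 0 < C ∧ ∀ x t y : ℕ, 4 ≤ x → 1 ≤ t →
    (#(primeCompletions t x y) : ℝ) ≤ C * x * (1 + log t) / log x := by
  obtain ⟨C₁, hC₁, hsum⟩ := exists_sum_alive_inv_le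
  obtain ⟨C₂, hC₂, himage⟩ := exists_card_image_primesIoc_le
  refine ⟨C₂ * C₁, by positivity, fun x t y hx ht ↦ ?_⟩
  have : 0 < log x := log_pos (by exact_mod_cast (by lia : 1 < x))
  calc (#(primeCompletions t x y) : ℝ)
      ≤ ∑ a ∈ alive 0 t y with a ≤ x.sqrt, (#((primesIoc 0 (x / a)).image (a * ·)) : ℝ) := by
        exact_mod_cast card_biUnion_le
    _ ≤ ∑ a ∈ alive 0 t y with a ≤ x.sqrt, C₂ * x / log x * (1 / (a : ℝ)) :=
        sum_le_sum fun a ha ↦ himage x a hx (pos_of_mem_alive (mem_filter.1 ha).1)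
          (mem_filter.1 ha).2
    _ ≤ ∑ a ∈ alive 0 t y, C₂ * x / log x * (1 / (a : ℝ)) :=
        sum_le_sum_of_subset_of_nonneg (filter_subset _ _) fun a _ _ ↦ by positivity
    _ ≤ C₂ * x / log x * (C₁ * (1 + log t)) := by
        rw [← mul_sum]
        gcongr
        exact hsum t y ht
    _ = C₂ * C₁ * x * (1 + log t) / log x := by ring

lemma le_of_mul_self_le_mul_sqrt {p s t x y : ℕ} (hp : p * p ≤ t * s) (hs : s * s ≤ x)
    (hy : x < (y + 1) ^ 3) (ht : t ^ 6 ≤ x) : p ≤ y := by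
  by_contra! hyp
  have hp3 : (y + 1) ^ 3 ≤ p ^ 3 := Nat.pow_le_pow_left hyp 3
  have hsq : p * p ^ 3 ≤ t * t * p ^ 3 :=
    calc p * p ^ 3 = (p * p) * (p * p) := by ring
      _ ≤ (t * s) * (t * s) := Nat.mul_le_mul hp hp
      _ = t * t * (s * s) := by ring
      _ ≤ t * t * p ^ 3 := Nat.mul_le_mul_left _ (by lia)
  have hpt : p ≤ t * t := Nat.le_of_mul_le_mul_right hsq (by lia)
  have ht6 : p ^ 3 ≤ t ^ 6 := (Nat.pow_le_pow_left hpt 3).trans_eq (by ring)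
  lia

lemma mem_alive_of_mem_alive_of_le_sqrt {t x y q a : ℕ} (ha : a ∈ alive 0 t q) (hax : a ≤ x.sqrt)
    (hgt : x < a * q * q) (hy : y ^ 3 ≤ x) (hxy : x < (y + 1) ^ 3) (ht : t ^ 6 ≤ x) :
    a ∈ alive 0 t y := by
  obtain ⟨hmem, hqa⟩ := mem_filter.1 ha
  obtain ⟨hsq, _, hdense⟩ := mem_denseSquarefree.1 hmem
  refine mem_filter.2 ⟨mem_denseSquarefree.2 ⟨hsq, fun p hp hpa ↦ ⟨hp.pos, ?_⟩, hdense⟩, ?_⟩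
  · have hpp : p * p ≤ t * x.sqrt :=
      (hdense.mul_self_le (pos_of_mem_alive ha) hp hpa).trans (Nat.mul_le_mul_left _ hax)
    exact le_of_mul_self_le_mul_sqrt hpp x.sqrt_le hxy ht
  · by_contra! hlt
    have ht0 : 0 < t := Nat.pos_of_ne_zero fun h ↦ by simp_all
    have hcube : a * q * q ≤ (t * a) ^ 3 :=
      calc a * q * q ≤ a * (t * a) * (t * a) :=
            Nat.mul_le_mul (Nat.mul_le_mul_left _ hqa) hqa
        _ ≤ t * (a * (t * a) * (t * a)) := Nat.le_mul_of_pos_left _ ht0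
        _ = (t * a) ^ 3 := by ring
    have hycube : (t * a) ^ 3 ≤ y ^ 3 := Nat.pow_le_pow_left hlt.le 3
    lia

-- Write `n = a * q * b`, where `q` is the prime at which the smooth part of `n` crosses `√x`.
lemma denseUpTo_subset {t x y : ℕ} (hx : 1 ≤ x) (hy : y ^ 3 ≤ x) (hxy : x < (y + 1) ^ 3)
    (ht : t ^ 6 ≤ x) :
    denseUpTo t x ⊆ Icc 1 x.sqrt ∪ (roughCompletions t x ∪ primeCompletions t x y) := by
  intro n hn
  obtain ⟨⟨hn1, hnx⟩, hsq, hdense⟩ := mem_denseUpTo.1 hn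
  rcases le_or_gt n x.sqrt with hle | hlt
  · exact mem_union_left _ (mem_Icc.2 ⟨hn1, hle⟩)
  obtain ⟨q, hq, hqn, hsmall, hlarge⟩ := exists_smoothPart_le_lt (Nat.sqrt_pos.2 hx) hlt
  have hprod := smoothPart_mul_roughPart hsq.ne_zero (q + 1)
  rw [smoothPart_succ_of_dvd hsq hq hqn] at hlarge hprod
  have hrough (p : ℕ) (hp : p.Prime) (hpb : p ∣ roughPart n (q + 1)) : q < p :=
    le_of_dvd_roughPart hp hpb
  have halive := hdense.smoothPart_mem_alive hsq hq hqn
  have ha0 := smoothPart_pos n q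
  have hb0 := roughPart_pos n (q + 1)
  generalize smoothPart n q = a at *
  generalize roughPart n (q + 1) = b at *
  subst hprod
  refine mem_union_right _ ?_
  rcases le_or_gt (a * q * q) x with hle | hgt
  · refine mem_union_left _ (mem_biUnion.2 ⟨q, mem_primesIoc.2 ⟨⟨hq.pos, ?_⟩, hq⟩,
      mem_biUnion.2 ⟨a, mem_filter.2 ⟨halive, hlarge⟩, ?_⟩⟩)
    · exact (Nat.le_of_dvd hn1 hqn).trans hnx
    · rw [if_pos hle, mem_image]
      refine ⟨b, mem_squarefreeRough.2 ⟨⟨hb0, ?_⟩, hsq.of_mul_right, hrough⟩, rfl⟩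
      rw [Nat.le_div_iff_mul_le (Nat.mul_pos ha0 hq.pos)]
      linarith
  · obtain rfl : b = 1 := by
      by_contra hb
      have hqb : q < b := (hrough _ (Nat.minFac_prime hb) b.minFac_dvd).trans_le (Nat.minFac_le hb0)
      have hle : a * q * q ≤ a * q * b := Nat.mul_le_mul_left _ hqb.le
      lia
    rw [mul_one] at hnx ⊢
    refine mem_union_right _ (mem_biUnion.2 ⟨a, mem_filter.2
      ⟨mem_alive_of_mem_alive_of_le_sqrt halive hsmall hgt hy hxy ht, hsmall⟩,
      mem_image.2 ⟨q, mem_primesIoc.2 ⟨⟨hq.pos, ?_⟩, hq⟩, rfl⟩⟩)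
    rw [Nat.le_div_iff_mul_le ha0]
    linarith

lemma sqrt_mul_log_le {x : ℕ} (hx : 4 ≤ x) : x.sqrt * log x ≤ 4 * x := by
  have hsqrt : 0 < x.sqrt := Nat.sqrt_pos.2 (by lia)
  have hlog : log x.sqrt ≤ x.sqrt :=
    (log_le_sub_one_of_pos (by exact_mod_cast hsqrt)).trans (by linarith)
  have hsq : (x.sqrt * x.sqrt : ℝ) ≤ x := by exact_mod_cast x.sqrt_le
  nlinarith [log_le_four_mul_log_sqrt hx]

lemma exists_card_denseUpTo_mul_log_le_of_pow_le : ∃ C : ℝ, ∃ x₀ : ℕ, 0 < C ∧ ∀ x t : ℕ, x₀ ≤ x →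
    1 ≤ t → t ^ 6 ≤ x → #(denseUpTo t x) * log x ≤ C * x * (1 + log t) := by
  obtain ⟨C₁, x₁, hC₁, hrough⟩ := exists_card_roughCompletions_le
  obtain ⟨C₂, hC₂, hprime⟩ := exists_card_primeCompletions_le
  refine ⟨4 + C₁ + C₂, x₁ + 4, by positivity, fun x t hx ht htx ↦ ?_⟩
  set y := Nat.nthRoot 3 x
  have hcard : (#(denseUpTo t x) : ℝ) ≤
      x.sqrt + (#(roughCompletions t x) + #(primeCompletions t x y)) := by
    have hsub := card_le_card (denseUpTo_subset (y := y) (by lia)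
      (Nat.pow_nthRoot_le (.inl three_ne_zero)) (Nat.lt_pow_nthRoot_add_one three_ne_zero x) htx)
    have hunion := hsub.trans (card_union_le _ _)
    rw [Nat.card_Icc, Nat.add_sub_cancel] at hunion
    exact_mod_cast hunion.trans (Nat.add_le_add_left (card_union_le _ _) _)
  have hlogx : 0 < log x := log_pos (by exact_mod_cast (by lia : 1 < x))
  have hlogt : 0 ≤ log t := log_natCast_nonneg t
  calc #(denseUpTo t x) * log x
      ≤ (x.sqrt + (#(roughCompletions t x) + #(primeCompletions t x y))) * log x := by gcongr
    _ = x.sqrt * log x + #(roughCompletions t x) * log x + #(primeCompletions t x y) * log x := by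
        ring
    _ ≤ 4 * x + C₁ * x * (1 + log t) + C₂ * x * (1 + log t) :=
        add_le_add_three (sqrt_mul_log_le (by lia))
          ((le_div_iff₀ hlogx).1 (hrough x t (by lia) ht))
          ((le_div_iff₀ hlogx).1 (hprime x t y (by lia) ht))
    _ ≤ (4 + C₁ + C₂) * x * (1 + log t) := by
        linarith [mul_nonneg x.cast_nonneg hlogt]

lemma exists_card_denseUpTo_le : ∃ C : ℝ, 1 ≤ C ∧ ∀ x t : ℕ, 2 ≤ x → 1 ≤ t →
    (#(denseUpTo t x) : ℝ) ≤ C * x * (1 + log t) / log x := by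
  obtain ⟨C, x₀, hC, hlarge⟩ := exists_card_denseUpTo_mul_log_le_of_pow_le
  refine ⟨C + 6 + log x₀, by linarith [log_natCast_nonneg x₀], fun x t hx ht ↦ ?_⟩
  have hlogx : 0 < log x := log_pos (by exact_mod_cast hx)
  have hx0 : (0 : ℝ) < x := by exact_mod_cast (by lia : 0 < x)
  have : 0 ≤ log t := log_natCast_nonneg t
  have : 0 ≤ log x₀ := log_natCast_nonneg x₀
  have htrivial : (#(denseUpTo t x) : ℝ) ≤ x := by exact_mod_cast card_denseUpTo_le t x
  rw [le_div_iff₀ hlogx]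
  rcases lt_or_ge x x₀ with hsmall | hxx₀
  · calc #(denseUpTo t x) * log x ≤ x * log x₀ := by gcongr
      _ = (0 + log x₀) * x * (1 + 0) := by ring
      _ ≤ (C + 6 + log x₀) * x * (1 + log t) := by gcongr; positivity
  rcases lt_or_ge x (t ^ 6) with htx | htx
  · have hlog : log x ≤ 6 * log t := by
      rw [← Nat.cast_ofNat, ← log_pow]
      exact log_le_log hx0 (by exact_mod_cast htx.le)
    calc #(denseUpTo t x) * log x ≤ x * (6 * log t) := by gcongr
      _ = (0 + 6 + 0) * x * (0 + log t) := by ring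
      _ ≤ (C + 6 + log x₀) * x * (1 + log t) := by gcongr; exact zero_le_one
  · calc #(denseUpTo t x) * log x ≤ C * x * (1 + log t) := hlarge x t hxx₀ ht htx
      _ = (C + 0 + 0) * x * (1 + log t) := by ring
      _ ≤ (C + 6 + log x₀) * x * (1 + log t) := by gcongr; norm_num

end DenseUpperBound

section SchinzelSet

open Finset Real

open Classical in
/-- The members of the set `𝒜(N)`, described by the smooth parts of an integer instead of the
Schinzel–Szekeres function: if `p` is a prime factor of `n`, then the product of the prime factors
from the largest down to `p` is `n / smoothPart n p`. -/
noncomputable def schinzelSet (N : ℕ) : Finset ℕ :=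
  {n ∈ Icc 1 N | ∀ p : ℕ, p.Prime → p ∣ n → p * n ≤ N * smoothPart n p}

lemma mem_schinzelSet {N n : ℕ} :
    n ∈ schinzelSet N ↔
      (1 ≤ n ∧ n ≤ N) ∧ ∀ p : ℕ, p.Prime → p ∣ n → p * n ≤ N * smoothPart n p := by
  simp [schinzelSet]

lemma card_schinzelSet_le (N : ℕ) : #(schinzelSet N) ≤ N :=
  (card_le_card fun _ hn ↦ mem_Icc.2 (mem_schinzelSet.1 hn).1).trans
    (by rw [Nat.card_Icc, Nat.add_sub_cancel])

lemma isDivisorDense_of_sq_mul_mem_schinzelSet {N t m s : ℕ} (h : m ^ 2 * s ∈ schinzelSet N)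
    (ht : N ≤ t * s) : IsDivisorDense t s := by
  obtain ⟨⟨hpos, -⟩, hdense⟩ := mem_schinzelSet.1 h
  have hm : 0 < m ^ 2 := Nat.pos_of_mul_pos_right hpos
  have hs : 0 < s := Nat.pos_of_mul_pos_left hpos
  intro p hp hps
  have hp1 := hdense p hp (hps.mul_left _)
  rw [smoothPart_mul hm.ne' hs.ne'] at hp1
  have hp2 : m ^ 2 * (p * s) ≤ m ^ 2 * (N * smoothPart s p) :=
    calc m ^ 2 * (p * s) = p * (m ^ 2 * s) := by ring
      _ ≤ N * (smoothPart (m ^ 2) p * smoothPart s p) := hp1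
      _ ≤ N * (m ^ 2 * smoothPart s p) := by
          gcongr
          exact Nat.le_of_dvd hm (smoothPart_dvd hm.ne' p)
      _ = m ^ 2 * (N * smoothPart s p) := by ring
  refine Nat.le_of_mul_le_mul_right ?_ hs
  calc p * s ≤ N * smoothPart s p := Nat.le_of_mul_le_mul_left hp2 hm
    _ ≤ t * s * smoothPart s p := Nat.mul_le_mul_right _ ht
    _ = t * smoothPart s p * s := by ring

-- Write `n = m ^ 2 * s` with `s` squarefree and sort by the dyadic range of `N / s`.
lemma schinzelSet_subset (N : ℕ) :
    schinzelSet N ⊆ (range N).biUnion fun j ↦ (denseUpTo (2 ^ (j + 1)) (N / 2 ^ j)).biUnion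
      fun s ↦ (Icc 1 (2 ^ (j + 1)).sqrt).image (· ^ 2 * s) := by
  intro n hn
  obtain ⟨⟨hn1, hnN⟩, -⟩ := mem_schinzelSet.1 hn
  obtain ⟨s, m, rfl, hsq⟩ := Nat.sq_mul_squarefree n
  have hm : 0 < m := Nat.pos_of_ne_zero (by rintro rfl; simp at hn1)
  have hs : 0 < s := Nat.pos_of_mul_pos_left hn1
  have hmN : m ^ 2 ≤ N / s := (Nat.le_div_iff_mul_le hs).2 hnN
  set j := Nat.log 2 (N / s)
  have hjN : 2 ^ j ≤ N / s := Nat.pow_log_le_self 2 ((pow_pos hm 2).trans_le hmN).ne'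
  have hNj : N / s < 2 ^ (j + 1) := Nat.lt_pow_succ_log_self one_lt_two _
  have hj : j < N := Nat.lt_two_pow_self.trans_le (hjN.trans (Nat.div_le_self N s))
  have hsN : s ≤ N / 2 ^ j := by
    rw [Nat.le_div_iff_mul_le (by positivity), mul_comm]
    exact (Nat.le_div_iff_mul_le hs).1 hjN
  have hdense := isDivisorDense_of_sq_mul_mem_schinzelSet hn ((Nat.div_lt_iff_lt_mul hs).1 hNj).le
  have hmj : m ≤ (2 ^ (j + 1)).sqrt := Nat.le_sqrt'.2 (hmN.trans hNj.le)
  exact mem_biUnion.2 ⟨j, mem_range.2 hj, mem_biUnion.2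
    ⟨s, mem_denseUpTo.2 ⟨⟨hs, hsN⟩, hsq, hdense⟩, mem_image.2 ⟨m, mem_Icc.2 ⟨hm, hmj⟩, rfl⟩⟩⟩

lemma card_schinzelSet_le_sum (N : ℕ) :
    #(schinzelSet N) ≤ ∑ j ∈ range N,
      #(denseUpTo (2 ^ (j + 1)) (N / 2 ^ j)) * (2 ^ (j + 1)).sqrt := by
  refine (card_le_card (schinzelSet_subset N)).trans (card_biUnion_le.trans ?_)
  refine sum_le_sum fun j _ ↦ card_biUnion_le_card_mul _ _ _ fun s _ ↦ ?_
  simpa using card_image_le (s := Icc 1 (2 ^ (j + 1)).sqrt) (f := (· ^ 2 * s))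

lemma exists_card_denseUpTo_two_pow_le : ∃ C : ℝ, 0 < C ∧ ∀ N j : ℕ, 4 ≤ N →
    (#(denseUpTo (2 ^ (j + 1)) (N / 2 ^ j)) : ℝ) ≤ C * N / log N * ((j + 2) / 2 ^ j) := by
  obtain ⟨C, hC, hcard⟩ := exists_card_denseUpTo_le
  refine ⟨4 * C, by linarith, fun N j hN ↦ ?_⟩
  have hlogN : 0 < log N := log_pos (by exact_mod_cast (by lia : 1 < N))
  have hdiv : ((N / 2 ^ j : ℕ) : ℝ) ≤ N / 2 ^ j := by exact_mod_cast Nat.cast_div_le (α := ℝ)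
  have hlog2 : log 2 ≤ 1 := by linarith [log_two_lt_d9]
  rcases le_or_gt (2 ^ j) N.sqrt with hj | hj
  · have hsqrt : 2 ≤ N.sqrt := Nat.le_sqrt.2 hN
    have hle : N.sqrt ≤ N / 2 ^ j :=
      (Nat.le_div_iff_mul_le (by positivity)).2 ((Nat.mul_le_mul_left _ hj).trans N.sqrt_le)
    have hlog : log N / 4 ≤ log (N / 2 ^ j : ℕ) := by
      have hlog' : log N.sqrt ≤ log (N / 2 ^ j : ℕ) :=
        log_le_log (by positivity) (by exact_mod_cast hle)
      linarith [log_le_four_mul_log_sqrt hN]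
    have hpow : log (2 ^ (j + 1) : ℕ) ≤ j + 1 := by
      push_cast
      rw [log_pow]
      push_cast
      exact mul_le_of_le_one_right (by positivity) hlog2
    calc (#(denseUpTo (2 ^ (j + 1)) (N / 2 ^ j)) : ℝ)
        ≤ C * (N / 2 ^ j : ℕ) * (1 + log (2 ^ (j + 1) : ℕ)) / log (N / 2 ^ j : ℕ) :=
          hcard _ _ (by lia) Nat.one_le_two_pow
      _ ≤ C * (N / 2 ^ j) * (1 + (j + 1)) / (log N / 4) := by gcongr
      _ = 4 * C * N / log N * ((j + 2) / 2 ^ j) := by field_simp; ring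
  · have hNj : (N : ℝ) ≤ 2 ^ (j * 2) := by
      rw [pow_mul]
      exact_mod_cast (Nat.sqrt_lt'.1 hj).le
    have hlog : log N ≤ 2 * j := by
      have hlog' := log_le_log (by positivity) hNj
      rw [log_pow] at hlog'
      push_cast at hlog'
      nlinarith [j.cast_nonneg (α := ℝ)]
    calc (#(denseUpTo (2 ^ (j + 1)) (N / 2 ^ j)) : ℝ) ≤ N / 2 ^ j * 1 := by
          rw [mul_one]
          exact (Nat.cast_le.2 (card_denseUpTo_le _ _)).trans hdiv
      _ ≤ N / 2 ^ j * (2 * j / log N) := by gcongr; rwa [one_le_div hlogN]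
      _ = 2 * N / log N * (j / 2 ^ j) := by field_simp
      _ ≤ 4 * C * N / log N * ((j + 2) / 2 ^ j) := by gcongr <;> linarith

lemma mul_sqrt_two_pow_le (j : ℕ) :
    ((j + 2) / 2 ^ j * (2 ^ (j + 1)).sqrt : ℝ) ≤ 24 * (7 / 8) ^ j := by
  have hsqrt : ((2 ^ (j + 1)).sqrt : ℝ) ≤ 2 * (3 / 2) ^ j := by
    refine le_of_sq_le_sq ?_ (by positivity)
    calc ((2 ^ (j + 1)).sqrt : ℝ) ^ 2 ≤ 2 ^ (j + 1) := by
          exact_mod_cast Nat.sqrt_le' (2 ^ (j + 1))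
      _ = 2 * 2 ^ j := pow_succ' _ _
      _ ≤ 4 * (9 / 4) ^ j := by gcongr <;> norm_num
      _ = (2 * (3 / 2) ^ j) ^ 2 := by rw [mul_pow, ← pow_mul, mul_comm j, pow_mul]; norm_num
  have hlin : (j + 2 : ℝ) ≤ 12 * (7 / 6) ^ j := by
    have hbernoulli := one_add_mul_le_pow (show (-2 : ℝ) ≤ 1 / 6 by norm_num) j
    norm_num at hbernoulli
    linarith [j.cast_nonneg (α := ℝ)]
  calc ((j + 2) / 2 ^ j * (2 ^ (j + 1)).sqrt : ℝ)
      ≤ 12 * (7 / 6) ^ j / 2 ^ j * (2 * (3 / 2) ^ j) := by gcongr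
    _ = 24 * ((7 / 6) ^ j / 2 ^ j * (3 / 2) ^ j) := by ring
    _ = 24 * (7 / 8) ^ j := by rw [← div_pow, ← mul_pow]; norm_num

lemma exists_card_schinzelSet_le : ∃ K : ℝ, 0 < K ∧ ∀ N : ℕ, 2 ≤ N →
    (#(schinzelSet N) : ℝ) ≤ K * N / log N := by
  obtain ⟨C, hC, hcard⟩ := exists_card_denseUpTo_two_pow_le
  refine ⟨192 * C + 2, by linarith, fun N hN ↦ ?_⟩
  have hlogN : 0 < log N := log_pos (by exact_mod_cast hN)
  rcases lt_or_ge N 4 with hN4 | hN4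
  · have hlog : log N ≤ 2 := by
      have hN3 : (N : ℝ) ≤ 3 := by exact_mod_cast Nat.le_of_lt_succ hN4
      linarith [log_le_sub_one_of_pos (show (0 : ℝ) < N by positivity)]
    calc (#(schinzelSet N) : ℝ) ≤ N := by exact_mod_cast card_schinzelSet_le N
      _ ≤ (0 + 2) * N / log N := by rw [le_div_iff₀ hlogN]; nlinarith
      _ ≤ (192 * C + 2) * N / log N := by gcongr; linarith
  · have hgeom : ∑ j ∈ range N, (7 / 8 : ℝ) ^ j ≤ 8 := by
      rw [geom_sum_eq (by norm_num), div_le_iff_of_neg (by norm_num)]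
      linarith [show (0 : ℝ) ≤ (7 / 8) ^ N by positivity]
    calc (#(schinzelSet N) : ℝ)
        ≤ ∑ j ∈ range N, (#(denseUpTo (2 ^ (j + 1)) (N / 2 ^ j)) : ℝ) * (2 ^ (j + 1)).sqrt := by
          exact_mod_cast card_schinzelSet_le_sum N
      _ ≤ ∑ j ∈ range N, C * N / log N * ((j + 2) / 2 ^ j) * (2 ^ (j + 1)).sqrt := by
          gcongr with j
          exact hcard N j hN4
      _ ≤ ∑ j ∈ range N, C * N / log N * (24 * (7 / 8) ^ j) := by
          refine sum_le_sum fun j _ ↦ ?_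
          rw [mul_assoc]
          exact mul_le_mul_of_nonneg_left (mul_sqrt_two_pow_le j) (by positivity)
      _ = C * N / log N * 24 * ∑ j ∈ range N, (7 / 8 : ℝ) ^ j := by
          rw [mul_sum]
          simp only [mul_assoc]
      _ ≤ C * N / log N * 24 * 8 := by gcongr
      _ = (192 * C + 0) * N / log N := by ring
      _ ≤ (192 * C + 2) * N / log N := by gcongr; norm_num

end SchinzelSet

section SumsOverDenseIntegers

open Filter Finset Real

lemma eventually_le_log_natCast (B : ℝ) : ∀ᶠ n : ℕ in atTop, B ≤ log n :=
  (tendsto_log_atTop.comp tendsto_natCast_atTop_atTop).eventually_ge_atTop B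

lemma mertensMean_ite (w y : ℕ) (s : Finset ℕ) (G : ℕ → Prop) [DecidablePred G] :
    mertensMean w y s (fun a ↦ if G a then 1 else 0) =
      (∑ a ∈ s with G a, 1 / (a : ℝ)) / mertensProd w y := by
  simp only [mertensMean, sum_filter, ite_div, zero_div]

lemma le_add_sq_add_ite {f A B : ℝ} (hA : 0 ≤ A) (hB : 0 < B) :
    f ≤ A * 1 + (1 / B * f ^ 2 + B * if A ≤ f ∧ f ≤ B then 1 else 0) := by
  have hsq : 0 ≤ 1 / B * f ^ 2 := by positivity
  split_ifs with h
  · linarith [h.2]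
  rcases lt_or_ge f A with hfA | hAf
  · linarith
  · have hBf : B < f := not_le.1 fun hfB ↦ h ⟨hAf, hfB⟩
    have hle : f ≤ 1 / B * f ^ 2 := by
      rw [one_div_mul_eq_div, le_div_iff₀ hB]
      nlinarith
    linarith

lemma half_le_mul_mertensMean_ite {w y : ℕ} {s : Finset ℕ} {f : ℕ → ℝ} {z A B : ℝ} (hA : 0 ≤ A)
    (hB : 0 < B) (hmean : z ≤ mertensMean w y s f)
    (hone : A * mertensMean w y s (fun _ ↦ 1) ≤ z / 4)
    (hsq : 1 / B * mertensMean w y s (fun a ↦ f a ^ 2) ≤ z / 4) :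
    z / 2 ≤ B * mertensMean w y s (fun a ↦ if A ≤ f a ∧ f a ≤ B then 1 else 0) := by
  have hle := mertensMean_mono (w := w) (y := y) (s := s) fun a _ ↦
    le_add_sq_add_ite (f := f a) hA hB
  rw [mertensMean_add, mertensMean_add, mertensMean_const_mul, mertensMean_const_mul,
    mertensMean_const_mul] at hle
  linarith

lemma exists_le_aliveMean_log_sub_primeLogMean (w : ℕ) : ∃ t : ℕ, ∃ z : ℝ, 1 ≤ t ∧ 0 < z ∧
    ∀ y : ℕ, t < y → z ≤ aliveMean w t y (fun a ↦ log a - primeLogMean w y) := by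
  obtain ⟨R, _, hR⟩ := exists_abs_primeLogMean_sub_log_le w
  obtain ⟨q, hwq, hq⟩ := Nat.exists_infinite_primes (w + 1)
  obtain ⟨t, hRt, hqt⟩ := ((eventually_le_log_natCast R).and (eventually_ge_atTop q)).exists
  have ht : 1 ≤ t := hq.one_lt.le.trans hqt
  have hV : 0 < primeLogMean w t := by
    refine sum_pos' (fun p _ ↦ div_nonneg (log_natCast_nonneg p) (by positivity))
      ⟨q, mem_primesIoc.2 ⟨⟨hwq, hqt⟩, hq⟩, ?_⟩
    exact div_pos (log_pos (by exact_mod_cast hq.one_lt)) (by positivity)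
  exact ⟨t, _, ht, div_pos hV (mertensProd_pos w t), fun y hy ↦
    primeLogMean_div_mertensProd_le_aliveMean ht hR hRt hy⟩

-- The mean of `log a - primeLogMean w y` is bounded below while its second moment is `O(log y)` and
-- the total mass is `O(1 / log y)`, so it must be of exact order `log y` on a positive proportion.
lemma exists_sum_alive_inv_ge (w : ℕ) : ∃ t : ℕ, ∃ η B c : ℝ, 1 ≤ t ∧ 0 < η ∧ 0 < c ∧
    ∀ᶠ y : ℕ in atTop, c ≤ ∑ a ∈ alive w t y with
      η * log y ≤ log (a : ℕ) - primeLogMean w y ∧ log (a : ℕ) - primeLogMean w y ≤ B * log y,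
      1 / (a : ℝ) := by
  obtain ⟨t, z, ht, hz, hmean⟩ := exists_le_aliveMean_log_sub_primeLogMean w
  obtain ⟨C₁, hC₁, hone⟩ := exists_aliveMean_one_mul_log_le w
  obtain ⟨C₂, hC₂, hsq⟩ := exists_aliveMean_sq_le w
  obtain ⟨c, _, hc, _, hprod⟩ := exists_mertensProd_bounds
  have : 0 ≤ log t := log_natCast_nonneg t
  set P₁ := C₁ * (1 + log t)
  set P₂ := C₂ * (1 + log t)
  have hP₁ : 0 < P₁ := by positivity
  have hP₂ : 0 < P₂ := by positivity
  have hw0 := mertensProd_pos 0 w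
  set B := 4 * P₂ / z with hB
  have : 0 < B := by positivity
  refine ⟨t, z / (4 * P₁), B, z * c / (2 * B * mertensProd 0 w), ht, by positivity, by positivity,
    ?_⟩
  filter_upwards [eventually_gt_atTop t, eventually_ge_atTop (w + 2)] with y hty hwy
  have hlog : 0 < log y := log_pos (by exact_mod_cast (by lia : 1 < y))
  have hhalf := half_le_mul_mertensMean_ite (A := z / (4 * P₁) * log y) (B := B * log y)
    (by positivity) (by positivity) (hmean y hty) ?_ ?_
  · rw [mertensMean_ite, mul_div_assoc', le_div_iff₀ (mertensProd_pos w y)] at hhalf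
    set S := Finset.sum _ fun a : ℕ ↦ 1 / (a : ℝ)
    have hlower := (hprod y (by lia)).1
    rw [← mertensProd_mul_mertensProd w.zero_le (by lia : w ≤ y)] at hlower
    rw [div_le_iff₀ (by positivity)]
    refine le_of_mul_le_mul_right ?_ hlog
    calc z * c * log y = z * (c * log y) := mul_assoc _ _ _
      _ ≤ z * (mertensProd 0 w * mertensProd w y) := by gcongr
      _ = 2 * mertensProd 0 w * (z / 2 * mertensProd w y) := by ring
      _ ≤ 2 * mertensProd 0 w * (B * log y * S) := by gcongr
      _ = S * (2 * B * mertensProd 0 w) * log y := by ring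
  · have hnonneg : 0 ≤ aliveMean w t y (fun _ ↦ 1) := mertensMean_nonneg fun _ _ ↦ zero_le_one
    have hlog_le : log y ≤ log (y + 1) := log_le_log (by exact_mod_cast (by lia : 0 < y)) (by simp)
    calc z / (4 * P₁) * log y * aliveMean w t y (fun _ ↦ 1)
        ≤ z / (4 * P₁) * log (y + 1) * aliveMean w t y (fun _ ↦ 1) := by gcongr
      _ = z / (4 * P₁) * (aliveMean w t y (fun _ ↦ 1) * log (y + 1)) := by ring
      _ ≤ z / (4 * P₁) * P₁ := by gcongr; exact hone t y ht
      _ = z / 4 := by field_simp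
  · calc 1 / (B * log y) * aliveMean w t y (fun a ↦ (log a - primeLogMean w y) ^ 2)
        ≤ 1 / (B * log y) * (P₂ * log y) := by gcongr; exact hsq t y ht (by lia)
      _ = z / 4 := by rw [hB]; field_simp

lemma pow_le_pow_of_mul_log_le {a b m n : ℕ} (ha : 0 < a) (hb : 0 < b)
    (h : m * log a ≤ n * log b) : a ^ m ≤ b ^ n := by
  rw [← log_pow, ← log_pow, log_le_log_iff (by positivity) (by positivity)] at h
  exact_mod_cast h

lemma exists_sum_alive_inv_pow_ge (w : ℕ) : ∃ t h K : ℕ, ∃ c : ℝ, 1 ≤ t ∧ 2 ≤ h ∧ 1 ≤ K ∧ 0 < c ∧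
    ∀ᶠ y : ℕ in atTop, c ≤ ∑ a ∈ alive w t y with y ^ (h + 1) ≤ a ^ h ∧ a ≤ y ^ K, 1 / (a : ℝ) := by
  obtain ⟨t, η, B, c, ht, hη, hc, hsum⟩ := exists_sum_alive_inv_ge w
  obtain ⟨R, hR1, hR⟩ := exists_abs_primeLogMean_sub_log_le w
  obtain ⟨h, hh⟩ := exists_nat_gt (2 / η)
  obtain ⟨K, hK⟩ := exists_nat_gt (|B| + 2)
  have hK1 : 1 ≤ K := by exact_mod_cast (by linarith [abs_nonneg B] : (1 : ℝ) ≤ K)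
  refine ⟨t, h + 2, K, c, ht, by lia, hK1, hc, ?_⟩
  filter_upwards [hsum, eventually_ge_atTop 1, eventually_le_log_natCast R,
    eventually_le_log_natCast (2 * R / η)] with y hy hy1 hRy hRηy
  have hRη : R ≤ η / 2 * log y := by rw [div_le_iff₀ hη] at hRηy; linarith
  obtain ⟨hVlower, hVupper⟩ := abs_le.1 (hR y hy1)
  refine hy.trans (sum_le_sum_of_subset_of_nonneg (fun a ha ↦ ?_) fun _ _ _ ↦ by positivity)
  obtain ⟨hmem, hlower, hupper⟩ := mem_filter.1 ha
  have ha0 := pos_of_mem_alive hmem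
  refine mem_filter.2 ⟨hmem, pow_le_pow_of_mul_log_le hy1 ha0 ?_, ?_⟩
  · have hηh : 1 ≤ (h + 2) * (η / 2) := by rw [div_lt_iff₀ hη] at hh; linarith
    push_cast
    nlinarith
  · rw [← pow_one a]
    refine pow_le_pow_of_mul_log_le ha0 hy1 ?_
    have hBK := mul_le_mul_of_nonneg_right hK.le (log_natCast_nonneg y)
    have hB := mul_le_mul_of_nonneg_right (le_abs_self B) (log_natCast_nonneg y)
    push_cast
    linarith

end SumsOverDenseIntegers

section CountingDenseIntegers

open Filter Finset Real

lemma eq_and_eq_of_mul_prime_eq {y a a' p p' : ℕ} (ha' : ∀ q : ℕ, q.Prime → q ∣ a' → q ≤ y)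
    (hp : p.Prime) (hp' : p'.Prime) (hyp : y < p) (h : a * p = a' * p') : a = a' ∧ p = p' := by
  rcases hp.dvd_mul.1 (h ▸ dvd_mul_left p a) with hpa' | hpp'
  · exact absurd (ha' p hp hpa') hyp.not_ge
  · obtain rfl := (Nat.prime_dvd_prime_iff_eq hp hp').1 hpp'
    exact ⟨Nat.eq_of_mul_eq_mul_right hp.pos h, rfl⟩

lemma mul_prime_mem_denseSquarefree {w t y a p : ℕ} (hwy : w ≤ y) (ha : a ∈ denseSquarefree w t y)
    (hp : p.Prime) (hyp : y < p) (hpa : p ≤ t * a) : a * p ∈ denseSquarefree w t p := by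
  obtain ⟨q, rfl⟩ : ∃ q, p = q + 1 := ⟨p - 1, by lia⟩
  exact mem_denseSquarefree_succ_iff.2
    (.inr ⟨⟨hp, by lia⟩, a, denseSquarefree_mono w t (by lia) ha, hpa, rfl⟩)

/-- The members of `denseSquarefree w t y` in the interval `[α, β]`. -/
noncomputable def denseSquarefreeIcc (w t y α β : ℕ) : Finset ℕ :=
  {a ∈ denseSquarefree w t y | α ≤ a ∧ a ≤ β}

lemma mem_denseSquarefreeIcc {w t y α β a : ℕ} : a ∈ denseSquarefreeIcc w t y α β ↔
    a ∈ denseSquarefree w t y ∧ α ≤ a ∧ a ≤ β := mem_filter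

lemma denseSquarefreeIcc_mono {w t y α β α' β' : ℕ} (hα : α' ≤ α) (hβ : β ≤ β') :
    denseSquarefreeIcc w t y α β ⊆ denseSquarefreeIcc w t y α' β' := fun a ha ↦ by
  obtain ⟨hmem, hαa, haβ⟩ := mem_denseSquarefreeIcc.1 ha
  exact mem_denseSquarefreeIcc.2 ⟨hmem, hα.trans hαa, haβ.trans hβ⟩

lemma mul_le_sum_denseSquarefreeIcc_inv {w t y y' α β : ℕ} (hwy : w ≤ y) (hy' : y' ≤ t * α)
    {s u : ℝ} (hs0 : 0 ≤ s) (hs : s ≤ ∑ a ∈ denseSquarefreeIcc w t y α β, 1 / (a : ℝ))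
    (hu0 : 0 ≤ u) (hu : u ≤ ∑ p ∈ primesIoc y y', 1 / (p : ℝ)) :
    s * u ≤ ∑ a ∈ denseSquarefreeIcc w t y' (α * y) (β * y'), 1 / (a : ℝ) := by
  have hinj : Set.InjOn (fun x : ℕ × ℕ ↦ x.1 * x.2)
      (denseSquarefreeIcc w t y α β ×ˢ primesIoc y y' : Finset (ℕ × ℕ)) := by
    rintro ⟨a, p⟩ h ⟨a', p'⟩ h' heq
    simp only [coe_product, Set.mem_prod, mem_coe, mem_primesIoc, mem_denseSquarefreeIcc] at h h'
    obtain ⟨rfl, rfl⟩ := eq_and_eq_of_mul_prime_eq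
      (fun q hq hqa ↦ ((mem_denseSquarefree.1 h'.1.1).2.1 q hq hqa).2) h.2.2 h'.2.2 h.2.1.1 heq
    rfl
  calc s * u
      ≤ (∑ a ∈ denseSquarefreeIcc w t y α β, 1 / (a : ℝ)) * ∑ p ∈ primesIoc y y', 1 / (p : ℝ) :=
        mul_le_mul hs hu hu0 (hs0.trans hs)
    _ = ∑ x ∈ denseSquarefreeIcc w t y α β ×ˢ primesIoc y y', 1 / ((x.1 * x.2 : ℕ) : ℝ) := by
        simp only [sum_mul_sum, sum_product, Nat.cast_mul, one_div_mul_one_div]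
    _ = ∑ b ∈ (denseSquarefreeIcc w t y α β ×ˢ primesIoc y y').image (fun x ↦ x.1 * x.2),
          1 / ((b : ℕ) : ℝ) := by rw [sum_image hinj]
    _ ≤ ∑ a ∈ denseSquarefreeIcc w t y' (α * y) (β * y'), 1 / (a : ℝ) := by
        refine sum_le_sum_of_subset_of_nonneg ?_ fun _ _ _ ↦ by positivity
        simp only [image_subset_iff, mem_product, mem_primesIoc, mem_denseSquarefreeIcc]
        rintro ⟨a, p⟩ ⟨⟨ha, hαa, haβ⟩, ⟨hyp, hpy'⟩, hp⟩
        exact ⟨denseSquarefree_mono w t hpy' (mul_prime_mem_denseSquarefree hwy ha hp hyp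
          (hpy'.trans (hy'.trans (Nat.mul_le_mul_left _ hαa)))),
          Nat.mul_le_mul hαa hyp.le, Nat.mul_le_mul haβ hpy'⟩

lemma eventually_sum_primesIoc_pow_inv_ge : ∀ᶠ z : ℕ in atTop, ∀ m : ℕ,
    1 / (2 * ((m : ℝ) + 1)) ≤ ∑ p ∈ primesIoc (z ^ m) (z ^ (m + 1)), 1 / (p : ℝ) := by
  obtain ⟨R, hR1, hR⟩ := mertens_first_primesIoc
  filter_upwards [eventually_ge_atTop 2, eventually_le_log_natCast (2 * R)] with z hz hRz m
  have hlog : 0 < log (z : ℝ) := by linarith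
  have hmertens := (abs_le.1 (hR (z ^ m) (z ^ (m + 1)) (Nat.one_le_pow _ _ (by lia))
    (Nat.pow_le_pow_right (by lia) m.le_succ))).1
  have hratio : ((z ^ (m + 1) : ℕ) : ℝ) / ((z ^ m : ℕ) : ℝ) = z := by
    push_cast
    rw [pow_succ]
    field_simp
  rw [hratio] at hmertens
  have hterm : ∀ p ∈ primesIoc (z ^ m) (z ^ (m + 1)),
      log p / p ≤ (m + 1) * log z * (1 / (p : ℝ)) := fun p hp ↦ by
    obtain ⟨⟨-, hpz⟩, hp⟩ := mem_primesIoc.1 hp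
    have hlogp : log p ≤ log ((z : ℝ) ^ (m + 1)) :=
      log_le_log (by exact_mod_cast hp.pos) (by exact_mod_cast hpz)
    rw [log_pow, Nat.cast_add_one] at hlogp
    rw [mul_one_div]
    gcongr
  have hsum := sum_le_sum hterm
  rw [← mul_sum] at hsum
  rw [div_le_iff₀ (by positivity)]
  refine le_of_mul_le_mul_right ?_ hlog
  linarith

-- Multiplying by `k` primes, one from each `(z ^ (M + i), z ^ (M + i + 1)]`.
lemma mul_pow_le_sum_denseSquarefreeIcc_inv {w t z M k K : ℕ} {c : ℝ} (hM : 1 ≤ M) (ht : 1 ≤ t)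
    (hz : 1 ≤ z) (hwz : w ≤ z) (hc : 0 ≤ c)
    (hprimes : ∀ m : ℕ, 1 / (2 * ((m : ℝ) + 1)) ≤
      ∑ p ∈ primesIoc (z ^ m) (z ^ (m + 1)), 1 / (p : ℝ))
    (hbase : c ≤ ∑ a ∈ denseSquarefreeIcc w t (z ^ M) (z ^ (M + k)) (z ^ K), 1 / (a : ℝ))
    {i : ℕ} (hi : i ≤ k) : c * (1 / (2 * ((M : ℝ) + k + 1))) ^ i ≤
      ∑ a ∈ denseSquarefreeIcc w t (z ^ (M + i)) (z ^ (M + k + i * M)) (z ^ (K + i * (M + k))),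
        1 / (a : ℝ) := by
  induction i with
  | zero => simpa using hbase
  | succ i ih =>
    have hfactor : 1 / (2 * ((M : ℝ) + k + 1)) ≤
        ∑ p ∈ primesIoc (z ^ (M + i)) (z ^ (M + i + 1)), 1 / (p : ℝ) := by
      refine le_trans ?_ (hprimes (M + i))
      have : ((M + i : ℕ) : ℝ) ≤ M + k := by exact_mod_cast (by lia : M + i ≤ M + k)
      gcongr
    have hstep := mul_le_sum_denseSquarefreeIcc_inv
      (hwz.trans (Nat.le_self_pow (by lia) z))
      ((Nat.pow_le_pow_right hz (by lia)).trans (Nat.le_mul_of_pos_left _ ht))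
      (by positivity) (ih (by lia)) (by positivity) hfactor
    rw [pow_succ, ← mul_assoc]
    refine hstep.trans (sum_le_sum_of_subset_of_nonneg (denseSquarefreeIcc_mono ?_ ?_)
      fun _ _ _ ↦ by positivity)
    · rw [← pow_add]
      exact Nat.pow_le_pow_right hz (by lia)
    · rw [← pow_add]
      exact Nat.pow_le_pow_right hz (by lia)

lemma div_two_mul_log_le_card_primesIoc_zero {n : ℕ} (hn : 100 ≤ n) :
    n / (2 * log n) ≤ (#(primesIoc 0 n) : ℝ) := by
  rw [primesIoc_zero_left, Nat.primesLE_card_eq_primeCounting]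
  refine le_trans ?_ (Chebyshev.pi_ge n)
  have hn' : (100 : ℝ) ≤ n := by exact_mod_cast hn
  have hlog : 0 < log (n : ℝ) := log_pos (by linarith)
  rw [div_le_div_iff₀ (by positivity) hlog]
  have hlog_succ : log ((n : ℝ) + 1) ≤ (n + 1) / 10 + 8 := by
    have hsplit := log_mul (x := ((n : ℝ) + 1) / 10) (y := 10) (by positivity) (by norm_num)
    rw [div_mul_cancel₀ _ (by norm_num)] at hsplit
    have := log_le_sub_one_of_pos (by positivity : 0 < ((n : ℝ) + 1) / 10)
    have := log_le_sub_one_of_pos (by norm_num : (0 : ℝ) < 10)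
    linarith
  have : (n : ℝ) / 2 ≤ n * log 2 - log (n + 1) := by nlinarith [log_two_gt_d9]
  nlinarith

lemma card_primesIoc_zero_le_add (y u : ℕ) : #(primesIoc 0 u) ≤ y + #(primesIoc y u) := by
  have hsub : primesIoc 0 u ⊆ Icc 1 y ∪ primesIoc y u := fun p hp ↦ by
    simp only [mem_primesIoc, mem_union, mem_Icc] at hp ⊢
    lia
  simpa using (card_le_card hsub).trans (card_union_le _ _)

lemma div_four_mul_log_le_card_primesIoc {y z u N : ℕ} (hz : 100 ≤ z) (hlogN : 4 * log N ≤ z)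
    (hy : 1 ≤ y) (hyu : y * z ≤ u) (huN : u ≤ N) :
    u / (4 * log N) ≤ (#(primesIoc y u) : ℝ) := by
  have hu : 100 ≤ u := by nlinarith
  have hu' : (100 : ℝ) ≤ u := by exact_mod_cast hu
  have hlogu : 0 < log (u : ℝ) := log_pos (by linarith)
  have hlog_le : log (u : ℝ) ≤ log N := log_le_log (by linarith) (by exact_mod_cast huN)
  have hlog : 0 < log (N : ℝ) := by linarith
  have hcount : (u : ℝ) / (2 * log N) ≤ y + #(primesIoc y u) := calc
    (u : ℝ) / (2 * log N) ≤ u / (2 * log u) := by gcongr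
    _ ≤ #(primesIoc 0 u) := div_two_mul_log_le_card_primesIoc_zero hu
    _ ≤ y + #(primesIoc y u) := by exact_mod_cast card_primesIoc_zero_le_add y u
  have hyle : (y : ℝ) ≤ u / (4 * log N) := by
    rw [le_div_iff₀ (by positivity)]
    have : (y : ℝ) * z ≤ u := by exact_mod_cast hyu
    have : (y : ℝ) * (4 * log N) ≤ y * z := by gcongr
    linarith
  have hhalves : (u : ℝ) / (2 * log N) = u / (4 * log N) + u / (4 * log N) := by
    field_simp
    ring
  linarith

lemma sum_card_primesIoc_le_card_denseSquarefreeIcc {w t y N : ℕ} {S : Finset ℕ} (hwy : w ≤ y)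
    (ht : 1 ≤ t) (hS : S ⊆ denseSquarefree w t y) (hNS : ∀ a ∈ S, N ≤ a * a) :
    ∑ a ∈ S, #(primesIoc y (N / a)) ≤ #(denseSquarefreeIcc w t N 1 N) := by
  rw [← card_sigma]
  refine card_le_card_of_injOn (fun x ↦ x.1 * x.2) ?_ ?_
  · rintro ⟨a, p⟩ h
    simp only [mem_coe, mem_sigma, mem_primesIoc] at h
    obtain ⟨ha, ⟨hyp, hpa⟩, hp⟩ := h
    have ha0 := pos_of_mem_denseSquarefree (hS ha)
    have hap : a * p ≤ N := mul_comm p a ▸ (Nat.le_div_iff_mul_le ha0).1 hpa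
    have hpa : p ≤ a := Nat.le_of_mul_le_mul_left (hap.trans (hNS a ha)) ha0
    have hmem := mul_prime_mem_denseSquarefree hwy (hS ha) hp hyp
      (hpa.trans (Nat.le_mul_of_pos_left _ ht))
    exact mem_denseSquarefreeIcc.2 ⟨denseSquarefree_mono w t
      ((Nat.le_mul_of_pos_left p ha0).trans hap) hmem, Nat.mul_pos ha0 hp.pos, hap⟩
  · rintro ⟨a, p⟩ h ⟨a', p'⟩ h' heq
    simp only [mem_coe, mem_sigma, mem_primesIoc] at h h'
    obtain ⟨rfl, rfl⟩ := eq_and_eq_of_mul_prime_eq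
      (fun q hq hqa ↦ ((mem_denseSquarefree.1 (hS h'.1)).2.1 q hq hqa).2)
      h.2.2 h'.2.2 h.2.1.1 heq
    rfl

lemma sum_inv_mul_le_card_denseSquarefreeIcc {w t z y N : ℕ} {S : Finset ℕ} (hwy : w ≤ y)
    (ht : 1 ≤ t) (hz : 100 ≤ z) (hy : 1 ≤ y) (hlogN : 4 * log N ≤ z)
    (hS : S ⊆ denseSquarefree w t y) (hNS : ∀ a ∈ S, N ≤ a * a)
    (hSN : ∀ a ∈ S, a * (y * z) ≤ N) :
    (∑ a ∈ S, 1 / (a : ℝ)) * (N / (8 * log N)) ≤ #(denseSquarefreeIcc w t N 1 N) := by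
  rw [sum_mul]
  refine le_trans (sum_le_sum (g := fun a ↦ (#(primesIoc y (N / a)) : ℝ)) fun a ha ↦ ?_)
    (by exact_mod_cast sum_card_primesIoc_le_card_denseSquarefreeIcc hwy ht hS hNS)
  have ha0 := pos_of_mem_denseSquarefree (hS ha)
  set u := N / a with hu
  have hyzu : y * z ≤ u := by
    rw [hu, Nat.le_div_iff_mul_le ha0, mul_comm]
    exact hSN a ha
  have huN : u ≤ N := Nat.div_le_self _ _
  refine le_trans ?_ (div_four_mul_log_le_card_primesIoc hz hlogN hy hyzu huN)
  have hu1 : 1 ≤ u := by nlinarith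
  have hlog : 0 < log (N : ℝ) := log_pos (by exact_mod_cast (by nlinarith : 1 < N))
  have hN : (N : ℝ) ≤ 2 * u * a := by
    have : N < (u + 1) * a := hu ▸ Nat.lt_mul_of_div_lt (Nat.lt_succ_self _) ha0
    exact_mod_cast (by nlinarith : N ≤ 2 * u * a)
  rw [div_mul_div_comm, one_mul, div_le_div_iff₀ (by positivity) (by positivity)]
  have : (N : ℝ) * (4 * log N) ≤ 2 * u * a * (4 * log N) := by gcongr
  linarith

lemma exists_sum_denseSquarefreeIcc_pow_inv_ge (w : ℕ) : ∃ t L U V : ℕ, ∃ c : ℝ,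
    1 ≤ t ∧ L ≠ 0 ∧ V + L + 2 ≤ 2 * U ∧ 0 < c ∧ ∀ᶠ z : ℕ in atTop,
      c ≤ ∑ a ∈ denseSquarefreeIcc w t (z ^ L) (z ^ U) (z ^ V), 1 / (a : ℝ) := by
  obtain ⟨t, h, K, c, ht, hh, hK, hc, hsum⟩ := exists_sum_alive_inv_pow_ge w
  set k := 2 * K with hk
  set M := h * k with hM
  have hM1 : 1 ≤ M := by nlinarith
  have hexp : M * K + k * (M + k) + (M + k) + 2 ≤ 2 * (M + k + k * M) := by
    have : M * K + k * k ≤ k * M := by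
      rw [hM, hk]
      nlinarith [Nat.mul_le_mul_right (K * K) hh]
    have : k * (M + k) = k * M + k * k := Nat.mul_add ..
    lia
  refine ⟨t, M + k, M + k + k * M, M * K + k * (M + k), c * (1 / (2 * ((M : ℝ) + k + 1))) ^ k, ht,
    by lia, hexp, by positivity, ?_⟩
  filter_upwards [(tendsto_pow_atTop (α := ℕ) (by lia : M ≠ 0)).eventually hsum,
    eventually_sum_primesIoc_pow_inv_ge, eventually_ge_atTop (w + 1)] with z hbase hprimes hwz
  refine mul_pow_le_sum_denseSquarefreeIcc_inv hM1 ht (by lia) (by lia) hc.le hprimes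
    (hbase.trans ?_) le_rfl
  refine sum_le_sum_of_subset_of_nonneg (fun a ha ↦ ?_) fun _ _ _ ↦ by positivity
  obtain ⟨halive, hlower, hupper⟩ := mem_filter.1 ha
  refine mem_denseSquarefreeIcc.2 ⟨(mem_filter.1 halive).1, ?_, by rwa [pow_mul]⟩
  rw [← pow_mul, show M * (h + 1) = (M + k) * h by rw [hM]; ring, pow_mul] at hlower
  exact (Nat.pow_le_pow_iff_left (by lia)).1 hlower

lemma tendsto_nthRoot_atTop {k : ℕ} (hk : k ≠ 0) : Tendsto (Nat.nthRoot k) atTop atTop :=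
  tendsto_atTop.2 fun b ↦ (eventually_ge_atTop (b ^ k)).mono fun _ h ↦ (Nat.le_nthRoot_iff hk).2 h

lemma eventually_mul_log_natCast_le (B : ℝ) : ∀ᶠ z : ℕ in atTop, B * log z ≤ z := by
  have hbound := ((isLittleO_log_id_atTop.const_mul_left B).comp_tendsto
    tendsto_natCast_atTop_atTop).bound one_pos
  filter_upwards [hbound] with z hz
  simpa using (le_abs_self _).trans hz

lemma exists_card_denseSquarefreeIcc_ge (w : ℕ) : ∃ t : ℕ, ∃ δ : ℝ, 1 ≤ t ∧ 0 < δ ∧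
    ∀ᶠ N : ℕ in atTop, δ * N / log N ≤ #(denseSquarefreeIcc w t N 1 N) := by
  obtain ⟨t, L, U, V, c, ht, hL, hLUV, hc, hsum⟩ := exists_sum_denseSquarefreeIcc_pow_inv_ge w
  obtain ⟨E, hE⟩ : ∃ E, E + 1 = 2 * U := ⟨2 * U - 1, by lia⟩
  refine ⟨t, c / 8, ht, by positivity, ?_⟩
  filter_upwards [eventually_ge_atTop 1, (tendsto_nthRoot_atTop (by lia : E ≠ 0)).eventually
    (hsum.and ((eventually_ge_atTop (w + 100 + 2 ^ E)).and
      (eventually_mul_log_natCast_le (4 * (E + 1)))))] with N hN ⟨hsumz, hz, hlogz⟩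
  set z := Nat.nthRoot E N
  have hzN : z ^ E ≤ N := Nat.pow_nthRoot_le (.inl (by lia))
  have hNz : N ≤ z ^ (E + 1) := calc
    N ≤ (z + 1) ^ E := (Nat.lt_pow_nthRoot_add_one (by lia) N).le
    _ ≤ (2 * z) ^ E := Nat.pow_le_pow_left (by lia) _
    _ = 2 ^ E * z ^ E := mul_pow ..
    _ ≤ z * z ^ E := Nat.mul_le_mul_right _ (by lia)
    _ = z ^ (E + 1) := (pow_succ' ..).symm
  have hlogN : log N ≤ (E + 1) * log z := by
    have := log_le_log (by exact_mod_cast hN) (by exact_mod_cast hNz : (N : ℝ) ≤ z ^ (E + 1))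
    rwa [log_pow, Nat.cast_add_one] at this
  have hNsq : ∀ a ∈ denseSquarefreeIcc w t (z ^ L) (z ^ U) (z ^ V), N ≤ a * a := fun a ha ↦ by
    have haU := (mem_denseSquarefreeIcc.1 ha).2.1
    rw [hE, two_mul, pow_add] at hNz
    exact hNz.trans (Nat.mul_le_mul haU haU)
  have hleN : ∀ a ∈ denseSquarefreeIcc w t (z ^ L) (z ^ U) (z ^ V), a * (z ^ L * z) ≤ N :=
    fun a ha ↦ calc
      a * (z ^ L * z) ≤ z ^ V * (z ^ L * z) :=
        Nat.mul_le_mul_right _ (mem_denseSquarefreeIcc.1 ha).2.2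
      _ = z ^ (V + (L + 1)) := by rw [← pow_succ, ← pow_add]
      _ ≤ z ^ E := Nat.pow_le_pow_right (by lia) (by lia)
      _ ≤ N := hzN
  calc c / 8 * N / log N = c * (N / (8 * log N)) := by ring
    _ ≤ (∑ a ∈ denseSquarefreeIcc w t (z ^ L) (z ^ U) (z ^ V), 1 / (a : ℝ)) *
        (N / (8 * log N)) := by gcongr
    _ ≤ #(denseSquarefreeIcc w t N 1 N) := sum_inv_mul_le_card_denseSquarefreeIcc
      ((show w ≤ z by lia).trans (Nat.le_self_pow hL z)) ht (by lia) (Nat.pow_pos (by lia))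
      (by linarith) (filter_subset _ _) hNsq hleN

end CountingDenseIntegers

section Connectors

open Filter Finset Real

lemma exists_lt_mul_two_pow_le {n G : ℕ} (hn : 0 < n) (hG : n ≤ G) :
    ∃ a : ℕ, G < n * 2 ^ a ∧ n * 2 ^ a ≤ 2 * G := by
  have hex : ∃ a : ℕ, G < n * 2 ^ a :=
    ⟨G, Nat.lt_two_pow_self.trans_le (Nat.le_mul_of_pos_left _ hn)⟩
  refine ⟨Nat.find hex, Nat.find_spec hex, ?_⟩
  rcases hfind : Nat.find hex with _ | a
  · lia
  · have hmin := Nat.find_min hex (m := a) (by lia)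
    rw [pow_succ, ← mul_assoc]
    lia

lemma exists_injective_smooth_family {J G : ℕ} (hG : 3 ^ J ≤ G) :
    ∃ b : Fin J → ℕ, Function.Injective b ∧
      (∀ i, G < b i ∧ b i ≤ 2 * G) ∧ ∀ i, ∀ q : ℕ, q.Prime → q ∣ b i → q < 4 := by
  have hpow : ∀ i : Fin J, 3 ^ (i : ℕ) ≤ G := fun i ↦
    (Nat.pow_le_pow_right three_pos i.2.le).trans hG
  choose a ha using fun i ↦ exists_lt_mul_two_pow_le (by positivity) (hpow i)
  refine ⟨fun i ↦ 3 ^ (i : ℕ) * 2 ^ a i, fun i j hij ↦ ?_, ha, fun i q hq hqb ↦ ?_⟩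
  · have hfac : ∀ k : Fin J, (3 ^ (k : ℕ) * 2 ^ a k).factorization 3 = (k : ℕ) := fun k ↦ by
      rw [Nat.factorization_mul (by positivity) (by positivity),
        Nat.prime_three.factorization_pow, Nat.prime_two.factorization_pow]
      simp
    exact Fin.ext (by rw [← hfac i, ← hfac j]; exact congrArg (Nat.factorization · 3) hij)
  · rcases hq.dvd_mul.1 hqb with h | h
    · have := Nat.le_of_dvd three_pos (hq.dvd_of_dvd_pow h)
      lia
    · have := Nat.le_of_dvd two_pos (hq.dvd_of_dvd_pow h)
      lia

/-- A connector is a product of one of the multipliers `b i` and a `t`-dense integer coprime to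
`6`. In the construction of long chains connectors are cofactors used for only one passage from
a block of the chain to the next one. -/
def IsConnector {ι : Type*} (b : ι → ℕ) (t c : ℕ) : Prop :=
  ∃ i m, (∀ q : ℕ, q.Prime → q ∣ m → 3 < q) ∧ IsDivisorDense t m ∧ c = b i * m

noncomputable instance {ι : Type*} (b : ι → ℕ) (t : ℕ) : DecidablePred (IsConnector b t) :=
  Classical.decPred _

lemma ne_zero_of_three_lt_of_dvd {m : ℕ} (hm : ∀ q : ℕ, q.Prime → q ∣ m → 3 < q) : m ≠ 0 :=
  fun h ↦ by simpa using hm 2 Nat.prime_two (h ▸ dvd_zero 2)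

lemma ne_zero_of_lt_four_of_dvd {b : ℕ} (hb : ∀ q : ℕ, q.Prime → q ∣ b → q < 4) : b ≠ 0 :=
  fun h ↦ by simpa using hb 5 Nat.prime_five (h ▸ dvd_zero 5)

lemma smoothPart_mul_four {b m : ℕ} (hb : ∀ q : ℕ, q.Prime → q ∣ b → q < 4)
    (hm : ∀ q : ℕ, q.Prime → q ∣ m → 3 < q) : smoothPart (b * m) 4 = b := by
  have hb0 := ne_zero_of_lt_four_of_dvd hb
  rw [smoothPart_mul hb0 (ne_zero_of_three_lt_of_dvd hm), smoothPart_eq_self hb0 hb,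
    smoothPart_eq_one hm, mul_one]

lemma card_mul_card_le_count_isConnector {ι : Type*} [Fintype ι] {b : ι → ℕ} {B : ℕ}
    (hinj : Function.Injective b) (hB : ∀ i, b i ≤ B)
    (hb : ∀ i, ∀ q : ℕ, q.Prime → q ∣ b i → q < 4) (t M : ℕ) :
    Fintype.card ι * #(denseSquarefreeIcc 3 t M 1 M) ≤
      Nat.count (IsConnector b t) (B * M + 1) := by
  have hrough : ∀ m ∈ denseSquarefreeIcc 3 t M 1 M, ∀ q : ℕ, q.Prime → q ∣ m → 3 < q :=
    fun m hm q hq hqm ↦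
      ((mem_denseSquarefree.1 (mem_denseSquarefreeIcc.1 hm).1).2.1 q hq hqm).1
  rw [← card_univ, ← card_product, Nat.count_eq_card_filter_range]
  refine card_le_card_of_injOn (fun x ↦ b x.1 * x.2) ?_ ?_
  · rintro ⟨i, m⟩ h
    have hm := (mem_product.1 h).2
    obtain ⟨hdense, -, hmM⟩ := mem_denseSquarefreeIcc.1 hm
    exact mem_coe.2 (mem_filter.2 ⟨mem_range.2 (Nat.lt_succ_of_le (Nat.mul_le_mul (hB i) hmM)),
      i, m, hrough m hm, (mem_denseSquarefree.1 hdense).2.2, rfl⟩)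
  · rintro ⟨i, m⟩ h ⟨j, m'⟩ h' (heq : b i * m = b j * m')
    have hm := hrough m (mem_product.1 h).2
    have hm' := hrough m' (mem_product.1 h').2
    obtain rfl : i = j := hinj (by
      rw [← smoothPart_mul_four (hb i) hm, heq, smoothPart_mul_four (hb j) hm'])
    rw [Nat.eq_of_mul_eq_mul_left (ne_zero_of_lt_four_of_dvd (hb i)).bot_lt heq]

lemma eventually_div_log_le {k : ℕ} (hk : 0 < k) : ∀ᶠ N : ℕ in atTop,
    (N : ℝ) / log N ≤ 2 * k * ((N / k : ℕ) / log (N / k : ℕ)) := by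
  filter_upwards [eventually_ge_atTop (2 * k)] with N hN
  have hM : 2 ≤ N / k := (Nat.le_div_iff_mul_le hk).2 hN
  have hle : N ≤ 2 * k * (N / k) := by
    have := Nat.lt_mul_div_succ N hk
    nlinarith
  have hpos : 0 < log (N / k : ℕ) := log_pos (by exact_mod_cast hM)
  rw [← mul_div_assoc]
  have hlog : log (N / k : ℕ) ≤ log N :=
    log_le_log (by exact_mod_cast two_pos.trans_le hM) (by exact_mod_cast Nat.div_le_self N k)
  gcongr
  exact_mod_cast hle

lemma exists_eventually_card_primesIoc_le_count_isConnector : ∃ t L J : ℕ, ∃ b : Fin J → ℕ,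
    1 ≤ t ∧ 2 ≤ L ∧ (∀ i, L * t < b i ∧ b i ≤ 2 * (L * t)) ∧
    (∀ i, ∀ q : ℕ, q.Prime → q ∣ b i → q < 4) ∧
    ∀ᶠ N : ℕ in atTop, #(primesIoc 0 N) ≤ Nat.count (IsConnector b t) (L * N + 1) := by
  obtain ⟨t, δ, ht, hδ, hdense⟩ := exists_card_denseSquarefreeIcc_ge 3
  obtain ⟨C, hC, hprimes⟩ := exists_card_primesIoc_zero_le
  obtain ⟨J, hJ⟩ := exists_nat_gt (4 * t * C / δ)
  have hJ0 : J ≠ 0 := by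
    rintro rfl
    exact absurd hJ (not_lt.2 (by simp only [Nat.cast_zero]; positivity))
  obtain ⟨b, hinj, hrange, hsmooth⟩ :=
    exists_injective_smooth_family (Nat.le_mul_of_pos_right (3 ^ J) ht)
  refine ⟨t, 3 ^ J, J, b, ht, ?_, hrange, hsmooth, ?_⟩
  · exact Nat.le_of_lt (Nat.le_self_pow hJ0 3)
  have hk : 0 < 2 * t := by lia
  filter_upwards [(Nat.tendsto_div_const_atTop hk.ne').eventually hdense,
    eventually_div_log_le hk, eventually_ge_atTop 2] with N hN hdiv hN2
  set M := N / (2 * t)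
  have hcount := card_mul_card_le_count_isConnector hinj (fun i ↦ (hrange i).2) hsmooth t M
  have hM : 2 * (3 ^ J * t) * M ≤ 3 ^ J * N := by
    calc 2 * (3 ^ J * t) * M = 3 ^ J * (2 * t * M) := by ring
      _ ≤ 3 ^ J * N := Nat.mul_le_mul_left _ (Nat.mul_div_le N (2 * t))
  refine le_trans ?_ (hcount.trans (Nat.count_monotone _ (Nat.succ_le_succ hM)))
  rw [Fintype.card_fin]
  have hMpos : 0 ≤ (M : ℝ) / log M := div_nonneg M.cast_nonneg (log_natCast_nonneg M)
  have : (#(primesIoc 0 N) : ℝ) ≤ J * #(denseSquarefreeIcc 3 t M 1 M) := by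
    calc (#(primesIoc 0 N) : ℝ) ≤ C * (N / log N) := by
          rw [← mul_div_assoc]; exact hprimes N hN2
      _ ≤ C * (2 * (2 * t : ℕ) * (M / log M)) := by gcongr
      _ = 4 * t * C * (M / log M) := by push_cast; ring
      _ ≤ J * δ * (M / log M) :=
        mul_le_mul_of_nonneg_right ((div_lt_iff₀ hδ).1 hJ).le hMpos
      _ = J * (δ * M / log M) := by ring
      _ ≤ J * #(denseSquarefreeIcc 3 t M 1 M) := by gcongr
  exact_mod_cast this

lemma card_primesIoc_zero_nth (n : ℕ) : #(primesIoc 0 (Nat.nth Nat.Prime n)) = n + 1 := by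
  rw [primesIoc_zero_left, Nat.primesLE_card_eq_primeCounting, Nat.primeCounting,
    Nat.primeCounting', Nat.count_nth_succ_of_infinite Nat.infinite_setOfPred_prime]

lemma infinite_and_eventually_nth_le {V : ℕ → Prop} [DecidablePred V] {L : ℕ}
    (hV : ∀ᶠ N : ℕ in atTop, #(primesIoc 0 N) ≤ Nat.count V (L * N + 1)) :
    (Set.ofPred V).Infinite ∧ ∀ᶠ n : ℕ in atTop, Nat.nth V n ≤ L * Nat.nth Nat.Prime n := by
  have hlt : ∀ᶠ n : ℕ in atTop, n < Nat.count V (L * Nat.nth Nat.Prime n + 1) := by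
    filter_upwards [(Nat.nth_strictMono Nat.infinite_setOfPred_prime).tendsto_atTop.eventually hV]
      with n hn
    rwa [card_primesIoc_zero_nth] at hn
  refine ⟨fun hfin ↦ ?_, hlt.mono fun n hn ↦ Nat.lt_succ_iff.1 (Nat.nth_lt_of_lt_count hn)⟩
  obtain ⟨n, hn, hcard⟩ := (hlt.and (eventually_ge_atTop #hfin.toFinset)).exists
  exact absurd (Nat.count_le_card hfin _) (not_le.2 (hcard.trans_lt hn))

/-- A sequence of distinct connectors `smooth i * rough i` of size comparable with the primes,
indexed so that the `i`-th connector is at most `L` times the prime of index `s + i`. The zeroth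
connector is `1`. A connector and the double of a connector are distinguished by their `3`-smooth
parts, none of which is twice another. -/
structure ConnectorSystem where
  (t L s : ℕ)
  (smooth rough : ℕ → ℕ)
  one_le_t : 1 ≤ t
  one_le_L : 1 ≤ L
  two_le_s : 2 ≤ s
  smooth_zero : smooth 0 = 1
  rough_zero : rough 0 = 1
  lt_four_of_dvd_smooth : ∀ i q : ℕ, q.Prime → q ∣ smooth i → q < 4
  smooth_ne_two_mul : ∀ i j, smooth i ≠ 2 * smooth j
  three_lt_of_dvd_rough : ∀ i q : ℕ, q.Prime → q ∣ rough i → 3 < q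
  isDivisorDense_rough : ∀ i, IsDivisorDense t (rough i)
  smooth_mul_rough_le : ∀ i, smooth i * rough i ≤ L * Nat.nth Nat.Prime (s + i)
  t_mul_rough_lt : ∀ i, t * rough i < Nat.nth Nat.Prime (s + i)
  smooth_mul_rough_injective : Function.Injective fun i ↦ smooth i * rough i

lemma exists_connector_sequence : ∃ t L s : ℕ, ∃ g m : ℕ → ℕ, 1 ≤ t ∧ 2 ≤ L ∧ 2 ≤ s ∧ t ≤ s ∧
    (∀ i, L * t < g i ∧ g i ≤ 2 * (L * t)) ∧ (∀ i q : ℕ, q.Prime → q ∣ g i → q < 4) ∧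
    (∀ i q : ℕ, q.Prime → q ∣ m i → 3 < q) ∧ (∀ i, IsDivisorDense t (m i)) ∧
    (∀ i, g i * m i ≤ L * Nat.nth Nat.Prime (s + i)) ∧
    Function.Injective fun i ↦ g i * m i := by
  obtain ⟨t, L, J, b, ht, hL, hrange, hsmooth, hcount⟩ :=
    exists_eventually_card_primesIoc_le_count_isConnector
  obtain ⟨hinf, hnth⟩ := infinite_and_eventually_nth_le hcount
  obtain ⟨n₀, hn₀⟩ := eventually_atTop.1 hnth
  let s := n₀ + t + 2
  choose i m hrough hdense heq using fun k ↦ Nat.nth_mem_of_infinite hinf (s + k)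
  refine ⟨t, L, s, fun k ↦ b (i k), m, ht, hL, by lia, by lia, fun k ↦ hrange _,
    fun k ↦ hsmooth _, hrough, hdense, fun k ↦ heq k ▸ hn₀ (s + k) (by lia), fun k l hkl ↦ ?_⟩
  exact Nat.add_left_cancel (Nat.nth_injective hinf ((heq k).trans (hkl.trans (heq l).symm)))

theorem nonempty_connectorSystem : Nonempty ConnectorSystem := by
  obtain ⟨t, L, s, g, m, ht, hL, hs, hts, hrange, hsmooth, hrough, hdense, hle, hinj⟩ :=
    exists_connector_sequence
  have hLt : 2 ≤ L * t := hL.trans (Nat.le_mul_of_pos_right L ht)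
  have hlt : ∀ i, t * m i < Nat.nth Nat.Prime (s + i) := fun i ↦ by
    refine Nat.lt_of_mul_lt_mul_left (a := L) ?_
    calc L * (t * m i) = L * t * m i := (mul_assoc ..).symm
      _ < g i * m i :=
        Nat.mul_lt_mul_of_pos_right (hrange i).1 (ne_zero_of_three_lt_of_dvd (hrough i)).bot_lt
      _ ≤ L * Nat.nth Nat.Prime (s + i) := hle i
  have hmono : ∀ i, Nat.nth Nat.Prime (s + i) ≤ Nat.nth Nat.Prime (s + (i + 1)) := fun i ↦
    (Nat.nth_strictMono Nat.infinite_setOfPred_prime (by lia)).le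
  have hgm : ∀ i, 1 < g i * m i := fun i ↦
    hLt.trans (((hrange i).1.le).trans (Nat.le_mul_of_pos_right _
      (ne_zero_of_three_lt_of_dvd (hrough i)).bot_lt))
  have hone : 1 ≤ L * Nat.nth Nat.Prime s :=
    Nat.mul_pos (by lia) (Nat.prime_nth_prime s).pos
  have hts' : t < Nat.nth Nat.Prime s := by
    have := Nat.add_two_le_nth_prime s
    lia
  refine ⟨⟨t, L, s, fun i ↦ Nat.casesOn i 1 g, fun i ↦ Nat.casesOn i 1 m, ht, by lia, hs, rfl, rfl,
    ?_, ?_, ?_, ?_, ?_, ?_, ?_⟩⟩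
  · rintro (_ | i) q hq hqd
    exacts [absurd (Nat.dvd_one.1 hqd) hq.ne_one, hsmooth i q hq hqd]
  · rintro (_ | i) (_ | j)
    · exact fun h : 1 = 2 * 1 ↦ by lia
    · exact fun h : 1 = 2 * g j ↦ by lia
    · exact fun h : g i = 2 * 1 ↦ by have := hrange i; lia
    · exact fun h : g i = 2 * g j ↦ by have := hrange i; have := hrange j; lia
  · rintro (_ | i) q hq hqd
    exacts [absurd (Nat.dvd_one.1 hqd) hq.ne_one, hrough i q hq hqd]
  · rintro (_ | i)
    exacts [isDivisorDense_one t, hdense i]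
  · rintro (_ | i)
    exacts [hone, (hle i).trans (Nat.mul_le_mul_left _ (hmono i))]
  · rintro (_ | i)
    exacts [by simpa using hts', (hlt i).trans_le (hmono i)]
  · rintro (_ | i) (_ | j) h
    · rfl
    · exact absurd h (hgm j).ne
    · exact absurd h (hgm i).ne'
    · exact congrArg _ (hinj h)

end Connectors

section TreePath

/-- A vertex of the chain built below. It stands for the integer `core * c index`, or twice this
integer if `doubled` holds, where `c` is a sequence of connectors with `c 0 = 1`. -/
@[ext]
structure PathVertex where
  (core index : ℕ)
  doubled : Bool

/-- The integer that a vertex stands for, given the sequence `c` of connectors. -/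
def PathVertex.value (c : ℕ → ℕ) (x : PathVertex) : ℕ :=
  x.core * ((bif x.doubled then 2 else 1) * c x.index)

/-- Adjacency in the divisor graph of the values of two vertices. -/
def PathVertex.Adj (c : ℕ → ℕ) (x y : PathVertex) : Prop :=
  x.value c ∣ y.value c ∨ y.value c ∣ x.value c

/-- The passage from the block of core `a * p j` to that of core `a * p (j + 1)` by means of the
`j`-th connector. -/
def connectorSegment (p : ℕ → ℕ) (a : ℕ) : ℕ → List PathVertex
  | 0 => []
  | j + 1 => [⟨a * p (j + 1), j + 1, false⟩, ⟨a, j + 1, false⟩, ⟨a * p (j + 2), j + 1, true⟩]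

/-- The path from `2 * a` through the multiples of `a` by increasing products of the primes
`p 1, …, p j`, where a prime `q` is only allowed to multiply `b` if `T * (b * q ^ 2) ≤ N`. The
vertex of value `a`, which may follow the last one, is left out. -/
def treePath (p : ℕ → ℕ) (T N : ℕ) : ℕ → ℕ → List PathVertex
  | 0, a => [⟨a, 0, true⟩]
  | j + 1, a =>
    if T * (a * p (j + 1) ^ 2) ≤ N then
      treePath p T N j a ++ (connectorSegment p a j ++
        (treePath p T N j (a * p (j + 1)) ++ [⟨a * p (j + 1), 0, false⟩]))
    else treePath p T N j a

variable {p c : ℕ → ℕ} {T N j a : ℕ} {x : PathVertex}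

lemma index_eq_of_mem_connectorSegment (hx : x ∈ connectorSegment p a j) :
    x.index = j ∧ 0 < j := by
  cases j <;> simp only [connectorSegment, List.mem_cons, List.not_mem_nil, or_false] at hx
  rcases hx with rfl | rfl | rfl <;> exact ⟨rfl, Nat.succ_pos _⟩

lemma core_eq_of_mem_connectorSegment (hx : x ∈ connectorSegment p a j) :
    x.core = a * p j ∨ x.core = a ∨ x.core = a * p (j + 1) := by
  cases j <;> simp only [connectorSegment, List.mem_cons, List.not_mem_nil, or_false] at hx
  rcases hx with rfl | rfl | rfl <;> simp

lemma mem_treePath_succ (h : T * (a * p (j + 1) ^ 2) ≤ N) : x ∈ treePath p T N (j + 1) a ↔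
    x ∈ treePath p T N j a ∨ x ∈ connectorSegment p a j ∨
      x ∈ treePath p T N j (a * p (j + 1)) ∨ x = ⟨a * p (j + 1), 0, false⟩ := by
  simp only [treePath, if_pos h, List.mem_append, List.mem_singleton]

lemma treePath_succ_of_lt (h : N < T * (a * p (j + 1) ^ 2)) :
    treePath p T N (j + 1) a = treePath p T N j a := by
  rw [treePath, if_neg h.not_ge]

lemma index_lt_of_mem_treePath (hx : x ∈ treePath p T N j a) : x.index < max j 1 := by
  induction j generalizing a with
  | zero => simp [List.mem_singleton.1 hx]
  | succ j ih =>
    by_cases h : T * (a * p (j + 1) ^ 2) ≤ N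
    · rcases (mem_treePath_succ h).1 hx with hx | hx | hx | rfl
      · have := ih hx; lia
      · have := index_eq_of_mem_connectorSegment hx; lia
      · have := ih hx; lia
      · simp
    · rw [treePath_succ_of_lt (not_le.1 h)] at hx
      have := ih hx; lia

lemma exists_core_eq_mul_of_mem_treePath (hp : ∀ i, (p i).Prime) (hmono : StrictMono p)
    (hx : x ∈ treePath p T N j a) :
    ∃ b : ℕ, x.core = a * b ∧ ∀ q : ℕ, q.Prime → q ∣ b → q ≤ p j := by
  have hone : ∀ y q : ℕ, q.Prime → q ∣ 1 → q ≤ y := fun _ q hq h ↦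
    absurd (Nat.dvd_one.1 h) hq.ne_one
  have hprime : ∀ i ≤ j, ∀ q : ℕ, q.Prime → q ∣ p i → q ≤ p j := fun i hi q _ h ↦
    (Nat.le_of_dvd (hp i).pos h).trans (hmono.monotone hi)
  induction j generalizing a with
  | zero => exact ⟨1, by simp [List.mem_singleton.1 hx], hone _⟩
  | succ j ih =>
    have hsub : ∀ {a : ℕ}, x ∈ treePath p T N j a →
        ∃ b : ℕ, x.core = a * b ∧ ∀ q : ℕ, q.Prime → q ∣ b → q ≤ p (j + 1) := fun hx ↦ by
      obtain ⟨b, hcore, hb⟩ := ih hx fun i hi q _ h ↦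
        (Nat.le_of_dvd (hp i).pos h).trans (hmono.monotone hi)
      exact ⟨b, hcore, fun q hq hqb ↦ (hb q hq hqb).trans (hmono.monotone j.le_succ)⟩
    by_cases h : T * (a * p (j + 1) ^ 2) ≤ N
    · rcases (mem_treePath_succ h).1 hx with hx | hx | hx | rfl
      · exact hsub hx
      · rcases core_eq_of_mem_connectorSegment hx with h | h | h
        exacts [⟨_, h, hprime j j.le_succ⟩, ⟨1, by simp [h], hone _⟩, ⟨_, h, hprime _ le_rfl⟩]
      · obtain ⟨b, hcore, hb⟩ := hsub hx
        refine ⟨p (j + 1) * b, by rw [hcore, mul_assoc], fun q hq hqd ↦ ?_⟩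
        exact (hq.dvd_mul.1 hqd).elim (hprime _ le_rfl q hq) (hb q hq)
      · exact ⟨_, rfl, hprime _ le_rfl⟩
    · rw [treePath_succ_of_lt (not_le.1 h)] at hx
      exact hsub hx

lemma not_mul_dvd_core_of_mem_treePath (hp : ∀ i, (p i).Prime) (hmono : StrictMono p) (ha : 0 < a)
    (hx : x ∈ treePath p T N j a) : ¬ a * p (j + 1) ∣ x.core := by
  obtain ⟨b, hcore, hb⟩ := exists_core_eq_mul_of_mem_treePath hp hmono hx
  rw [hcore, Nat.mul_dvd_mul_iff_left ha]
  exact fun h ↦ ((hmono j.lt_succ_self).trans_le (hb _ (hp _) h)).false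

lemma self_lt_mul_prime {q : ℕ} (ha : 0 < a) (hq : q.Prime) : a < a * q :=
  lt_mul_of_one_lt_right ha hq.one_lt

lemma notMem_treePath (hp : ∀ i, (p i).Prime) (hmono : StrictMono p) (ha : 0 < a) :
    ⟨a, 0, false⟩ ∉ treePath p T N j a := by
  induction j with
  | zero => simp [treePath]
  | succ j ih =>
    by_cases h : T * (a * p (j + 1) ^ 2) ≤ N
    · rw [mem_treePath_succ h]
      rintro (hx | hx | hx | hx)
      · exact ih hx
      · exact (index_eq_of_mem_connectorSegment hx).2.ne (index_eq_of_mem_connectorSegment hx).1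
      · obtain ⟨b, hcore, -⟩ := exists_core_eq_mul_of_mem_treePath hp hmono hx
        exact (self_lt_mul_prime ha (hp (j + 1))).not_ge (Nat.le_of_dvd ha ⟨b, hcore⟩)
      · exact (self_lt_mul_prime ha (hp (j + 1))).ne (congrArg PathVertex.core hx)
    · rwa [treePath_succ_of_lt (not_le.1 h)]

lemma nodup_connectorSegment (hp : ∀ i, (p i).Prime) (ha : 0 < a) (j : ℕ) :
    (connectorSegment p a j).Nodup := by
  cases j with
  | zero => exact List.nodup_nil
  | succ j => simp [connectorSegment, (self_lt_mul_prime ha (hp _)).ne']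

lemma nodup_treePath (hp : ∀ i, (p i).Prime) (hmono : StrictMono p) (ha : 0 < a) :
    (treePath p T N j a).Nodup := by
  induction j generalizing a with
  | zero => exact List.nodup_singleton _
  | succ j ih =>
    by_cases h : T * (a * p (j + 1) ^ 2) ≤ N
    · have hap : 0 < a * p (j + 1) := Nat.mul_pos ha (hp _).pos
      have hindex : ∀ {b : ℕ} {y}, y ∈ connectorSegment p a j → y ∉ treePath p T N j b :=
        fun hy hy' ↦ by
          have := index_eq_of_mem_connectorSegment hy
          have := index_lt_of_mem_treePath hy'
          lia
      rw [treePath, if_pos h, List.nodup_append', List.nodup_append', List.nodup_append']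
      refine ⟨ih ha, ⟨nodup_connectorSegment hp ha j, ⟨ih hap, List.nodup_singleton _, ?_⟩, ?_⟩, ?_⟩
      · exact List.disjoint_singleton.2 (notMem_treePath hp hmono hap)
      · refine List.disjoint_append_right.2 ⟨fun y ↦ hindex, List.disjoint_singleton.2 fun hy ↦ ?_⟩
        exact (index_eq_of_mem_connectorSegment hy).2.ne (index_eq_of_mem_connectorSegment hy).1
      · have hcore : ∀ y ∈ treePath p T N j a, ¬ a * p (j + 1) ∣ y.core := fun y ↦
          not_mul_dvd_core_of_mem_treePath hp hmono ha
        refine List.disjoint_append_right.2 ⟨fun y hy hy' ↦ hindex hy' hy,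
          List.disjoint_append_right.2 ⟨fun y hy hy' ↦ ?_, List.disjoint_singleton.2 fun hy ↦ ?_⟩⟩
        · obtain ⟨b, hb, -⟩ := exists_core_eq_mul_of_mem_treePath hp hmono hy'
          exact hcore y hy ⟨b, hb⟩
        · exact hcore _ hy dvd_rfl
    · rw [treePath_succ_of_lt (not_le.1 h)]
      exact ih ha

lemma nodup_treePath_concat (hp : ∀ i, (p i).Prime) (hmono : StrictMono p) (ha : 0 < a) :
    (treePath p T N j a ++ [PathVertex.mk a 0 false]).Nodup :=
  List.nodup_append'.2 ⟨nodup_treePath hp hmono ha, List.nodup_singleton _,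
    List.disjoint_singleton.2 (notMem_treePath hp hmono ha)⟩

lemma head?_treePath (p : ℕ → ℕ) (T N j a : ℕ) :
    (treePath p T N j a).head? = some ⟨a, 0, true⟩ := by
  induction j generalizing a with
  | zero => rfl
  | succ j ih =>
    rw [treePath]
    split_ifs
    · rw [List.head?_append, ih, Option.some_or]
    · exact ih a

lemma getLast?_treePath_succ (h : T * (a * p (j + 1) ^ 2) ≤ N) :
    (treePath p T N (j + 1) a).getLast? = some ⟨a * p (j + 1), 0, false⟩ := by
  simp only [treePath, if_pos h, ← List.append_assoc, List.getLast?_concat]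

lemma exists_getLast?_treePath (p : ℕ → ℕ) (T N j a : ℕ) :
    ∃ b d, (treePath p T N j a).getLast? = some ⟨a * b, 0, d⟩ := by
  induction j with
  | zero => exact ⟨1, true, by simp [treePath]⟩
  | succ j ih =>
    by_cases h : T * (a * p (j + 1) ^ 2) ≤ N
    · exact ⟨_, _, getLast?_treePath_succ h⟩
    · rwa [treePath_succ_of_lt (not_le.1 h)]

lemma isChain_treePath_concat (hc : c 0 = 1)
    (h : (treePath p T N j a).IsChain (PathVertex.Adj c)) :
    (treePath p T N j a ++ [PathVertex.mk a 0 false]).IsChain (PathVertex.Adj c) := by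
  obtain ⟨b, d, hlast⟩ := exists_getLast?_treePath p T N j a
  refine List.isChain_append.2 ⟨h, List.isChain_singleton _, ?_⟩
  simp [hlast, PathVertex.Adj, PathVertex.value, hc, mul_assoc]

lemma isChain_connectorSegment_append (hc : c 0 = 1) {l : List PathVertex}
    (hl : l.IsChain (PathVertex.Adj c)) (hhead : l.head? = some ⟨a * p (j + 1), 0, true⟩) :
    (connectorSegment p a j ++ l).IsChain (PathVertex.Adj c) := by
  cases j with
  | zero => exact hl
  | succ j =>
    refine List.isChain_append.2 ⟨?_, hl, ?_⟩
    · simp only [connectorSegment, List.isChain_cons_cons, List.isChain_singleton, and_true]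
      exact ⟨.inr (Nat.mul_dvd_mul (dvd_mul_right _ _) dvd_rfl),
        .inl (Nat.mul_dvd_mul (dvd_mul_right _ _) (Nat.mul_dvd_mul (one_dvd _) dvd_rfl))⟩
    · simp [hhead, connectorSegment, PathVertex.Adj, PathVertex.value, hc, ← mul_assoc]

lemma isChain_treePath (hmono : StrictMono p) (hc : c 0 = 1) :
    (treePath p T N j a).IsChain (PathVertex.Adj c) := by
  induction j generalizing a with
  | zero => exact List.isChain_singleton _
  | succ j ih =>
    by_cases h : T * (a * p (j + 1) ^ 2) ≤ N
    · have hhead : (treePath p T N j (a * p (j + 1)) ++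
          [PathVertex.mk (a * p (j + 1)) 0 false]).head? = some ⟨a * p (j + 1), 0, true⟩ := by
        rw [List.head?_append, head?_treePath, Option.some_or]
      rw [treePath, if_pos h]
      refine List.isChain_append.2
        ⟨ih, isChain_connectorSegment_append hc (isChain_treePath_concat hc ih) hhead, ?_⟩
      cases j with
      | zero =>
        simp only [treePath, connectorSegment, List.nil_append, List.cons_append, List.head?_cons,
          List.getLast?_singleton, Option.mem_some_iff, forall_eq']
        exact .inl (Nat.mul_dvd_mul (dvd_mul_right _ _) dvd_rfl)
      | succ i =>
        have hi : T * (a * p (i + 1) ^ 2) ≤ N := by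
          have : p (i + 1) ≤ p (i + 1 + 1) := hmono.monotone (i + 1).le_succ
          exact le_trans (by gcongr) h
        simp [getLast?_treePath_succ hi, connectorSegment, PathVertex.Adj, PathVertex.value, hc]
    · rw [treePath_succ_of_lt (not_le.1 h)]
      exact ih

end TreePath

section ChainConstruction

open Filter Finset Real

lemma eq_of_mul_dense_eq_of_le {t a a' m m' : ℕ} (ht : 1 ≤ t) (ha : 0 < a) (ha' : 0 < a')
    (hm : 0 < m) (hm' : 0 < m') (hdense : IsDivisorDense t m')
    (h : ∀ q : ℕ, q.Prime → q ∣ a → t * m < q) (h' : ∀ q : ℕ, q.Prime → q ∣ a' → t * m' < q)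
    (heq : a * m = a' * m') (hle : m ≤ m') : m = m' := by
  have hmt : m' ≤ t * m' := Nat.le_mul_of_pos_left _ ht
  set r := smoothPart a (t * m' + 1)
  have hr : m' = r * m := by
    rw [← smoothPart_eq_self hm.ne' (p := t * m' + 1) fun q _ hqm ↦ by
      have := Nat.le_of_dvd hm hqm; lia, ← smoothPart_mul ha.ne' hm.ne', heq,
      smoothPart_mul ha'.ne' hm'.ne', smoothPart_eq_one fun q hq hqa ↦ h' q hq hqa, one_mul]
    exact (smoothPart_eq_self hm'.ne' fun q _ hqm ↦ by
      have := Nat.le_of_dvd hm' hqm; lia).symm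
  suffices hr1 : r = 1 by rw [hr, hr1, one_mul]
  by_contra hr1
  have hq := Nat.minFac_prime hr1
  set q := r.minFac
  have hqr : q ∣ r := r.minFac_dvd
  have hsmooth : smoothPart m' q = smoothPart m q := by
    rw [hr, smoothPart_mul (smoothPart_pos _ _).ne' hm.ne',
      smoothPart_eq_one fun s hs hsr ↦ Nat.minFac_le_of_dvd hs.two_le hsr, one_mul]
  have hle' : q ≤ t * m := calc
    q ≤ t * smoothPart m q := hsmooth ▸ hdense q hq (hr ▸ hqr.mul_right m)
    _ ≤ t * m := Nat.mul_le_mul_left _ (Nat.le_of_dvd hm (smoothPart_dvd hm.ne' q))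
  exact (h q hq (hqr.trans (smoothPart_dvd ha.ne' _))).not_ge hle'

lemma eq_of_mul_dense_eq {t a a' m m' : ℕ} (ht : 1 ≤ t) (ha : 0 < a) (ha' : 0 < a')
    (hm : 0 < m) (hm' : 0 < m') (hdense : IsDivisorDense t m) (hdense' : IsDivisorDense t m')
    (h : ∀ q : ℕ, q.Prime → q ∣ a → t * m < q) (h' : ∀ q : ℕ, q.Prime → q ∣ a' → t * m' < q)
    (heq : a * m = a' * m') : m = m' := by
  rcases le_total m m' with hle | hle
  · exact eq_of_mul_dense_eq_of_le ht ha ha' hm hm' hdense' h h' heq hle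
  · exact (eq_of_mul_dense_eq_of_le ht ha' ha hm' hm hdense h' h heq.symm hle).symm

lemma mul_mem_schinzelSet {t N a b m : ℕ} (ha : 0 < a)
    (hb : ∀ q : ℕ, q.Prime → q ∣ b → q < 4) (hm : ∀ q : ℕ, q.Prime → q ∣ m → 3 < q)
    (hdense : IsDivisorDense t m) (ham : ∀ q : ℕ, q.Prime → q ∣ a → 3 < q ∧ m < q)
    (haN : ∀ q : ℕ, q.Prime → q ∣ a → q * a ≤ N * smoothPart a q)
    (htN : t * (a * m) ≤ N) (hN : 3 * (a * (b * m)) ≤ N) : a * (b * m) ∈ schinzelSet N := by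
  have hb0 := ne_zero_of_lt_four_of_dvd hb
  have hm0 := ne_zero_of_three_lt_of_dvd hm
  have hbself : ∀ q, 3 < q → smoothPart b q = b := fun q hq ↦
    smoothPart_eq_self hb0 fun r hr hrb ↦ (hb r hr hrb).trans_le hq
  have hsmooth : ∀ q, smoothPart (a * (b * m)) q =
      smoothPart a q * (smoothPart b q * smoothPart m q) := fun q ↦ by
    rw [smoothPart_mul ha.ne' (mul_ne_zero hb0 hm0), smoothPart_mul hb0 hm0]
  have : 0 < a * (b * m) := by positivity
  refine mem_schinzelSet.2 ⟨⟨this, by lia⟩, fun q hq hqd ↦ ?_⟩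
  rw [hsmooth]
  have hpos := smoothPart_pos a q
  rcases hq.dvd_mul.1 hqd with hqa | hqbm
  · have hmself : smoothPart m q = m := smoothPart_eq_self hm0 fun r _ hrm ↦
      (Nat.le_of_dvd hm0.bot_lt hrm).trans_lt (ham q hq hqa).2
    rw [hbself q (ham q hq hqa).1, hmself, ← mul_assoc, ← mul_assoc N]
    exact Nat.mul_le_mul_right _ (haN q hq hqa)
  · rcases hq.dvd_mul.1 hqbm with hqb | hqm
    · calc q * (a * (b * m)) ≤ 3 * (a * (b * m)) :=
            Nat.mul_le_mul_right _ (Nat.le_of_lt_succ (hb q hq hqb))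
        _ ≤ N := hN
        _ ≤ N * (smoothPart a q * (smoothPart b q * smoothPart m q)) :=
          Nat.le_mul_of_pos_right _
            (Nat.mul_pos hpos (Nat.mul_pos (smoothPart_pos b q) (smoothPart_pos m q)))
    · rw [hbself q (hm q hq hqm)]
      calc q * (a * (b * m)) ≤ t * smoothPart m q * (a * (b * m)) :=
            Nat.mul_le_mul_right _ (hdense q hq hqm)
        _ = t * (a * m) * (b * smoothPart m q) := by ring
        _ ≤ N * (b * smoothPart m q) := Nat.mul_le_mul_right _ htN
        _ ≤ N * (smoothPart a q * (b * smoothPart m q)) :=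
          Nat.mul_le_mul_left _ (Nat.le_mul_of_pos_left _ hpos)

/-- The condition `T * S(a) ≤ N` for `a > 1`, where `S` is the Schinzel–Szekeres function, imposed
on each prime factor separately; it is vacuous for `a = 1`. -/
def ScaledSchinzelLE (T N a : ℕ) : Prop :=
  ∀ q : ℕ, q.Prime → q ∣ a → T * (q * a) ≤ N * smoothPart a q

lemma scaledSchinzelLE_one (T N : ℕ) : ScaledSchinzelLE T N 1 := fun _ hq h ↦
  absurd (Nat.dvd_one.1 h) hq.ne_one

lemma scaledSchinzelLE_of_isDivisorDense {T N t a : ℕ} (hdense : IsDivisorDense t a)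
    (h : T * t * a ≤ N) : ScaledSchinzelLE T N a := fun q hq hqa ↦ calc
  T * (q * a) ≤ T * (t * smoothPart a q * a) := by
    gcongr
    exact hdense q hq hqa
  _ = T * t * a * smoothPart a q := by ring
  _ ≤ N * smoothPart a q := Nat.mul_le_mul_right _ h

lemma ScaledSchinzelLE.mul_prime {T N a q : ℕ} (h : ScaledSchinzelLE T N a) (hq : q.Prime)
    (ha : 0 < a) (haq : ∀ r : ℕ, r.Prime → r ∣ a → q < r) (hN : T * (a * q ^ 2) ≤ N) :
    ScaledSchinzelLE T N (a * q) := by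
  intro r hr hrd
  rw [smoothPart_mul ha.ne' hq.ne_zero]
  rcases hr.dvd_mul.1 hrd with hra | hrq
  · rw [smoothPart_prime hq, if_pos (haq r hr hra)]
    calc T * (r * (a * q)) = T * (r * a) * q := by ring
      _ ≤ N * smoothPart a r * q := Nat.mul_le_mul_right _ (h r hr hra)
      _ = N * (smoothPart a r * q) := mul_assoc _ _ _
  · obtain rfl := (Nat.prime_dvd_prime_iff_eq hr hq).1 hrq
    calc T * (r * (a * r)) = T * (a * r ^ 2) := by ring
      _ ≤ N := hN
      _ ≤ N * (smoothPart a r * smoothPart r r) :=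
        Nat.le_mul_of_pos_right _ (Nat.mul_pos (smoothPart_pos a r) (smoothPart_pos r r))

namespace ConnectorSystem

variable (D : ConnectorSystem) {N j a : ℕ} {x y : PathVertex}

/-- The primes used for branching in the chain: all those from the `s`-th one on. -/
noncomputable def p (i : ℕ) : ℕ := Nat.nth Nat.Prime (D.s + i)

/-- The connectors themselves. -/
def c (i : ℕ) : ℕ := D.smooth i * D.rough i

/-- The safety factor in the branching condition. It leaves room for multiplication by
connectors. -/
noncomputable def T : ℕ := 6 * D.L * D.p 0

lemma prime_p (i : ℕ) : (D.p i).Prime := Nat.prime_nth_prime _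

lemma strictMono_p : StrictMono D.p := fun _ _ h ↦
  Nat.nth_strictMono Nat.infinite_setOfPred_prime (Nat.add_lt_add_left h D.s)

lemma p_zero_le (i : ℕ) : D.p 0 ≤ D.p i := D.strictMono_p.monotone i.zero_le

lemma three_lt_p (i : ℕ) : 3 < D.p i := by
  have := Nat.add_two_le_nth_prime (D.s + i)
  have := D.two_le_s
  simp only [p]
  lia

lemma c_zero : D.c 0 = 1 := by rw [c, D.smooth_zero, D.rough_zero]

lemma rough_pos (i : ℕ) : 0 < D.rough i :=
  (ne_zero_of_three_lt_of_dvd (D.three_lt_of_dvd_rough i)).bot_lt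

lemma rough_lt_p (i : ℕ) : D.rough i < D.p i :=
  (Nat.le_mul_of_pos_left _ D.one_le_t).trans_lt (D.t_mul_rough_lt i)

lemma six_mul_L_le_T : 6 * D.L ≤ D.T := Nat.le_mul_of_pos_right _ (D.prime_p 0).pos

lemma T_pos : 0 < D.T := lt_of_lt_of_le (by have := D.one_le_L; lia) D.six_mul_L_le_T

/-- The conditions on a vertex that make its value an element of the set of integers `n` with
`S(n) ≤ N`, and that make vertices recoverable from their values. -/
structure Admissible (N : ℕ) (x : PathVertex) : Prop where
  core_pos : 0 < x.core
  p_le_of_dvd : ∀ q : ℕ, q.Prime → q ∣ x.core → D.p x.index ≤ q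
  scaled : ScaledSchinzelLE D.T N x.core
  mul_p_le : 6 * D.L * (x.core * D.p x.index) ≤ N

/-- The `3`-smooth part of the cofactor of the core in the value of a vertex. -/
def smoothFactor (x : PathVertex) : ℕ := (bif x.doubled then 2 else 1) * D.smooth x.index

lemma value_eq (x : PathVertex) :
    x.value D.c = x.core * (D.smoothFactor x * D.rough x.index) := by
  rw [PathVertex.value, c, smoothFactor, mul_assoc (bif _ then _ else _)]

lemma lt_four_of_dvd_smoothFactor (x : PathVertex) (q : ℕ) (hq : q.Prime)
    (h : q ∣ D.smoothFactor x) : q < 4 := by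
  rcases hq.dvd_mul.1 h with h | h
  · refine (Nat.le_of_dvd ?_ h).trans_lt ?_ <;> cases x.doubled <;> simp
  · exact D.lt_four_of_dvd_smooth x.index q hq h

lemma eq_of_smoothFactor_eq (h : D.smoothFactor x = D.smoothFactor y) :
    x.doubled = y.doubled ∧ D.smooth x.index = D.smooth y.index := by
  have hxy := D.smooth_ne_two_mul x.index y.index
  have hyx := D.smooth_ne_two_mul y.index x.index
  unfold smoothFactor at h
  cases hx : x.doubled <;> cases hy : y.doubled <;>
    simp only [hx, hy, cond_true, cond_false, one_mul] at h
  · exact ⟨rfl, h⟩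
  · exact absurd h hxy
  · exact absurd h.symm hyx
  · exact ⟨rfl, by lia⟩

variable {D}

lemma Admissible.smoothPart_value (hx : D.Admissible N x) :
    smoothPart (x.value D.c) 4 = D.smoothFactor x := by
  rw [D.value_eq, mul_left_comm]
  refine smoothPart_mul_four (D.lt_four_of_dvd_smoothFactor x) fun q hq hqd ↦ ?_
  rcases hq.dvd_mul.1 hqd with h | h
  · exact (D.three_lt_p _).trans_le (hx.p_le_of_dvd q hq h)
  · exact D.three_lt_of_dvd_rough _ q hq h

lemma Admissible.eq_of_value_eq (hx : D.Admissible N x) (hy : D.Admissible N y)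
    (h : x.value D.c = y.value D.c) : x = y := by
  have hfactor : D.smoothFactor x = D.smoothFactor y := by
    rw [← hx.smoothPart_value, h, hy.smoothPart_value]
  obtain ⟨hdoubled, hsmooth⟩ := D.eq_of_smoothFactor_eq hfactor
  have hmul : x.core * D.rough x.index = y.core * D.rough y.index := by
    rw [D.value_eq, D.value_eq, ← hfactor, mul_left_comm, mul_left_comm y.core] at h
    exact Nat.eq_of_mul_eq_mul_left
      (ne_zero_of_lt_four_of_dvd (D.lt_four_of_dvd_smoothFactor x)).bot_lt h
  have hrough : D.rough x.index = D.rough y.index :=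
    eq_of_mul_dense_eq D.one_le_t hx.core_pos hy.core_pos (D.rough_pos _) (D.rough_pos _)
      (D.isDivisorDense_rough _) (D.isDivisorDense_rough _)
      (fun q hq hqx ↦ (D.t_mul_rough_lt _).trans_le (hx.p_le_of_dvd q hq hqx))
      (fun q hq hqy ↦ (D.t_mul_rough_lt _).trans_le (hy.p_le_of_dvd q hq hqy)) hmul
  have hindex : x.index = y.index :=
    D.smooth_mul_rough_injective (congrArg₂ (· * ·) hsmooth hrough)
  rw [hrough] at hmul
  exact PathVertex.ext (Nat.eq_of_mul_eq_mul_right (D.rough_pos _) hmul) hindex hdoubled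

lemma Admissible.value_mem_schinzelSet (hx : D.Admissible N x) :
    x.value D.c ∈ schinzelSet N := by
  have hL := D.one_le_L
  rw [D.value_eq]
  refine mul_mem_schinzelSet (t := D.t) hx.core_pos (D.lt_four_of_dvd_smoothFactor x)
    (D.three_lt_of_dvd_rough _) (D.isDivisorDense_rough _) (fun q hq hqx ↦ ?_)
    (fun q hq hqx ↦ (Nat.le_mul_of_pos_left _ D.T_pos).trans (hx.scaled q hq hqx)) ?_ ?_
  · have hle := hx.p_le_of_dvd q hq hqx
    exact ⟨(D.three_lt_p _).trans_le hle, (D.rough_lt_p _).trans_le hle⟩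
  · calc D.t * (x.core * D.rough x.index) = x.core * (D.t * D.rough x.index) := by ring
      _ ≤ x.core * D.p x.index := Nat.mul_le_mul_left _ (D.t_mul_rough_lt _).le
      _ ≤ 6 * D.L * (x.core * D.p x.index) := Nat.le_mul_of_pos_left _ (by lia)
      _ ≤ N := hx.mul_p_le
  · have hfactor : D.smoothFactor x ≤ 2 * D.smooth x.index :=
      Nat.mul_le_mul_right _ (by cases x.doubled <;> simp)
    calc 3 * (x.core * (D.smoothFactor x * D.rough x.index))
        ≤ 3 * (x.core * (2 * D.smooth x.index * D.rough x.index)) := by gcongr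
      _ = 6 * (x.core * (D.smooth x.index * D.rough x.index)) := by ring
      _ ≤ 6 * (x.core * (D.L * D.p x.index)) :=
        Nat.mul_le_mul_left _ (Nat.mul_le_mul_left _ (D.smooth_mul_rough_le _))
      _ = 6 * D.L * (x.core * D.p x.index) := by ring
      _ ≤ N := hx.mul_p_le

variable (D) in
/-- The conditions under which all vertices of `treePath D.p D.T N j a` are admissible. -/
structure TreeNode (N j a : ℕ) : Prop where
  pos : 0 < a
  p_lt_of_dvd : ∀ q : ℕ, q.Prime → q ∣ a → D.p j < q
  scaled : ScaledSchinzelLE D.T N a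
  le : D.T * a ≤ N

lemma treeNode_one (hN : D.T ≤ N) (j : ℕ) : D.TreeNode N j 1 where
  pos := one_pos
  p_lt_of_dvd _ hq h := absurd (Nat.dvd_one.1 h) hq.ne_one
  scaled := scaledSchinzelLE_one _ _
  le := by rwa [mul_one]

lemma TreeNode.of_succ (h : D.TreeNode N (j + 1) a) : D.TreeNode N j a where
  pos := h.pos
  p_lt_of_dvd q hq hqa := (D.strictMono_p j.lt_succ_self).trans (h.p_lt_of_dvd q hq hqa)
  scaled := h.scaled
  le := h.le

lemma mul_prime_le (hN : D.T * (a * D.p j ^ 2) ≤ N) : D.T * (a * D.p j) ≤ N :=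
  le_trans (by gcongr; exact Nat.le_self_pow two_ne_zero _) hN

lemma TreeNode.mul_prime (h : D.TreeNode N (j + 1) a) (hN : D.T * (a * D.p (j + 1) ^ 2) ≤ N) :
    D.TreeNode N j (a * D.p (j + 1)) where
  pos := Nat.mul_pos h.pos (D.prime_p _).pos
  p_lt_of_dvd q hq hqd := (hq.dvd_mul.1 hqd).elim (h.of_succ.p_lt_of_dvd q hq) fun hqp ↦ by
    rw [(Nat.prime_dvd_prime_iff_eq hq (D.prime_p _)).1 hqp]
    exact D.strictMono_p j.lt_succ_self
  scaled := h.scaled.mul_prime (D.prime_p _) h.pos h.p_lt_of_dvd hN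
  le := mul_prime_le hN

lemma TreeNode.admissible_zero (h : D.TreeNode N j a) (d : Bool) : D.Admissible N ⟨a, 0, d⟩ where
  core_pos := h.pos
  p_le_of_dvd q hq hqa := (D.p_zero_le j).trans (h.p_lt_of_dvd q hq hqa).le
  scaled := h.scaled
  mul_p_le := by
    have := h.le
    rwa [T, mul_assoc, mul_comm (D.p 0)] at this

lemma TreeNode.admissible (h : D.TreeNode N j a) (hN : D.T * (a * D.p j) ≤ N) (d : Bool) :
    D.Admissible N ⟨a, j, d⟩ where
  core_pos := h.pos
  p_le_of_dvd q hq hqa := (h.p_lt_of_dvd q hq hqa).le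
  scaled := h.scaled
  mul_p_le := (Nat.mul_le_mul_right _ D.six_mul_L_le_T).trans hN

lemma TreeNode.admissible_of_mem_connectorSegment (h : D.TreeNode N (j + 1) a)
    (hN : D.T * (a * D.p (j + 1) ^ 2) ≤ N) (hx : x ∈ connectorSegment D.p a j) :
    D.Admissible N x := by
  have hmono : D.p j ≤ D.p (j + 1) := D.strictMono_p.monotone j.le_succ
  have hN' : D.T * (a * D.p j ^ 2) ≤ N := le_trans (by gcongr) hN
  cases j <;> simp only [connectorSegment, List.mem_cons, List.not_mem_nil, or_false] at hx
  rename_i i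
  rcases hx with rfl | rfl | rfl
  · have hmul := h.of_succ.mul_prime hN'
    refine ⟨hmul.pos, fun q hq hqd ↦ ?_, hmul.scaled, ?_⟩
    · rcases hq.dvd_mul.1 hqd with hqa | hqp
      · exact (h.of_succ.p_lt_of_dvd q hq hqa).le
      · exact ((Nat.prime_dvd_prime_iff_eq hq (D.prime_p _)).1 hqp).ge
    · rw [mul_assoc a, ← pow_two]
      exact (Nat.mul_le_mul_right _ D.six_mul_L_le_T).trans hN'
  · exact h.of_succ.admissible (mul_prime_le hN') _
  · refine (h.mul_prime hN).admissible (le_trans ?_ hN) _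
    rw [mul_assoc a, pow_two]
    gcongr

lemma TreeNode.admissible_of_mem_treePath (h : D.TreeNode N j a)
    (hx : x ∈ treePath D.p D.T N j a) : D.Admissible N x := by
  induction j generalizing a with
  | zero => exact List.mem_singleton.1 hx ▸ h.admissible_zero _
  | succ j ih =>
    by_cases hN : D.T * (a * D.p (j + 1) ^ 2) ≤ N
    · rcases (mem_treePath_succ hN).1 hx with hx | hx | hx | rfl
      · exact ih h.of_succ hx
      · exact h.admissible_of_mem_connectorSegment hN hx
      · exact ih (h.mul_prime hN) hx
      · exact (h.mul_prime hN).admissible_zero _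
    · exact ih h.of_succ (treePath_succ_of_lt (not_le.1 hN) ▸ hx)

variable (D) in
lemma le_p_of_prime_of_lt {q : ℕ} (hq : q.Prime) (h : q < D.p (j + 1)) : q ≤ D.p j :=
  Nat.le_nth_of_lt_nth_succ h hq

lemma branching_condition {b : ℕ} (ha : 0 < a) (hb : 0 < b)
    (hap : ∀ q : ℕ, q.Prime → q ∣ a → D.p j ≤ q) (hbp : ∀ q : ℕ, q.Prime → q ∣ b → q < D.p j)
    (h : ScaledSchinzelLE D.T N (a * (D.p j * b))) : D.T * (a * D.p j ^ 2) ≤ N := by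
  have hp := D.prime_p j
  have hsmooth : smoothPart (a * (D.p j * b)) (D.p j) = b := by
    rw [smoothPart_mul ha.ne' (Nat.mul_ne_zero hp.ne_zero hb.ne'),
      smoothPart_mul hp.ne_zero hb.ne', smoothPart_eq_one hap, smoothPart_prime hp,
      if_neg (lt_irrefl _), smoothPart_eq_self hb.ne' hbp, one_mul, one_mul]
  refine Nat.le_of_mul_le_mul_right ?_ hb
  calc D.T * (a * D.p j ^ 2) * b = D.T * (D.p j * (a * (D.p j * b))) := by ring
    _ ≤ N * smoothPart (a * (D.p j * b)) (D.p j) :=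
      h _ hp ((dvd_mul_right _ _).mul_left _)
    _ = N * b := by rw [hsmooth]

lemma mem_treePath_concat {b : ℕ} (ha : 0 < a) (hb : Squarefree b)
    (hap : ∀ q : ℕ, q.Prime → q ∣ a → D.p j < q)
    (hbp : ∀ q : ℕ, q.Prime → q ∣ b → D.p 0 < q ∧ q ≤ D.p j)
    (h : ScaledSchinzelLE D.T N (a * b)) :
    ⟨a * b, 0, false⟩ ∈ treePath D.p D.T N j a ++ [PathVertex.mk a 0 false] := by
  induction j generalizing a b with
  | zero =>
    obtain rfl : b = 1 := by
      by_contra hb1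
      obtain ⟨hlt, hle⟩ := hbp _ (Nat.minFac_prime hb1) (Nat.minFac_dvd b)
      exact hlt.not_ge hle
    simp
  | succ j ih =>
    have hlt : D.p j < D.p (j + 1) := D.strictMono_p j.lt_succ_self
    have hp := D.prime_p (j + 1)
    by_cases hd : D.p (j + 1) ∣ b
    · obtain ⟨b, rfl⟩ := hd
      have hnd : ¬ D.p (j + 1) ∣ b :=
        hp.coprime_iff_not_dvd.1 (Nat.coprime_of_squarefree_mul hb)
      have hbp' : ∀ q : ℕ, q.Prime → q ∣ b → D.p 0 < q ∧ q < D.p (j + 1) := fun q hq hqb ↦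
        (hbp q hq (hqb.mul_left _)).imp_right fun hle ↦ hle.lt_of_ne fun heq ↦ hnd (heq ▸ hqb)
      have hN := branching_condition ha (Nat.pos_of_ne_zero (right_ne_zero_of_mul hb.ne_zero))
        (fun q hq hqa ↦ (hap q hq hqa).le) (fun q hq hqb ↦ (hbp' q hq hqb).2) h
      have hmem := ih (a := a * D.p (j + 1)) (b := b) (Nat.mul_pos ha hp.pos)
        (hb.squarefree_of_dvd (dvd_mul_left _ _)) (fun q hq hqd ↦ ?_)
        (fun q hq hqb ↦ (hbp' q hq hqb).imp_right (D.le_p_of_prime_of_lt hq))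
        (by rwa [mul_assoc])
      · rw [← mul_assoc]
        simp only [List.mem_append, mem_treePath_succ hN, List.mem_singleton] at hmem ⊢
        tauto
      · rcases hq.dvd_mul.1 hqd with hqa | hqp
        · exact hlt.trans (hap q hq hqa)
        · rwa [(Nat.prime_dvd_prime_iff_eq hq hp).1 hqp]
    · have hmem := ih ha hb (fun q hq hqa ↦ hlt.trans (hap q hq hqa)) (fun q hq hqb ↦
        (hbp q hq hqb).imp_right fun hle ↦ D.le_p_of_prime_of_lt hq <|
          hle.lt_of_ne fun heq ↦ hd (heq ▸ hqb)) h
      rw [List.mem_append] at hmem ⊢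
      refine hmem.imp_left fun hmem ↦ ?_
      by_cases hN : D.T * (a * D.p (j + 1) ^ 2) ≤ N
      · exact (mem_treePath_succ hN).2 (.inl hmem)
      · rwa [treePath_succ_of_lt (not_le.1 hN)]

lemma exists_chain_of_scaledSchinzelLE (hN : D.T ≤ N) {S : Finset ℕ}
    (hS : ∀ b ∈ S, Squarefree b ∧ b ≤ N ∧ (∀ q : ℕ, q.Prime → q ∣ b → D.p 0 < q) ∧
      ScaledSchinzelLE D.T N b) :
    ∃ l : List ℕ, l.Nodup ∧ (∀ n ∈ l, n ∈ schinzelSet N) ∧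
      l.IsChain (fun a b ↦ a ∣ b ∨ b ∣ a) ∧ #S ≤ l.length := by
  classical
  set l := treePath D.p D.T N N 1 ++ [PathVertex.mk 1 0 false]
  have hnode := treeNode_one hN N
  have hadm : ∀ x ∈ l, D.Admissible N x := by
    intro x hx
    rcases List.mem_append.1 hx with hx | hx
    · exact hnode.admissible_of_mem_treePath hx
    · exact List.mem_singleton.1 hx ▸ hnode.admissible_zero _
  have hnodup : l.Nodup := nodup_treePath_concat D.prime_p D.strictMono_p one_pos
  refine ⟨l.map (PathVertex.value D.c), ?_, ?_, ?_, ?_⟩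
  · exact hnodup.map_on fun x hx y hy h ↦ (hadm x hx).eq_of_value_eq (hadm y hy) h
  · simp only [List.forall_mem_map]
    exact fun x hx ↦ (hadm x hx).value_mem_schinzelSet
  · exact (List.isChain_map _).2
      (isChain_treePath_concat D.c_zero (isChain_treePath D.strictMono_p D.c_zero))
  · rw [List.length_map, ← List.toFinset_card_of_nodup hnodup]
    refine card_le_card_of_injOn (fun b ↦ ⟨b, 0, false⟩) (fun b hb ↦ ?_)
      fun _ _ _ _ h ↦ congrArg PathVertex.core h
    obtain ⟨hsq, hbN, hbp, hscaled⟩ := hS b hb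
    have hmem := mem_treePath_concat (j := N) one_pos hsq hnode.p_lt_of_dvd
      (fun q hq hqb ↦ ⟨hbp q hq hqb, (Nat.le_of_dvd (Nat.pos_of_ne_zero hsq.ne_zero) hqb).trans
        (hbN.trans D.strictMono_p.le_apply)⟩) (by rwa [one_mul])
    rw [one_mul] at hmem
    exact List.mem_toFinset.2 hmem

end ConnectorSystem

lemma exists_chain_length_ge : ∃ c : ℝ, 0 < c ∧ ∀ᶠ N : ℕ in atTop, ∃ l : List ℕ, l.Nodup ∧
    (∀ n ∈ l, n ∈ schinzelSet N) ∧ l.IsChain (fun a b ↦ a ∣ b ∨ b ∣ a) ∧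
      c * N / log N ≤ l.length := by
  obtain ⟨D⟩ := nonempty_connectorSystem
  obtain ⟨t, δ, ht, hδ, hcard⟩ := exists_card_denseSquarefreeIcc_ge (D.p 0)
  set Q := D.T * t
  have hQ : 0 < Q := Nat.mul_pos D.T_pos ht
  refine ⟨δ / (2 * Q), by positivity, ?_⟩
  filter_upwards [eventually_ge_atTop D.T, eventually_div_log_le hQ,
    (Nat.tendsto_div_const_atTop hQ.ne').eventually hcard] with N hN hlog hcard
  obtain ⟨l, hnodup, hmem, hchain, hlen⟩ := D.exists_chain_of_scaledSchinzelLE (N := N)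
    (S := denseSquarefreeIcc (D.p 0) t (N / Q) 1 (N / Q)) hN fun b hb ↦ by
    obtain ⟨hb, -, hle⟩ := mem_denseSquarefreeIcc.1 hb
    obtain ⟨hsq, hprime, hdense⟩ := mem_denseSquarefree.1 hb
    refine ⟨hsq, hle.trans (Nat.div_le_self _ _), fun q hq hqb ↦ (hprime q hq hqb).1,
      scaledSchinzelLE_of_isDivisorDense hdense ?_⟩
    exact (Nat.mul_le_mul_left _ hle).trans (Nat.mul_div_le _ _)
  refine ⟨l, hnodup, hmem, hchain, ?_⟩
  calc δ / (2 * Q) * N / log N = δ / (2 * Q) * (N / log N) := mul_div_assoc _ _ _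
    _ ≤ δ / (2 * Q) * (2 * Q * ((N / Q : ℕ) / log (N / Q : ℕ))) := by gcongr
    _ = δ * (N / Q : ℕ) / log (N / Q : ℕ) := by field_simp
    _ ≤ l.length := hcard.trans (mod_cast hlen)

end ChainConstruction

section SchinzelSzekeres

open Finset

lemma foldr_max_le_iff {l : List ℕ} {m N : ℕ} :
    l.foldr max m ≤ N ↔ m ≤ N ∧ ∀ a ∈ l, a ≤ N := by
  induction l with
  | nil => simp
  | cons b l ih =>
    rw [List.foldr_cons, max_le_iff, ih, List.forall_mem_cons]
    tauto

lemma SS_le_iff {n N : ℕ} : SS n ≤ N ↔ 1 ≤ N ∧ ∀ (A B : List ℕ) (p : ℕ),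
    n.primeFactorsList = A ++ p :: B → p * (p * B.prod) ≤ N := by
  rw [SS, foldr_max_le_iff]
  refine and_congr_right fun _ ↦ ⟨fun h A B p hl ↦ ?_, fun h a ha ↦ ?_⟩
  · have hmem := h _ (List.mem_map.2 ⟨A.length, by simp [hl], rfl⟩)
    rwa [hl, List.drop_left, List.headI_cons, List.prod_cons] at hmem
  · obtain ⟨j, hj, rfl⟩ := List.mem_map.1 ha
    have hdrop := List.drop_eq_getElem_cons (List.mem_range.1 hj)
    rw [hdrop, List.headI_cons, List.prod_cons]
    exact h (n.primeFactorsList.take j) _ _ (by rw [← hdrop, List.take_append_drop])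

variable {n p : ℕ} {A B : List ℕ}

lemma smoothPart_eq_prod_filter (h : n.primeFactorsList = A ++ p :: B) :
    smoothPart n p = (A.filter (· < p)).prod := by
  have hsorted := (Nat.primeFactorsList_sorted n).pairwise
  rw [h, List.pairwise_append, List.pairwise_cons] at hsorted
  have hfilter : (p :: B).filter (· < p) = [] := by
    refine List.filter_eq_nil_iff.2 (List.forall_mem_cons.2 ⟨by simp, fun q hq ↦ ?_⟩)
    simpa using hsorted.2.1.1 q hq
  rw [smoothPart, h, List.filter_append, hfilter, List.append_nil]

lemma smoothPart_eq_prod (h : n.primeFactorsList = A ++ p :: B) (hp : p ∉ A) :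
    smoothPart n p = A.prod := by
  have hsorted := (Nat.primeFactorsList_sorted n).pairwise
  rw [h, List.pairwise_append] at hsorted
  rw [smoothPart_eq_prod_filter h, List.filter_eq_self.2]
  exact fun q hq ↦ decide_eq_true <|
    (hsorted.2.2 q hq p List.mem_cons_self).lt_of_ne fun heq ↦ hp (heq ▸ hq)

lemma prod_mul_eq_of_primeFactorsList_eq (hn : n ≠ 0) (h : n.primeFactorsList = A ++ p :: B) :
    A.prod * (p * B.prod) = n := by
  rw [← List.prod_cons, ← List.prod_append, ← h, Nat.prod_primeFactorsList hn]

lemma le_SS (hn : n ≠ 0) : n ≤ SS n := by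
  obtain ⟨hone, hle⟩ := SS_le_iff.1 (le_refl (SS n))
  rcases hl : n.primeFactorsList with _ | ⟨p, B⟩
  · calc n = 1 := by rw [← Nat.prod_primeFactorsList hn, hl, List.prod_nil]
      _ ≤ SS n := hone
  · have hp : p.Prime := Nat.prime_of_mem_primeFactorsList (hl ▸ List.mem_cons_self)
    calc n = p * B.prod := by rw [← List.prod_cons, ← hl, Nat.prod_primeFactorsList hn]
      _ ≤ p * (p * B.prod) := Nat.le_mul_of_pos_left _ hp.pos
      _ ≤ SS n := hle [] B p hl

lemma SS_le_iff_mem_schinzelSet {N : ℕ} (hn : n ≠ 0) : SS n ≤ N ↔ n ∈ schinzelSet N := by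
  rw [mem_schinzelSet]
  constructor
  · refine fun h ↦ ⟨⟨hn.bot_lt, (le_SS hn).trans h⟩, fun p hp hpn ↦ ?_⟩
    obtain ⟨A, B, hl, hA⟩ :=
      List.eq_append_cons_of_mem ((Nat.mem_primeFactorsList hn).2 ⟨hp, hpn⟩)
    calc p * n = p * (p * B.prod) * A.prod := by
          rw [← prod_mul_eq_of_primeFactorsList_eq hn hl]
          ring
      _ ≤ N * A.prod := Nat.mul_le_mul_right _ ((SS_le_iff.1 h).2 A B p hl)
      _ = N * smoothPart n p := by rw [smoothPart_eq_prod hl hA]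
  · rintro ⟨⟨hn1, hnN⟩, h⟩
    refine SS_le_iff.2 ⟨hn1.trans hnN, fun A B p hl ↦ ?_⟩
    have hmem : p ∈ n.primeFactorsList := by simp [hl]
    have hprod := prod_mul_eq_of_primeFactorsList_eq hn hl
    have hA : 0 < A.prod := Nat.pos_of_ne_zero (left_ne_zero_of_mul (hprod ▸ hn))
    refine Nat.le_of_mul_le_mul_right ?_ hA
    calc p * (p * B.prod) * A.prod = p * n := by
          rw [← hprod]
          ring
      _ ≤ N * smoothPart n p :=
        h p (Nat.prime_of_mem_primeFactorsList hmem) (Nat.dvd_of_mem_primeFactorsList hmem)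
      _ = N * (A.filter (· < p)).prod := by rw [smoothPart_eq_prod_filter hl]
      _ ≤ N * A.prod :=
        Nat.mul_le_mul_left _ (Nat.le_of_dvd hA List.filter_sublist.prod_dvd_prod)

lemma SS_le_iff_mem_schinzelSet_floor {x : ℝ} (hx : 0 ≤ x) (hn : n ≠ 0) :
    (SS n : ℝ) ≤ x ↔ n ∈ schinzelSet ⌊x⌋₊ := by
  rw [← SS_le_iff_mem_schinzelSet hn, Nat.le_floor_iff hx]

lemma length_le_card_schinzelSet {x : ℝ} (hx : 0 ≤ x) {l : List ℕ} (hl : l.Nodup)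
    (h : ∀ n ∈ l, 1 ≤ n ∧ (SS n : ℝ) ≤ x) : l.length ≤ #(schinzelSet ⌊x⌋₊) := by
  rw [← List.toFinset_card_of_nodup hl]
  refine card_le_card fun n hn ↦ ?_
  obtain ⟨hn1, hnx⟩ := h n (List.mem_toFinset.1 hn)
  exact (SS_le_iff_mem_schinzelSet_floor hx (Nat.ne_of_gt hn1)).1 hnx

lemma fa_le_card_schinzelSet {x : ℝ} (hx : 0 ≤ x) : fa x ≤ #(schinzelSet ⌊x⌋₊) := by
  refine csSup_le ⟨0, [], ⟨List.nodup_nil, by simp, List.isChain_nil⟩, by simp, rfl⟩ ?_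
  rintro _ ⟨l, hl, h, rfl⟩
  exact length_le_card_schinzelSet hx hl.1 h

lemma length_le_fa {x : ℝ} (hx : 0 ≤ x) {l : List ℕ} (hnodup : l.Nodup)
    (hmem : ∀ n ∈ l, n ∈ schinzelSet ⌊x⌋₊) (hchain : l.IsChain (fun a b ↦ a ∣ b ∨ b ∣ a)) :
    l.length ≤ fa x := by
  have hpos : ∀ n ∈ l, 0 < n := fun n hn ↦ (mem_schinzelSet.1 (hmem n hn)).1.1
  refine le_csSup ⟨#(schinzelSet ⌊x⌋₊), ?_⟩ ⟨l, ⟨hnodup, hpos, hchain⟩, fun n hn ↦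
    ⟨hpos n hn, (SS_le_iff_mem_schinzelSet_floor hx (hpos n hn).ne').2 (hmem n hn)⟩, rfl⟩
  rintro _ ⟨l', hl', h, rfl⟩
  exact length_le_card_schinzelSet hx hl'.1 h

lemma one_le_fa {x : ℝ} (hx : 1 ≤ x) : 1 ≤ fa x := by
  refine length_le_fa (zero_le_one.trans hx) (List.nodup_singleton 1) (fun n hn ↦ ?_)
    (List.isChain_singleton 1)
  rw [List.mem_singleton.1 hn]
  exact mem_schinzelSet.2 ⟨⟨le_rfl, Nat.floor_pos.2 hx⟩, fun p hp hp1 ↦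
    absurd (Nat.dvd_one.1 hp1) hp.ne_one⟩

end SchinzelSzekeres

section ChainLength

open Filter Finset Real

lemma log_le_two_mul_log_floor {x : ℝ} (hx : 2 ≤ x) : log x ≤ 2 * log ⌊x⌋₊ := by
  have hfloor : (2 : ℝ) ≤ ⌊x⌋₊ := mod_cast Nat.le_floor (n := 2) (mod_cast hx)
  have hlt := Nat.lt_floor_add_one x
  have hx2 : x ≤ (⌊x⌋₊ : ℝ) ^ 2 := by nlinarith
  calc log x ≤ log ((⌊x⌋₊ : ℝ) ^ 2) := log_le_log (by linarith) hx2
    _ = 2 * log ⌊x⌋₊ := log_pow _ 2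

lemma exists_fa_le : ∃ K : ℝ, 0 < K ∧ ∀ x : ℝ, 2 ≤ x → fa x ≤ K * x / log x := by
  obtain ⟨K, hK, hcard⟩ := exists_card_schinzelSet_le
  refine ⟨2 * K, by positivity, fun x hx ↦ ?_⟩
  have hx0 : 0 ≤ x := by linarith
  have hfloor : 2 ≤ ⌊x⌋₊ := Nat.le_floor (mod_cast hx)
  have hlogx : 0 < log x := log_pos (by linarith)
  have : 0 < log ⌊x⌋₊ := log_pos (mod_cast hfloor)
  calc (fa x : ℝ) ≤ #(schinzelSet ⌊x⌋₊) := mod_cast fa_le_card_schinzelSet hx0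
    _ ≤ K * ⌊x⌋₊ / log ⌊x⌋₊ := hcard _ hfloor
    _ ≤ K * x / (log x / 2) := by
      gcongr
      · exact Nat.floor_le hx0
      · linarith [log_le_two_mul_log_floor hx]
    _ = 2 * K * x / log x := by field_simp

lemma exists_eventually_le_fa :
    ∃ c : ℝ, 0 < c ∧ ∀ᶠ x : ℝ in atTop, c * x / log x ≤ fa x := by
  obtain ⟨c, hc, hchain⟩ := exists_chain_length_ge
  refine ⟨c / 2, by positivity, ?_⟩
  filter_upwards [eventually_ge_atTop 2, tendsto_nat_floor_atTop.eventually hchain]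
    with x hx ⟨l, hnodup, hmem, hl, hlength⟩
  have hx0 : 0 ≤ x := by linarith
  have hfloor : (2 : ℝ) ≤ ⌊x⌋₊ := mod_cast Nat.le_floor (n := 2) (mod_cast hx)
  have : 0 < log ⌊x⌋₊ := log_pos (by linarith)
  calc c / 2 * x / log x ≤ c * ⌊x⌋₊ / log ⌊x⌋₊ := by
        gcongr ?_ / ?_
        · nlinarith [Nat.lt_floor_add_one x]
        · exact log_le_log (by linarith) (Nat.floor_le hx0)
    _ ≤ l.length := hlength
    _ ≤ fa x := mod_cast length_le_fa hx0 hnodup hmem hl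

lemma exists_le_fa : ∃ c : ℝ, 0 < c ∧ ∀ x : ℝ, 2 ≤ x → c * x / log x ≤ fa x := by
  obtain ⟨c, hc, hlarge⟩ := exists_eventually_le_fa
  obtain ⟨y, hy⟩ := eventually_atTop.1 hlarge
  have : 0 < log 2 := log_pos one_lt_two
  have : 0 < max y 2 := lt_max_of_lt_right two_pos
  refine ⟨min c (log 2 / max y 2), lt_min hc (by positivity), fun x hx ↦ ?_⟩
  have hlogx : 0 < log x := log_pos (by linarith)
  rcases le_total y x with hyx | hxy
  · calc min c (log 2 / max y 2) * x / log x ≤ c * x / log x := by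
          gcongr
          exact min_le_left _ _
      _ ≤ fa x := hy x hyx
  · calc min c (log 2 / max y 2) * x / log x ≤ log 2 / max y 2 * max y 2 / log 2 := by
          gcongr
          · exact min_le_right _ _
          · exact hxy.trans (le_max_left _ _)
      _ = 1 := by field_simp
      _ ≤ fa x := mod_cast one_le_fa (by linarith)

end ChainLength

/-- There exist reals `c` and `K` with `K > c > 0` such that for all `x ≥ 2`,
`c·x/log x ≤ f_a(x) ≤ K·x/log x`. -/
theorem stmt_2 : ∃ c K : ℝ, 0 < c ∧ c < K ∧ ∀ x : ℝ, 2 ≤ x →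
    c * x / Real.log x ≤ (fa x : ℝ) ∧ (fa x : ℝ) ≤ K * x / Real.log x := by
  obtain ⟨c, hc, hlower⟩ := exists_le_fa
  obtain ⟨K, hK, hupper⟩ := exists_fa_le
  refine ⟨c, c + K, hc, by linarith, fun x hx ↦ ⟨hlower x hx, (hupper x hx).trans ?_⟩⟩
  have : 0 < Real.log x := Real.log_pos (by linarith)
  gcongr
  linarith
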